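/- arXiv:1505.01189 — 3 statements merged into one kernel-verified Lean document; each statement's English description precedes it below -/
import Mathlib

section
/- Let p = p(n) satisfy n·p(n) → ∞ and p(n) ≤ O(log n / n), and let G be a random G(n,p) graph. Then with high probability G contains no compatible configuration of type I or of type II (of any order 3 ≤ k ≤ log n). -/
/-!
Two facts are combined by a first moment argument over all pairs `(φ, ψ)`; write `d = n p`.

*Counting.* Listing the vertices of `ψ` one at a time, each new edge of `ψ` costs a factor `p` unless
it already lies in `φ`, where a vertex has at most two continuations. Hence the expected number of
pairs of cycles of length `k` is at most `(4 d ^ 2) ^ k` (`sum_cycles`), and the same bound holds for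
pairs of paths with common ends, whose first edges differ (`sum_paths`).

*Compatibility.* For a fixed pair it is shown that compatibility, given the edges of the
configuration, has probability at most `4 d ^ (-4 k)` (`config_le`). An automorphism of the 2-core
taking `φ i` to `ψ i` preserves degrees in the 2-core, so for every set of degrees the two vertices
have equally many neighbours with such a degree. Let `U` be the set of vertices of the configuration
and expose the graph outside `U` first. Typically it is such that very few vertices touch the
complement of its 2-core and the vertices can be classified by their degrees into 160 classes of
linear size (`HG`). Each of `φ i` and `ψ i` chooses its neighbours in the classes by independent
trials. By anticoncentration of the binomial distribution (`bp_le`, `window_le`) the numbers for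
`φ i` and `ψ i` agree up to a bounded error in all 160 classes (`Close`) only with probability at
most a large negative power of `d`. Exceptional edges (inside `U`, towards vertices near the
complement of the 2-core, or towards vertices with two neighbours in `U`) distort these numbers,
but their total number is unlikely to be large, so half of the usable indices still have to satisfy
`Close` (`exists_close`). Indices are usable simultaneously when all their `φ`- and `ψ`-values are
distinct, and there is such a set of at least `k / 9` indices (`exists_conflict_free`).

The expected number of compatible configurations in a typical graph is therefore at most
`8 (4 / d ^ 2) ^ k` for each `k` (`order_le`), and the sum over `k ≥ 3` tends to `0`. Typicality
itself (`Gd`) has failure probability tending to `0` by a Chernoff bound for the maximum degree, by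
Markov's inequality for the number of vertices of degree at most three, and by Markov's inequality
for the number of pairs of vertices of equal degree (`not_Gd_le`).
-/

open scoped Classical

/-- The number of edges of a graph on `Fin n`. -/
noncomputable def edgeCount {n : ℕ} (G : SimpleGraph (Fin n)) : ℕ := G.edgeFinset.card

/-- The probability of the graph `G` under the Erdős–Rényi `G(n,p)` distribution. -/
noncomputable def gnpWeight (n : ℕ) (p : ℝ) (G : SimpleGraph (Fin n)) : ℝ :=
  p ^ edgeCount G * (1 - p) ^ (n.choose 2 - edgeCount G)

/-- The probability of an event `A` depending on a `G(n,p)` graph together with two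
uniformly random independent maps `φ ψ : Fin k → Fin n`. -/
noncomputable def gnpCfgProb (n k : ℕ) (p : ℝ)
    (A : SimpleGraph (Fin n) → (Fin k → Fin n) → (Fin k → Fin n) → Prop) : ℝ :=
  (∑ G : SimpleGraph (Fin n), ∑ φ : Fin k → Fin n, ∑ ψ : Fin k → Fin n,
      if A G φ ψ then gnpWeight n p G else 0) / (n : ℝ) ^ (2 * k)

/-- `(φ 1, …, φ k, φ 1)` is a simple cycle of `G`: the `φ i` are distinct and consecutive
vertices (cyclically) are adjacent. -/
def IsCycleSeq {V : Type*} {k : ℕ} (G : SimpleGraph V) (φ : Fin k → V) : Prop :=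
  Function.Injective φ ∧ ∀ i : Fin k, G.Adj (φ i) (φ (finRotate k i))

/-- `(φ 1, …, φ k)` is a simple path of `G`: the `φ i` are distinct and consecutive
vertices are adjacent. -/
def IsPathSeq {V : Type*} {k : ℕ} (G : SimpleGraph V) (φ : Fin k → V) : Prop :=
  Function.Injective φ ∧
    ∀ (i : ℕ) (h : i + 1 < k), G.Adj (φ ⟨i, Nat.lt_of_succ_lt h⟩) (φ ⟨i + 1, h⟩)

/-- A type I configuration: `k ≤ log n`, no confluences (`φ i ≠ ψ i` for all `i`), and both
`(φ 1, …, φ k, φ 1)` and `(ψ 1, …, ψ k, ψ 1)` are simple cycles of `G`. -/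
def TypeI {n k : ℕ} (G : SimpleGraph (Fin n)) (φ ψ : Fin k → Fin n) : Prop :=
  (k : ℝ) ≤ Real.log n ∧ (∀ i, φ i ≠ ψ i) ∧ IsCycleSeq G φ ∧ IsCycleSeq G ψ

/-- A type II configuration: `k ≤ log n`, each of `(φ 1, …, φ k)` and `(ψ 1, …, ψ k)` is a
simple path or a simple cycle of `G`, and the first and last indices are the only
confluences. -/
def TypeII {n k : ℕ} (G : SimpleGraph (Fin n)) (φ ψ : Fin k → Fin n) : Prop :=
  (k : ℝ) ≤ Real.log n ∧ (IsPathSeq G φ ∨ IsCycleSeq G φ) ∧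
    (IsPathSeq G ψ ∨ IsCycleSeq G ψ) ∧
    ∀ i : Fin k, (φ i = ψ i ↔ ((i : ℕ) = 0 ∨ (i : ℕ) = k - 1))

/-- The probability of a set `A` of graphs under the `G(n,p)` distribution. -/
noncomputable def gnpProb (n : ℕ) (p : ℝ) (A : Set (SimpleGraph (Fin n))) : ℝ :=
  ∑ G : SimpleGraph (Fin n), if G ∈ A then gnpWeight n p G else 0

/-- The vertex set of the 2-core of `G`: the largest set of vertices inducing a
subgraph of minimum degree at least 2 (the union of all such sets). -/
def twoCore {V : Type*} (G : SimpleGraph V) : Set V :=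
  ⋃₀ {S : Set V | ∀ v ∈ S, 2 ≤ ({u ∈ S | G.Adj v u} : Set V).ncard}

/-- A configuration `(φ,ψ)` is compatible if there is an automorphism `π` of the subgraph
of `G` induced on the 2-core such that `π (φ i) = ψ i` for every `i`. -/
def Compatible {n k : ℕ} (G : SimpleGraph (Fin n)) (φ ψ : Fin k → Fin n) : Prop :=
  ∃ π : G.induce (twoCore G) ≃g G.induce (twoCore G),
    ∀ i : Fin k, ∃ h : φ i ∈ twoCore G, ((π ⟨φ i, h⟩ : twoCore G) : Fin n) = ψ i

/-! ### Product Bernoulli expectations -/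

/-- The weight of a single Bernoulli coordinate with success probability `p`. -/
noncomputable def bw (p : ℝ) (b : Bool) : ℝ := if b = true then p else 1 - p

/-- The expectation of `f` under the product Bernoulli measure on `ι → Bool`, as a finite sum. -/
noncomputable def EE {ι : Type*} [Fintype ι] [DecidableEq ι] (p : ℝ) (f : (ι → Bool) → ℝ) : ℝ :=
  ∑ ω : ι → Bool, (∏ e, bw p (ω e)) * f ω

section EE
variable {ι : Type*} [Fintype ι] [DecidableEq ι] {p : ℝ}

lemma bw_nonneg (h0 : 0 ≤ p) (h1 : p ≤ 1) (b : Bool) : 0 ≤ bw p b := by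
  unfold bw; split_ifs <;> linarith

lemma EE_mono (h0 : 0 ≤ p) (h1 : p ≤ 1) {f g : (ι → Bool) → ℝ} (h : ∀ ω, f ω ≤ g ω) :
    EE p f ≤ EE p g :=
  Finset.sum_le_sum fun ω _ =>
    mul_le_mul_of_nonneg_left (h ω) (Finset.prod_nonneg fun _ _ => bw_nonneg h0 h1 _)

lemma EE_prod (h : ι → Bool → ℝ) :
    EE p (fun ω => ∏ e, h e (ω e)) = ∏ e, (p * h e true + (1 - p) * h e false) := by
  unfold EE
  have : ∀ e, (p * h e true + (1 - p) * h e false) = ∑ b : Bool, bw p b * h e b := by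
    intro e; simp [bw]
  simp_rw [this, ← Finset.prod_mul_distrib]
  rw [Finset.prod_univ_sum, Fintype.piFinset_univ]

lemma EE_one : EE (ι := ι) p (fun _ => 1) = 1 := by
  have := EE_prod (ι := ι) (p := p) (fun _ _ => 1)
  simpa using this

lemma EE_mul_const (f : (ι → Bool) → ℝ) (c : ℝ) : EE p (fun ω => f ω * c) = EE p f * c := by
  unfold EE; rw [Finset.sum_mul]; simp_rw [mul_assoc]

lemma EE_const_mul (f : (ι → Bool) → ℝ) (c : ℝ) : EE p (fun ω => c * f ω) = c * EE p f := by
  simp_rw [mul_comm c]; exact EE_mul_const f c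

lemma EE_const (c : ℝ) : EE (ι := ι) p (fun _ => c) = c := by
  have := EE_mul_const (ι := ι) (p := p) (fun _ => 1) c
  simpa [EE_one] using this

lemma EE_add (f g : (ι → Bool) → ℝ) : EE p (fun ω => f ω + g ω) = EE p f + EE p g := by
  unfold EE; simp_rw [mul_add, Finset.sum_add_distrib]

lemma EE_sum {α : Type*} (T : Finset α) (f : α → (ι → Bool) → ℝ) :
    EE p (fun ω => ∑ a ∈ T, f a ω) = ∑ a ∈ T, EE p (f a) := by
  unfold EE; simp_rw [Finset.mul_sum]; rw [Finset.sum_comm]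

lemma EE_nonneg (h0 : 0 ≤ p) (h1 : p ≤ 1) {f : (ι → Bool) → ℝ} (h : ∀ ω, 0 ≤ f ω) :
    0 ≤ EE p f :=
  Finset.sum_nonneg fun ω _ =>
    mul_nonneg (Finset.prod_nonneg fun _ _ => bw_nonneg h0 h1 _) (h ω)

/-- Resampling the coordinates in `A` independently does not change the expectation: exchanging
the `A`-coordinates of two independent copies preserves the product weight. -/
lemma EE_resample (A : Finset ι) (f : (ι → Bool) → ℝ) :
    EE p f = EE p (fun ω => EE p (fun ω' => f (A.piecewise ω' ω))) := by
  have h1 : EE p f = ∑ q : (ι → Bool) × (ι → Bool),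
      (∏ e, bw p (q.1 e)) * (∏ e, bw p (q.2 e)) * f q.1 := by
    rw [Fintype.sum_prod_type]
    calc EE p f = EE p (fun ω => f ω * EE (ι := ι) p (fun _ => 1)) := by simp [EE_one]
      _ = _ := by
        unfold EE
        refine Finset.sum_congr rfl fun ω _ => ?_
        simp_rw [Finset.mul_sum]
        refine Finset.sum_congr rfl fun ω' _ => ?_
        ring
  have h2 : EE p (fun ω => EE p (fun ω' => f (A.piecewise ω' ω))) =
      ∑ q : (ι → Bool) × (ι → Bool),
        (∏ e, bw p (q.1 e)) * (∏ e, bw p (q.2 e)) * f (A.piecewise q.2 q.1) := by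
    rw [Fintype.sum_prod_type]
    unfold EE
    refine Finset.sum_congr rfl fun ω _ => ?_
    simp_rw [Finset.mul_sum]
    refine Finset.sum_congr rfl fun ω' _ => ?_
    ring
  rw [h1, h2]
  have hinv : ∀ q : (ι → Bool) × (ι → Bool),
      (A.piecewise (A.piecewise q.1 q.2) (A.piecewise q.2 q.1),
        A.piecewise (A.piecewise q.2 q.1) (A.piecewise q.1 q.2)) = q := by
    rintro ⟨a, b⟩
    ext e <;> by_cases he : e ∈ A <;> simp [he]
  let σ : (ι → Bool) × (ι → Bool) ≃ (ι → Bool) × (ι → Bool) :=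
    { toFun := fun q => (A.piecewise q.2 q.1, A.piecewise q.1 q.2)
      invFun := fun q => (A.piecewise q.2 q.1, A.piecewise q.1 q.2)
      left_inv := hinv
      right_inv := hinv }
  rw [← Equiv.sum_comp σ]
  refine Finset.sum_congr rfl fun q _ => ?_
  simp only [σ, Equiv.coe_fn_mk]
  congr 1
  rw [← Finset.prod_mul_distrib, ← Finset.prod_mul_distrib]
  refine Finset.prod_congr rfl fun e _ => ?_
  by_cases he : e ∈ A <;> simp [he, mul_comm]

lemma EE_le_of_resample (h0 : 0 ≤ p) (h1 : p ≤ 1) (A : Finset ι) {f : (ι → Bool) → ℝ} {c : ℝ}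
    (h : ∀ ω, EE p (fun ω' => f (A.piecewise ω' ω)) ≤ c) : EE p f ≤ c := by
  rw [EE_resample A f]
  exact (EE_mono h0 h1 h).trans_eq (EE_const c)

/-- Functions of pairwise disjoint blocks of coordinates are independent. -/
lemma EE_blocks {α : Type*} (T : Finset α) (S : α → Finset ι)
    (hS : ∀ a ∈ T, ∀ b ∈ T, a ≠ b → Disjoint (S a) (S b)) (f : α → (ι → Bool) → ℝ)
    (hf : ∀ a ∈ T, ∀ ω ω' : ι → Bool, (∀ e ∈ S a, ω e = ω' e) → f a ω = f a ω') :
    EE p (fun ω => ∏ a ∈ T, f a ω) = ∏ a ∈ T, EE p (f a) := by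
  induction T using Finset.induction_on with
  | empty => simp [EE_one]
  | insert a T ha ih =>
    rw [Finset.prod_insert ha, ← ih (fun b hb c hc => hS b (by simp [hb]) c (by simp [hc]))
      (fun b hb => hf b (by simp [hb])), EE_resample (S a)]
    have : ∀ ω ω' : ι → Bool,
        (∏ b ∈ insert a T, f b ((S a).piecewise ω' ω)) = f a ω' * ∏ b ∈ T, f b ω := by
      intro ω ω'
      rw [Finset.prod_insert ha]
      congr 1
      · exact hf a (by simp) _ _ fun e he => by simp [he]
      · refine Finset.prod_congr rfl fun b hb => hf b (by simp [hb]) _ _ fun e he => ?_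
        have hab : a ≠ b := by rintro rfl; exact ha hb
        have := Finset.disjoint_right.1 (hS a (by simp) b (by simp [hb]) hab) he
        simp [this]
    simp_rw [this, EE_mul_const, EE_const_mul]

/-- The number of successes of `ω` among the coordinates in `S`. -/
def cnt (S : Finset ι) (ω : ι → Bool) : ℕ := (S.filter (fun e => ω e = true)).card

lemma cnt_congr {S : Finset ι} {ω ω' : ι → Bool} (h : ∀ e ∈ S, ω e = ω' e) :
    cnt S ω = cnt S ω' := by
  unfold cnt; congr 1
  exact Finset.filter_congr fun e he => by rw [h e he]

lemma EE_pow_cnt (S : Finset ι) (x : ℝ) :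
    EE p (fun ω => x ^ cnt S ω) = (1 - p + p * x) ^ S.card := by
  have h := EE_prod (ι := ι) (p := p) (fun e b => if e ∈ S ∧ b = true then x else 1)
  have h1 : ∀ ω : ι → Bool, (∏ e, if e ∈ S ∧ ω e = true then x else 1) = x ^ cnt S ω := by
    intro ω
    rw [Finset.prod_ite]; simp only [Finset.prod_const, one_pow, mul_one]
    congr 1; unfold cnt; congr 1; ext e; simp
  have h' := (congrArg (EE p) (funext fun ω => (h1 ω).symm)).trans h
  rw [h']
  have h2 : ∀ e, p * (if e ∈ S ∧ true = true then x else 1) +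
      (1 - p) * (if e ∈ S ∧ false = true then x else 1) = if e ∈ S then (1 - p + p * x) else 1 := by
    intro e; (split_ifs <;> simp_all); ring
  rw [Finset.prod_congr rfl fun e _ => h2 e, Finset.prod_ite]; simp

lemma EE_pow_cnt_le (h0 : 0 ≤ p) (S : Finset ι) {x : ℝ} (hx : 0 ≤ x) (h1 : p ≤ 1) :
    EE p (fun ω => x ^ cnt S ω) ≤ Real.exp (S.card * p * x) := by
  rw [EE_pow_cnt]
  have : 1 - p + p * x ≤ Real.exp (p * x) := by
    have := Real.add_one_le_exp (p * x); linarith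
  calc _ ≤ (Real.exp (p * x)) ^ S.card :=
        pow_le_pow_left₀ (by have := mul_nonneg h0 hx; linarith) this _
    _ = _ := by rw [← Real.exp_nat_mul]; ring_nf

/-- Upper tail bound via the moment generating function. -/
lemma tail_le (h0 : 0 ≤ p) (h1 : p ≤ 1) (S : Finset ι) {x : ℝ} (hx : 1 ≤ x) (m : ℕ) :
    EE p (fun ω => if m ≤ cnt S ω then 1 else 0) ≤ Real.exp (S.card * p * x) / x ^ m := by
  have hx0 : (0 : ℝ) < x := by linarith
  rw [le_div_iff₀ (pow_pos hx0 _), ← EE_mul_const]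
  refine le_trans (EE_mono h0 h1 fun ω => ?_) (EE_pow_cnt_le h0 S hx0.le h1)
  split_ifs with h
  · rw [one_mul]; exact pow_le_pow_right₀ hx h
  · rw [zero_mul]; positivity

lemma EE_all (E : Finset ι) :
    EE p (fun ω => if ∀ e ∈ E, ω e = true then 1 else 0) = p ^ E.card := by
  have h := EE_prod (ι := ι) (p := p) (fun e b => if e ∈ E ∧ b = false then 0 else 1)
  have h1 : ∀ ω : ι → Bool, (∏ e, if e ∈ E ∧ ω e = false then (0:ℝ) else 1) =
      if ∀ e ∈ E, ω e = true then 1 else 0 := by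
    intro ω
    split_ifs with h
    · exact Finset.prod_eq_one fun e _ => by
        rw [if_neg]; rintro ⟨he, h'⟩; simp [h e he] at h'
    · push Not at h
      obtain ⟨e, he, hne⟩ := h
      exact Finset.prod_eq_zero (Finset.mem_univ e) (by simp_all)
  have h' := (congrArg (EE p) (funext fun ω => (h1 ω).symm)).trans h
  rw [h']
  have h2 : ∀ e, p * (if e ∈ E ∧ true = false then (0:ℝ) else 1) +
      (1 - p) * (if e ∈ E ∧ false = false then (0:ℝ) else 1) = if e ∈ E then p else 1 := by
    intro e; split_ifs <;> simp_all
  rw [Finset.prod_congr rfl fun e _ => h2 e, Finset.prod_ite]; simp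

/-- If all conditional expectations of `g` given the coordinates outside `A` are at most `c`, then
requiring in addition that the coordinates in a set `E` disjoint from `A` succeed costs the
full factor `p ^ |E|`. -/
lemma EE_edges (h0 : 0 ≤ p) (h1 : p ≤ 1) (E A : Finset ι) (hEA : Disjoint E A)
    {g : (ι → Bool) → Prop} [DecidablePred g] {c : ℝ}
    (h : ∀ ω, EE p (fun ω' => if g (A.piecewise ω' ω) then 1 else 0) ≤ c) :
    EE p (fun ω => if (∀ e ∈ E, ω e = true) ∧ g ω then 1 else 0) ≤ p ^ E.card * c := by
  rw [EE_resample A, ← EE_all E, ← EE_mul_const]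
  refine EE_mono h0 h1 fun ω => ?_
  have hE : ∀ ω' : ι → Bool, (∀ e ∈ E, A.piecewise ω' ω e = true) ↔ ∀ e ∈ E, ω e = true := by
    intro ω'
    refine forall₂_congr fun e he => ?_
    rw [Finset.piecewise_eq_of_notMem _ _ _ (Finset.disjoint_left.1 hEA he)]
  simp_rw [hE]
  by_cases hω : ∀ e ∈ E, ω e = true
  · have := h ω
    rw [if_pos hω, one_mul]; refine le_trans (le_of_eq ?_) this; congr 1; ext ω'; congr 1; simp only [eq_iff_iff]; exact and_iff_right hω
  · simp [hω, EE_const]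
end EE

/-! ### Anticoncentration of binomial variables -/

/-- The binomial probability `P(Bin(m,p) = x)`. -/
noncomputable def bp (p : ℝ) (m x : ℕ) : ℝ := (m.choose x) * p ^ x * (1 - p) ^ (m - x)

section binom
variable {p : ℝ}

lemma bp_nonneg (h0 : 0 ≤ p) (h1 : p ≤ 1) (m x : ℕ) : 0 ≤ bp p m x := by
  unfold bp
  have : 0 ≤ 1 - p := by linarith
  positivity

lemma bp_zero_right (m : ℕ) : bp p (m + 1) 0 = (1 - p) * bp p m 0 := by
  simp [bp, pow_succ, mul_comm]

lemma bp_succ_succ (m x : ℕ) :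
    bp p (m + 1) (x + 1) = p * bp p m x + (1 - p) * bp p m (x + 1) := by
  unfold bp
  rw [Nat.choose_succ_succ, Nat.add_sub_add_right]
  rcases Nat.lt_or_ge x m with h | h
  · obtain ⟨c, rfl⟩ : ∃ c, m = x + 1 + c := ⟨m - (x + 1), by omega⟩
    rw [show x + 1 + c - x = c + 1 by omega, show x + 1 + c - (x + 1) = c by omega]
    push_cast; ring
  · rw [Nat.choose_eq_zero_of_lt (show m < x + 1 by omega)]
    push_cast; ring

lemma sum_bp_le_one (h0 : 0 ≤ p) (h1 : p ≤ 1) (m N : ℕ) : ∑ x ∈ Finset.range N, bp p m x ≤ 1 := by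
  have h : ∑ x ∈ Finset.range (m + 1), bp p m x = 1 := by
    have := add_pow p (1 - p) m
    rw [add_sub_cancel, one_pow] at this
    rw [this]
    exact Finset.sum_congr rfl fun x _ => by unfold bp; ring
  rw [← h]
  calc _ ≤ ∑ x ∈ Finset.range (N + (m + 1)), bp p m x :=
        Finset.sum_le_sum_of_subset_of_nonneg
          (Finset.range_subset_range.2 (by omega)) fun _ _ _ => bp_nonneg h0 h1 _ _
    _ = _ := by
        symm
        refine Finset.sum_subset (Finset.range_subset_range.2 (by omega)) fun x _ hx => ?_
        have : m < x := by rw [Finset.mem_range] at hx; omega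
        simp [bp, Nat.choose_eq_zero_of_lt this]

lemma bp_ratio (m x : ℕ) :
    bp p m (x + 1) * ((x + 1) * (1 - p)) = bp p m x * (((m - x : ℕ) : ℝ) * p) := by
  unfold bp
  have h := Nat.choose_succ_right_eq m x
  have h' : (m.choose (x + 1) : ℝ) * (x + 1) = m.choose x * ((m - x : ℕ) : ℝ) := by
    exact_mod_cast h
  rcases Nat.lt_or_ge x m with hx | hx
  · have : m - x = (m - (x + 1)) + 1 := by omega
    calc _ = (m.choose (x + 1) : ℝ) * (x + 1) * (p ^ (x + 1) * (1 - p) ^ (m - (x + 1)) * (1 - p)) := by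
          ring
      _ = _ := by rw [h', show (1 - p) ^ (m - x) = (1 - p) ^ (m - (x + 1)) * (1 - p) by
                    rw [this, pow_succ]]; ring
  · simp [Nat.choose_eq_zero_of_lt (show m < x + 1 by omega), Nat.sub_eq_zero_of_le hx]

/-- All binomial probabilities are `O(1/√(mp))`: the maximum is attained near `(m+1)p`, and over
the next `√(mp)/2` values the probabilities drop by at most a factor two. -/
lemma bp_le (h0 : 0 < p) (h1 : p ≤ 1 / 2) (m : ℕ) (hm : 1 ≤ m) (x : ℕ) :
    bp p m x ≤ 8 / √(m * p) := by
  have hm' : (1 : ℝ) ≤ m := by exact_mod_cast hm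
  have hmp : 0 < m * p := by positivity
  have hs : 0 < √(m * p) := Real.sqrt_pos.2 hmp
  have hsq : √(m * p) ^ 2 = m * p := Real.sq_sqrt hmp.le
  have hnn := fun x => bp_nonneg h0.le (by linarith : p ≤ 1) m x
  have hle1 : ∀ x, bp p m x ≤ 1 := fun x =>
    le_trans (Finset.single_le_sum (f := fun x => bp p m x) (fun i _ => hnn i)
      (Finset.self_mem_range_succ x)) (sum_bp_le_one h0.le (by linarith) m (x + 1))
  rcases lt_or_ge (√(m * p)) 4 with hlt | hge
  · refine (hle1 x).trans ?_
    rw [le_div_iff₀ hs]; linarith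
  obtain ⟨x0, -, hx0⟩ := Finset.exists_max_image (Finset.range (m + 1)) (fun x => bp p m x)
    ⟨0, by simp⟩
  have hpos0 : 0 < bp p m 0 := by
    unfold bp
    have : 0 < 1 - p := by linarith
    simp; positivity
  have hmax : ∀ y, bp p m y ≤ bp p m x0 := by
    intro y
    by_cases hy : y ∈ Finset.range (m + 1)
    · exact hx0 y hy
    · have : m < y := by rw [Finset.mem_range] at hy; omega
      simpa [bp, Nat.choose_eq_zero_of_lt this] using hnn x0
  set b0 := bp p m x0 with hb0
  have hb0pos : 0 < b0 := lt_of_lt_of_le hpos0 (hmax 0)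
  have hratio : ∀ y : ℕ, bp p m y * ((m - y) * p) ≤ bp p m (y + 1) * ((y + 1) * (1 - p)) := by
    intro y
    rw [bp_ratio]
    have : (m : ℝ) - y ≤ ((m - y : ℕ) : ℝ) := by
      rw [sub_le_iff_le_add]; exact_mod_cast (by omega : m ≤ (m - y) + y)
    exact mul_le_mul_of_nonneg_left (mul_le_mul_of_nonneg_right this h0.le) (hnn y)
  -- maximality at `x0` locates `x0` between `(m+1)p - 1` and `(m+1)p`
  have hlow : (m + 1) * p ≤ x0 + 1 := by
    have h2 : b0 * ((m - x0) * p) ≤ b0 * ((x0 + 1) * (1 - p)) :=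
      (hratio x0).trans (mul_le_mul_of_nonneg_right (hmax _) (by
        have : 0 ≤ 1 - p := by linarith
        positivity))
    have := le_of_mul_le_mul_left h2 hb0pos
    linarith
  have hup : (x0 : ℝ) ≤ (m + 1) * p := by
    rcases Nat.eq_zero_or_pos x0 with h | h
    · rw [h]; push_cast; positivity
    · obtain ⟨y, hy⟩ : ∃ y, x0 = y + 1 := ⟨x0 - 1, by omega⟩
      have hym : y ≤ m := by
        by_contra hc
        rw [hb0, hy] at hb0pos
        simp [bp, Nat.choose_eq_zero_of_lt (show m < y + 1 by omega)] at hb0pos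
      have h3 := bp_ratio (p := p) m y
      rw [← hy, ← hb0] at h3
      have h4 : b0 * ((y + 1) * (1 - p)) ≤ b0 * (((m - y : ℕ) : ℝ) * p) := by
        rw [h3]; exact mul_le_mul_of_nonneg_right (hmax _) (by positivity)
      have := le_of_mul_le_mul_left h4 hb0pos
      rw [Nat.cast_sub hym] at this
      rw [hy]; push_cast; linarith
  set J := ⌊√(m * p) / 2⌋₊ with hJ
  have hJle : (J : ℝ) ≤ √(m * p) / 2 := Nat.floor_le (by positivity)
  have hJge : √(m * p) / 4 ≤ J := by
    have := Nat.lt_floor_add_one (√(m * p) / 2)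
    rw [← hJ] at this; linarith
  have hJsq : 4 * (J : ℝ) ^ 2 ≤ m * p := by
    have := pow_le_pow_left₀ (Nat.cast_nonneg J) hJle 2
    rw [div_pow, hsq] at this; linarith
  have hstep : ∀ j : ℕ, j ≤ J → b0 - j * (2 * J / (m * p)) * b0 ≤ bp p m (x0 + j) := by
    intro j
    induction j with
    | zero => intro _; simp [hb0]
    | succ j ih =>
      intro hj
      have ih := ih (by omega)
      have hjJ : (j : ℝ) + 1 ≤ J := by exact_mod_cast hj
      have hr := hratio (x0 + j)
      set a := bp p m (x0 + j)
      set a' := bp p m (x0 + (j + 1))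
      have hr' : a * ((m - (x0 + j)) * p) ≤ a' * ((x0 + j + 1) * (1 - p)) := by
        have := hr; push_cast at this; exact this
      set η := 2 * (J : ℝ) / (m * p) with hη
      have hη0 : 0 ≤ η := by positivity
      have hηm : η * (m * p) = 2 * J := by rw [hη]; field_simp
      set X : ℝ := (x0 : ℝ) + j + 1 with hX
      have hXlow : m * p ≤ X := by
        have : (0 : ℝ) ≤ j := Nat.cast_nonneg j
        nlinarith
      have hXup : X ≤ (m + 1) * p + J := by linarith
      have hXpos : 0 < X * (1 - p) := mul_pos (by linarith) (by linarith)
      have hkey : (1 - η) * (X * (1 - p)) ≤ (m - (x0 + j)) * p := by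
        have h5 : J ≤ η * (X * (1 - p)) := by
          have h6 : η * (m * p) ≤ η * X := mul_le_mul_of_nonneg_left hXlow hη0
          have h7 : 0 ≤ η * X := by positivity
          nlinarith
        have : X * (1 - p) - (m - (x0 + j)) * p = X - (m + 1) * p := by rw [hX]; ring
        nlinarith
      have ha : (1 - η) * a ≤ a' := by
        have ha0 : 0 ≤ a := hnn _
        have : ((1 - η) * a) * (X * (1 - p)) ≤ a' * (X * (1 - p)) := by
          calc _ = a * ((1 - η) * (X * (1 - p))) := by ring
            _ ≤ a * ((m - (x0 + j)) * p) := mul_le_mul_of_nonneg_left hkey ha0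
            _ ≤ _ := hr'
        exact le_of_mul_le_mul_right this hXpos
      have hamax : η * a ≤ η * b0 := mul_le_mul_of_nonneg_left (hmax _) hη0
      push_cast
      linarith
  have hhalf : ∀ j ∈ Finset.range J, b0 / 2 ≤ bp p m (x0 + j) := by
    intro j hj
    have hj' : j < J := by simpa using hj
    refine le_trans ?_ (hstep j hj'.le)
    have h8 : (j : ℝ) * (2 * J / (m * p)) ≤ 1 / 2 := by
      rw [← mul_div_assoc, div_le_iff₀ hmp]
      have h9 : (j : ℝ) ≤ J := by exact_mod_cast hj'.le
      have h10 : (j : ℝ) * J ≤ J * J := mul_le_mul_of_nonneg_right h9 (Nat.cast_nonneg J)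
      linarith
    have h11 := mul_le_mul_of_nonneg_right h8 hb0pos.le
    linarith
  have hsum : J * (b0 / 2) ≤ 1 := by
    calc J * (b0 / 2) = ∑ _j ∈ Finset.range J, b0 / 2 := by simp
      _ ≤ ∑ j ∈ Finset.range J, bp p m (x0 + j) := Finset.sum_le_sum hhalf
      _ ≤ ∑ y ∈ Finset.range (x0 + J), bp p m y := by
          rw [Finset.sum_range_add]
          have : 0 ≤ ∑ y ∈ Finset.range x0, bp p m y := Finset.sum_nonneg fun y _ => hnn y
          linarith
      _ ≤ 1 := sum_bp_le_one h0.le (by linarith) _ _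
  refine (hmax x).trans ?_
  rw [le_div_iff₀ hs]
  have h12 := mul_le_mul_of_nonneg_right hJge hb0pos.le
  linarith

end binom

section window
variable {ι : Type*} [Fintype ι] [DecidableEq ι] {p : ℝ}

lemma EE_single (e : ι) (g : Bool → ℝ) :
    EE p (fun ω => g (ω e)) = p * g true + (1 - p) * g false := by
  have h := EE_prod (ι := ι) (p := p) (fun i b => if i = e then g b else 1)
  have h1 : ∀ ω : ι → Bool, (∏ i, if i = e then g (ω i) else 1) = g (ω e) := by
    intro ω; simp
  have h' := (congrArg (EE p) (funext fun ω => (h1 ω).symm)).trans h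
  rw [h', Finset.prod_eq_single e]
  · simp
  · intro b _ hb; simp [hb]
  · simp

lemma EE_cnt_eq (S : Finset ι) (x : ℕ) :
    EE p (fun ω => if cnt S ω = x then 1 else 0) = bp p S.card x := by
  induction S using Finset.induction_on generalizing x with
  | empty => cases x <;> simp [cnt, bp, EE_const]
  | insert e S he ih =>
    have key : ∀ ω ω' : ι → Bool, cnt (insert e S) (({e} : Finset ι).piecewise ω' ω) =
        cnt S ω + if ω' e = true then 1 else 0 := by
      intro ω ω'
      have hS : cnt S (({e} : Finset ι).piecewise ω' ω) = cnt S ω :=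
        cnt_congr fun i hi => by
          have : i ≠ e := by rintro rfl; exact he hi
          simp [this]
      rw [← hS]
      unfold cnt
      rw [Finset.filter_insert]
      by_cases h : ω' e = true
      · rw [if_pos (by simp [h]), Finset.card_insert_of_notMem (by simp [he]), if_pos h]
      · rw [if_neg (by simp [h]), if_neg h, add_zero]
    rw [EE_resample {e}]
    simp_rw [key]
    have h2 : ∀ ω : ι → Bool, EE p (fun ω' : ι → Bool =>
        if cnt S ω + (if ω' e = true then 1 else 0) = x then (1:ℝ) else 0) =
        (if cnt S ω + 1 = x then 1 else 0) * p + (if cnt S ω = x then 1 else 0) * (1 - p) := by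
      intro ω
      have := EE_single (p := p) e
        (fun b => if cnt S ω + (if b = true then 1 else 0) = x then (1:ℝ) else 0)
      rw [this]; simp [mul_comm]
    simp_rw [h2]
    rw [EE_add, EE_mul_const, EE_mul_const, ih, Finset.card_insert_of_notMem he]
    cases x with
    | zero => simp [EE_const, bp_zero_right, mul_comm]
    | succ x =>
      simp only [add_left_inj]
      rw [ih, bp_succ_succ]; ring

/-- The number of successes in a block is unlikely to fall into a given window. -/
lemma window_le (h0 : 0 < p) (h1 : p ≤ 1 / 2) (S : Finset ι) {μ : ℝ} (hμ : 0 < μ)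
    (hS : μ ≤ S.card * p) (a D : ℕ) :
    EE p (fun ω => if cnt S ω ≤ a + D ∧ a ≤ cnt S ω + D then 1 else 0) ≤
      (2 * D + 1) * (8 / √μ) := by
  have hc : 1 ≤ S.card := by
    by_contra h
    have : S.card = 0 := by omega
    rw [this] at hS; simp at hS; linarith
  calc _ ≤ EE p (fun ω => ∑ x ∈ Finset.Icc (a - D) (a + D), if cnt S ω = x then (1:ℝ) else 0) := by
        refine EE_mono h0.le (by linarith) fun ω => ?_
        simp only [Finset.sum_ite_eq, Finset.mem_Icc]
        split_ifs with h2 h3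
        · exact le_rfl
        · exact absurd ⟨by omega, by omega⟩ h3
        · exact zero_le_one
        · exact le_rfl
    _ = ∑ x ∈ Finset.Icc (a - D) (a + D), bp p S.card x := by
        rw [EE_sum]; exact Finset.sum_congr rfl fun x _ => EE_cnt_eq S x
    _ ≤ ∑ x ∈ Finset.Icc (a - D) (a + D), 8 / √μ := by
        refine Finset.sum_le_sum fun x _ => (bp_le h0 h1 _ hc x).trans ?_
        exact div_le_div_of_nonneg_left (by norm_num) (Real.sqrt_pos.2 hμ) (Real.sqrt_le_sqrt hS)
    _ ≤ _ := by
        rw [Finset.sum_const, nsmul_eq_mul]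
        refine mul_le_mul_of_nonneg_right ?_ (by positivity)
        have : (Finset.Icc (a - D) (a + D)).card ≤ 2 * D + 1 := by rw [Nat.card_Icc]; omega
        exact_mod_cast this

end window

/-! ### The random graph as a product measure -/

/-- The graph on `Fin n` whose edges are the successful coordinates of `ω`; coordinates on the
diagonal of `Sym2 (Fin n)` are ignored. -/
def gr {n : ℕ} (ω : Sym2 (Fin n) → Bool) : SimpleGraph (Fin n) where
  Adj x y := x ≠ y ∧ ω s(x, y) = true
  symm := ⟨fun x y h => ⟨h.1.symm, by rw [Sym2.eq_swap]; exact h.2⟩⟩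
  loopless := ⟨fun x h => h.1 rfl⟩

lemma gr_eq_iff {n : ℕ} (ω : Sym2 (Fin n) → Bool) (G : SimpleGraph (Fin n)) :
    gr ω = G ↔ ∀ e : Sym2 (Fin n), e.IsDiag ∨ (ω e = true ↔ e ∈ G.edgeSet) := by
  constructor
  · rintro rfl e
    induction e with
    | _ x y =>
      by_cases h : x = y
      · left; simpa using h
      · right; simp [gr, h]
  · intro h
    ext x y
    by_cases hxy : x = y
    · subst hxy; simp
    · rcases h s(x, y) with h | h
      · exact absurd (by simpa using h) hxy
      · simpa [gr, hxy] using h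

lemma EE_gr_eq {n : ℕ} (p : ℝ) (G : SimpleGraph (Fin n)) :
    EE p (fun ω => if gr ω = G then 1 else 0) = gnpWeight n p G := by
  have h := EE_prod (ι := Sym2 (Fin n)) (p := p)
    (fun e b => if e.IsDiag ∨ (b = true ↔ e ∈ G.edgeSet) then 1 else 0)
  have h1 : ∀ ω : Sym2 (Fin n) → Bool,
      (∏ e : Sym2 (Fin n), if e.IsDiag ∨ (ω e = true ↔ e ∈ G.edgeSet) then (1:ℝ) else 0) =
      if gr ω = G then 1 else 0 := by
    intro ω
    rw [Fintype.prod_boole]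
    exact if_congr (gr_eq_iff ω G).symm rfl rfl
  have h' := (congrArg (EE p) (funext fun ω => (h1 ω).symm)).trans h
  rw [h']
  have h2 : ∀ e : Sym2 (Fin n), (p * (if e.IsDiag ∨ (true = true ↔ e ∈ G.edgeSet) then (1:ℝ) else 0) +
      (1 - p) * (if e.IsDiag ∨ (false = true ↔ e ∈ G.edgeSet) then 1 else 0)) =
      (if e ∈ G.edgeFinset then p else 1) *
        (if e ∈ (Finset.univ.filter (fun e : Sym2 (Fin n) => ¬ e.IsDiag)) \ G.edgeFinset
          then 1 - p else 1) := by
    intro e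
    by_cases hd : e.IsDiag
    · have : e ∉ G.edgeSet := fun he => G.not_isDiag_of_mem_edgeSet he hd
      simp [hd, this]
    · by_cases he : e ∈ G.edgeSet <;> simp [hd, he]
  rw [Finset.prod_congr rfl fun e _ => h2 e, Finset.prod_mul_distrib, Finset.prod_ite_mem,
    Finset.prod_ite_mem]
  simp only [Finset.univ_inter, Finset.prod_const]
  unfold gnpWeight edgeCount
  congr 2
  rw [Finset.card_sdiff_of_subset]
  · congr 1
    have := Sym2.card_subtype_not_diag (α := Fin n)
    rw [Fintype.card_subtype, Fintype.card_fin] at this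
    exact this
  · intro e he
    simp only [Finset.mem_filter, Finset.mem_univ, true_and]
    exact G.not_isDiag_of_mem_edgeSet (by simpa using he)

lemma gnpProb_eq {n : ℕ} (p : ℝ) (A : Set (SimpleGraph (Fin n))) :
    gnpProb n p A = EE p (fun ω => if gr ω ∈ A then 1 else 0) := by
  have h1 : ∀ ω : Sym2 (Fin n) → Bool, (if gr ω ∈ A then (1:ℝ) else 0) =
      ∑ G : SimpleGraph (Fin n), (if gr ω = G then 1 else 0) * (if G ∈ A then 1 else 0) := by
    intro ω
    rw [Finset.sum_eq_single (gr ω) (fun G _ hG => by simp [Ne.symm hG]) (by simp)]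
    simp
  simp_rw [h1]
  rw [EE_sum]
  simp_rw [EE_mul_const, EE_gr_eq]
  unfold gnpProb
  exact Finset.sum_congr rfl fun G _ => by split_ifs <;> simp

/-! ### The 2-core after deleting a small vertex set -/

section core
variable {n : ℕ}

/-- The degree of `x` in `G`. -/
noncomputable def dg (G : SimpleGraph (Fin n)) (x : Fin n) : ℕ :=
  (Finset.univ.filter (fun y => G.Adj x y)).card

/-- The graph obtained from `G` by removing all edges meeting `U`. -/
def del (G : SimpleGraph (Fin n)) (U : Finset (Fin n)) : SimpleGraph (Fin n) where
  Adj x y := G.Adj x y ∧ x ∉ U ∧ y ∉ U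
  symm := ⟨fun _ _ h => ⟨h.1.symm, h.2.2, h.2.1⟩⟩
  loopless := ⟨fun _ h => h.1.ne rfl⟩

lemma twoCore_max {G : SimpleGraph (Fin n)} {S : Set (Fin n)}
    (hS : ∀ v ∈ S, 2 ≤ ({u ∈ S | G.Adj v u} : Set (Fin n)).ncard) : S ⊆ twoCore G :=
  Set.subset_sUnion_of_mem hS

lemma twoCore_spec (G : SimpleGraph (Fin n)) :
    ∀ v ∈ twoCore G, 2 ≤ ({u ∈ twoCore G | G.Adj v u} : Set (Fin n)).ncard := by
  rintro v ⟨S, hS, hv⟩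
  exact (hS v hv).trans (Set.ncard_le_ncard (fun u hu => ⟨twoCore_max hS hu.1, hu.2⟩)
    (Set.toFinite _))

lemma twoCore_mono {H G : SimpleGraph (Fin n)} (h : H ≤ G) : twoCore H ⊆ twoCore G :=
  twoCore_max fun v hv => (twoCore_spec H v hv).trans
    (Set.ncard_le_ncard (fun _ hu => ⟨hu.1, h hu.2⟩) (Set.toFinite _))

/-- The number of ordered adjacent pairs inside `T`. -/
noncomputable def e2 (H : SimpleGraph (Fin n)) (T : Finset (Fin n)) : ℕ :=
  ∑ x ∈ T, ∑ y ∈ T, if H.Adj x y then 1 else 0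

lemma e2_insert (H : SimpleGraph (Fin n)) (T : Finset (Fin n)) (v : Fin n) (hv : v ∉ T) :
    e2 H (insert v T) = e2 H T + 2 * (T.filter (fun y => H.Adj v y)).card := by
  unfold e2
  rw [Finset.sum_insert hv, Finset.sum_insert hv]
  have h1 : ∀ x ∈ T, (∑ y ∈ insert v T, if H.Adj x y then 1 else 0) =
      (if H.Adj v x then 1 else 0) + ∑ y ∈ T, if H.Adj x y then 1 else 0 := by
    intro x _
    rw [Finset.sum_insert hv]; simp [H.adj_comm x v]
  rw [Finset.sum_congr rfl h1, Finset.sum_add_distrib, Finset.card_filter]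
  simp only [SimpleGraph.irrefl, if_false]
  ring

/-- Peeling off the vertices outside the 2-core one at a time, each step loses at most one edge. -/
lemma e2_le (H : SimpleGraph (Fin n)) (R : Finset (Fin n)) (hR : (R : Set (Fin n)) = twoCore H)
    (m : ℕ) : ∀ T : Finset (Fin n), R ⊆ T → T.card = m + R.card → e2 H T ≤ e2 H R + 2 * m := by
  induction m with
  | zero =>
    intro T hRT hc
    rw [Finset.eq_of_subset_of_card_le hRT (by omega)]; omega
  | succ m ih =>
    intro T hRT hc
    have hex : ∃ v ∈ T, (T.filter (fun y => H.Adj v y)).card ≤ 1 := by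
      by_contra! hcon
      have : (T : Set (Fin n)) ⊆ twoCore H := twoCore_max fun v hv => by
        have h := hcon v hv
        rw [← Set.ncard_coe_finset, Finset.coe_filter] at h
        exact h
      rw [← hR, Finset.coe_subset] at this
      have := Finset.card_le_card this
      omega
    obtain ⟨v, hvT, hv⟩ := hex
    have hvR : v ∉ R := by
      intro hvR
      have h := twoCore_spec H v (by rw [← hR]; exact hvR)
      rw [← hR] at h
      have h2 : ({u ∈ (R : Set (Fin n)) | H.Adj v u} : Set (Fin n)) ⊆
          (T.filter (fun y => H.Adj v y) : Finset (Fin n)) := fun u hu => by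
        have h3 : u ∈ T := hRT hu.1
        simpa using ⟨h3, hu.2⟩
      have h3 := Set.ncard_le_ncard h2 (Set.toFinite _)
      rw [Set.ncard_coe_finset] at h3
      omega
    have hce := Finset.card_erase_of_mem hvT
    have h1 := ih (T.erase v) (fun x hx => Finset.mem_erase.2
      ⟨fun h => hvR (h ▸ hx), hRT hx⟩) (by omega)
    have h2 := e2_insert H (T.erase v) v (Finset.notMem_erase v T)
    rw [Finset.insert_erase hvT] at h2
    have h3 : ((T.erase v).filter (fun y => H.Adj v y)).card ≤ 1 :=
      (Finset.card_le_card (Finset.filter_subset_filter _ (Finset.erase_subset v T))).trans hv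
    omega

/-- The set of vertices outside the 2-core. -/
noncomputable def outs (H : SimpleGraph (Fin n)) : Finset (Fin n) :=
  Finset.univ.filter (fun x => x ∉ twoCore H)

/-- The vertices that lie outside the 2-core or have a neighbour outside it. -/
noncomputable def bad (H : SimpleGraph (Fin n)) : Finset (Fin n) :=
  Finset.univ.filter (fun x => x ∉ twoCore H ∨ ∃ y, H.Adj x y ∧ y ∉ twoCore H)

/-- Few edges touch the complement of the 2-core. -/
lemma sum_dg_outs (H : SimpleGraph (Fin n)) : ∑ x ∈ outs H, dg H x ≤ 2 * (outs H).card := by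
  set R : Finset (Fin n) := Finset.univ.filter (fun x => x ∈ twoCore H) with hRdef
  have hR : (R : Set (Fin n)) = twoCore H := by ext x; simp [hRdef]
  have hcard : R.card + (outs H).card = (Finset.univ : Finset (Fin n)).card :=
    Finset.card_filter_add_card_filter_not _
  have h1 := e2_le H R hR (outs H).card Finset.univ (Finset.subset_univ _) (by omega)
  have h2 : e2 H Finset.univ = ∑ x, dg H x := by
    unfold e2 dg; simp_rw [Finset.card_filter]
  have h3 : ∑ x ∈ R, dg H x + ∑ x ∈ outs H, dg H x = ∑ x, dg H x :=
    Finset.sum_filter_add_sum_filter_not _ _ _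
  have h4 : e2 H R ≤ ∑ x ∈ R, dg H x := by
    unfold e2 dg
    refine Finset.sum_le_sum fun x _ => ?_
    rw [← Finset.card_filter]
    exact Finset.card_le_card (Finset.filter_subset_filter _ (Finset.subset_univ _))
  omega

lemma card_bad_le (H : SimpleGraph (Fin n)) :
    (bad H).card ≤ 6 * (Finset.univ.filter (fun x => dg H x ≤ 3)).card := by
  have h1 := sum_dg_outs H
  have h2 : (bad H).card ≤ (outs H).card + ∑ x ∈ outs H, dg H x := by
    have : bad H ⊆ outs H ∪ (outs H).biUnion (fun y => Finset.univ.filter (fun x => H.Adj y x)) := by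
      intro x hx
      simp only [bad, Finset.mem_filter, Finset.mem_univ, true_and] at hx
      rcases hx with hx | ⟨y, hy, hyc⟩
      · exact Finset.mem_union_left _ (by simpa [outs] using hx)
      · refine Finset.mem_union_right _ (Finset.mem_biUnion.2 ⟨y, by simpa [outs] using hyc, ?_⟩)
        simpa using hy.symm
    exact (Finset.card_le_card this).trans ((Finset.card_union_le _ _).trans
      (Nat.add_le_add_left Finset.card_biUnion_le _))
  have h3 : 4 * (outs H).card ≤ ∑ x ∈ outs H, dg H x +
      4 * (Finset.univ.filter (fun x => dg H x ≤ 3)).card := by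
    calc 4 * (outs H).card = ∑ x ∈ outs H, 4 := by simp [mul_comm]
      _ ≤ ∑ x ∈ outs H, (dg H x + 4 * if dg H x ≤ 3 then 1 else 0) :=
          Finset.sum_le_sum fun x _ => by split_ifs <;> omega
      _ ≤ _ := by
          rw [Finset.sum_add_distrib, ← Finset.mul_sum, ← Finset.card_filter]
          exact Nat.add_le_add_left (Nat.mul_le_mul_left _ (Finset.card_le_card
            (Finset.filter_subset_filter _ (Finset.subset_univ _)))) _
  omega

/-- A finite set on which every fibre of `f` is small can be split, along the values of `f`, into
`M` large classes. -/
lemma exists_colouring {α : Type*} (f : α → ℕ) {a b : ℝ} (ha : 0 ≤ a) (hb : 0 ≤ b)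
    (M : ℕ) : ∀ W : Finset α, (∀ x, ((W.filter (fun w => f w = x)).card : ℝ) ≤ b) →
      M * (a + b) ≤ W.card → ∃ χ : ℕ → ℕ, ∀ t < M, a ≤ (W.filter (fun w => χ (f w) = t)).card := by
  induction M with
  | zero => intro W _ _; exact ⟨fun _ => 0, fun t ht => by omega⟩
  | succ M ih =>
    intro W hfib hW
    push_cast at hW
    have hMab : 0 ≤ (M : ℝ) * (a + b) := by positivity
    have hex : ∃ x, a ≤ (W.filter (fun w => f w ≤ x)).card := by
      refine ⟨W.sup f, ?_⟩
      rw [Finset.filter_true_of_mem fun w hw => Finset.le_sup hw]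
      linarith
    set x := Nat.find hex with hx
    have hxa : a ≤ (W.filter (fun w => f w ≤ x)).card := Nat.find_spec hex
    have hxb : ((W.filter (fun w => f w ≤ x)).card : ℝ) ≤ a + b := by
      have h1 := hfib x
      rcases Nat.eq_zero_or_pos x with h0 | hpos
      · have : W.filter (fun w => f w ≤ x) = W.filter (fun w => f w = x) :=
          Finset.filter_congr fun w _ => by omega
        rw [this]; linarith
      · have h2 := Nat.find_min hex (m := x - 1) (by omega)
        have : W.filter (fun w => f w ≤ x) ⊆
            W.filter (fun w => f w ≤ x - 1) ∪ W.filter (fun w => f w = x) := by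
          intro w hw
          simp only [Finset.mem_union, Finset.mem_filter] at hw ⊢
          rcases Nat.lt_or_ge (x - 1) (f w) with h | h
          · right; exact ⟨hw.1, by omega⟩
          · left; exact ⟨hw.1, h⟩
        have h3 := (Finset.card_le_card this).trans (Finset.card_union_le _ _)
        have h4 : ((W.filter (fun w => f w ≤ x)).card : ℝ) ≤
          (W.filter (fun w => f w ≤ x - 1)).card + (W.filter (fun w => f w = x)).card := by
          exact_mod_cast h3
        linarith [not_le.1 h2]
    have hsplit : (W.filter (fun w => f w ≤ x)).card + (W.filter (fun w => ¬ f w ≤ x)).card =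
      W.card := Finset.card_filter_add_card_filter_not _
    have hsplit' : ((W.filter (fun w => f w ≤ x)).card : ℝ) +
      (W.filter (fun w => ¬ f w ≤ x)).card = W.card := by exact_mod_cast hsplit
    obtain ⟨χ, hχ⟩ := ih (W.filter (fun w => ¬ f w ≤ x)) (fun y => by
        refine le_trans ?_ (hfib y)
        exact_mod_cast Finset.card_le_card
          (Finset.filter_subset_filter _ (Finset.filter_subset _ _))) (by linarith)
    refine ⟨fun y => if y ≤ x then M else χ y, fun t ht => ?_⟩
    rcases Nat.lt_succ_iff_lt_or_eq.1 ht with h | rfl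
    · refine (hχ t h).trans ?_
      have : (W.filter (fun w => ¬ f w ≤ x)).filter (fun w => χ (f w) = t) ⊆
          W.filter (fun w => (if f w ≤ x then M else χ (f w)) = t) := by
        intro w hw
        simp only [Finset.mem_filter] at hw ⊢
        exact ⟨hw.1.1, by rw [if_neg hw.1.2]; exact hw.2⟩
      exact_mod_cast Finset.card_le_card this
    · refine hxa.trans ?_
      have : W.filter (fun w => f w ≤ x) ⊆
          W.filter (fun w => (if f w ≤ x then t else χ (f w)) = t) := by
        intro w hw
        simp only [Finset.mem_filter] at hw ⊢
        exact ⟨hw.1, by rw [if_pos hw.2]⟩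
      exact_mod_cast Finset.card_le_card this

/-- Typical behaviour of the graph outside a small vertex set `U`: few bad vertices, and the
vertices outside `U` can be classified by their degrees into 160 classes of linear size. -/
def HG (d : ℝ) (H : SimpleGraph (Fin n)) (U : Finset (Fin n)) : Prop :=
  ((bad H).card : ℝ) ≤ n / d ^ 2 ∧ ∃ χ : ℕ → ℕ, ∀ t < 160,
    (n : ℝ) / 640 ≤ ((Finset.univ \ U).filter (fun w => χ (dg H w) = t)).card

/-- Typical behaviour of the whole graph: no vertex of large degree, few vertices of degree at
most three, and no degree value taken by a large proportion of the vertices. -/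
def Gd (d : ℝ) (G : SimpleGraph (Fin n)) : Prop :=
  (∀ v, (dg G v : ℝ) ≤ √n) ∧
  ((Finset.univ.filter (fun v => dg G v ≤ 3)).card : ℝ) ≤ n / (12 * d ^ 2) ∧
  ∀ x, ((Finset.univ.filter (fun v => dg G v = x)).card : ℝ) ≤ n / 1280

/-- Deleting a small set from a typical graph leaves typical behaviour. -/
lemma Gd.HG {d : ℝ} (hd : 0 < d) {G : SimpleGraph (Fin n)} (hG : Gd d G) (U : Finset (Fin n))
    (h1 : (U.card : ℝ) * (1 + √n) ≤ n / (12 * d ^ 2)) (h2 : (U.card : ℝ) * (1 + √n) ≤ n / 1280)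
    (h3 : (U.card : ℝ) ≤ n / 2) : HG d (del G U) U := by
  obtain ⟨hΔ, hlow, hfib⟩ := hG
  set Ch : Finset (Fin n) := U ∪ U.biUnion (fun u => Finset.univ.filter (fun v => G.Adj u v))
  have hCh : (Ch.card : ℝ) ≤ U.card * (1 + √n) := by
    have : Ch.card ≤ U.card + ∑ u ∈ U, dg G u :=
      (Finset.card_union_le _ _).trans (Nat.add_le_add_left Finset.card_biUnion_le _)
    have h4 : ((∑ u ∈ U, dg G u : ℕ) : ℝ) ≤ ∑ _u ∈ U, √n := by
      push_cast; exact Finset.sum_le_sum fun u _ => hΔ u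
    rw [Finset.sum_const, nsmul_eq_mul] at h4
    have h5 : (Ch.card : ℝ) ≤ U.card + (∑ u ∈ U, dg G u : ℕ) := by exact_mod_cast this
    linarith
  have hsame : ∀ v, v ∉ Ch → dg (del G U) v = dg G v := by
    intro v hv
    simp only [Ch, Finset.mem_union, Finset.mem_biUnion, Finset.mem_filter, Finset.mem_univ,
      true_and, not_or, not_exists, not_and] at hv
    unfold dg
    congr 1
    refine Finset.filter_congr fun y _ => ?_
    simp only [del, and_iff_left_iff_imp]
    exact fun hy => ⟨hv.1, fun hyU => hv.2 y hyU hy.symm⟩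
  have hsub : ∀ (P : ℕ → Prop) [DecidablePred P], ((Finset.univ.filter (fun v => P (dg (del G U) v))).card : ℝ) ≤
      (Finset.univ.filter (fun v => P (dg G v))).card + U.card * (1 + √n) := by
    intro P _
    have : Finset.univ.filter (fun v => P (dg (del G U) v)) ⊆
        Finset.univ.filter (fun v => P (dg G v)) ∪ Ch := by
      intro v hv
      by_cases hvC : v ∈ Ch
      · exact Finset.mem_union_right _ hvC
      · refine Finset.mem_union_left _ ?_
        simp only [Finset.mem_filter, Finset.mem_univ, true_and] at hv ⊢
        rwa [hsame v hvC] at hv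
    have h4 := (Finset.card_le_card this).trans (Finset.card_union_le _ _)
    have h5 : ((Finset.univ.filter (fun v => P (dg (del G U) v))).card : ℝ) ≤
      (Finset.univ.filter (fun v => P (dg G v))).card + Ch.card := by exact_mod_cast h4
    linarith
  refine ⟨?_, ?_⟩
  · have h4 := card_bad_le (del G U)
    have h5 : ((bad (del G U)).card : ℝ) ≤
      6 * (Finset.univ.filter (fun x => dg (del G U) x ≤ 3)).card := by exact_mod_cast h4
    have h6 := hsub (fun m => m ≤ 3)
    have h7 : (n : ℝ) / d ^ 2 = 12 * (n / (12 * d ^ 2)) := by field_simp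
    rw [h7]; linarith
  · refine exists_colouring (fun w => dg (del G U) w) (a := n / 640) (b := n / 640)
      (by positivity) (by positivity) 160 (Finset.univ \ U) (fun x => ?_) ?_
    · have h4 : ((Finset.univ \ U).filter (fun w => dg (del G U) w = x)).card ≤
          (Finset.univ.filter (fun w => dg (del G U) w = x)).card :=
        Finset.card_le_card (Finset.filter_subset_filter _ (Finset.subset_univ _))
      have h5 : (((Finset.univ \ U).filter (fun w => dg (del G U) w = x)).card : ℝ) ≤
          (Finset.univ.filter (fun w => dg (del G U) w = x)).card := by exact_mod_cast h4
      have h6 := hsub (fun m => m = x)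
      have h7 := hfib x
      linarith
    · rw [Finset.card_sdiff_of_subset (Finset.subset_univ _), Nat.cast_sub
        (Finset.card_le_card (Finset.subset_univ _)), Finset.card_univ, Fintype.card_fin]
      push_cast; linarith

end core

/-! ### Compatible vertices have similar neighbourhoods -/

section det
variable {n : ℕ}

/-- The number of neighbours of `u` outside `U` that belong to class `t`, where vertices are
classified by applying `χ` to their degree in `del G U`. -/
noncomputable def Nt (G : SimpleGraph (Fin n)) (U : Finset (Fin n)) (χ : ℕ → ℕ) (t : ℕ)
    (u : Fin n) : ℕ :=
  (Finset.univ.filter (fun w => G.Adj u w ∧ w ∉ U ∧ χ (dg (del G U) w) = t)).card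

/-- The exceptional neighbours of `u`: those lying in `U`, those that are bad in `del G U`, and
those having a second neighbour in `U`. -/
noncomputable def exs (G : SimpleGraph (Fin n)) (U : Finset (Fin n)) (u : Fin n) :
    Finset (Fin n) :=
  Finset.univ.filter (fun x => G.Adj u x ∧
    (x ∈ U ∨ x ∈ bad (del G U) ∨ ∃ u' ∈ U, u' ≠ u ∧ G.Adj u' x))

/-- The degree of `x` inside the 2-core; the conjunct `True` fits the general form of `iso_card`. -/
noncomputable def cdg (G : SimpleGraph (Fin n)) (x : Fin n) : ℕ :=
  (Finset.univ.filter (fun y => y ∈ twoCore G ∧ G.Adj x y ∧ True)).card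

/-- An automorphism of the 2-core maps neighbourhoods to neighbourhoods. -/
lemma iso_card {G : SimpleGraph (Fin n)} (π : G.induce (twoCore G) ≃g G.induce (twoCore G))
    (a b : Fin n) (ha : a ∈ twoCore G) (hb : ((π ⟨a, ha⟩ : twoCore G) : Fin n) = b)
    (P Q : Fin n → Prop) [DecidablePred P] [DecidablePred Q]
    (hPQ : ∀ x (hx : x ∈ twoCore G), P x ↔ Q (π ⟨x, hx⟩ : twoCore G)) :
    (Finset.univ.filter (fun y => y ∈ twoCore G ∧ G.Adj a y ∧ P y)).card =
      (Finset.univ.filter (fun y => y ∈ twoCore G ∧ G.Adj b y ∧ Q y)).card := by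
  have hadj : ∀ x (hx : x ∈ twoCore G), G.Adj b (π ⟨x, hx⟩ : twoCore G) ↔ G.Adj a x := by
    intro x hx
    subst hb
    exact π.map_rel_iff (a := ⟨a, ha⟩) (b := ⟨x, hx⟩)
  refine Finset.card_bij (fun x hx => ((π ⟨x, (Finset.mem_filter.1 hx).2.1⟩ : twoCore G) : Fin n))
    ?_ ?_ ?_
  · intro x hx
    have hx' := (Finset.mem_filter.1 hx).2
    exact Finset.mem_filter.2 ⟨Finset.mem_univ _, Subtype.coe_prop _, (hadj x hx'.1).2 hx'.2.1,
      (hPQ x hx'.1).1 hx'.2.2⟩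
  · intro x hx y hy hxy
    have := π.injective (Subtype.ext hxy)
    simpa using this
  · intro y hy
    have hy' := (Finset.mem_filter.1 hy).2
    obtain ⟨⟨x, hx⟩, hxy⟩ := π.surjective ⟨y, hy'.1⟩
    have hyx : ((π ⟨x, hx⟩ : twoCore G) : Fin n) = y := by rw [hxy]
    refine ⟨x, Finset.mem_filter.2 ⟨Finset.mem_univ _, hx, (hadj x hx).1 ?_, (hPQ x hx).2 ?_⟩, hyx⟩
    · rw [hyx]; exact hy'.2.1
    · rw [hyx]; exact hy'.2.2

/-- Away from exceptional vertices, the 2-core degree is the degree in `del G U` plus one. -/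
lemma cdg_eq {G : SimpleGraph (Fin n)} {U : Finset (Fin n)} {u x : Fin n} (hu : u ∈ U)
    (huc : u ∈ twoCore G) (hux : G.Adj u x) (hx : x ∉ exs G U u) :
    x ∈ twoCore G ∧ x ∉ U ∧ cdg G x - 1 = dg (del G U) x := by
  simp only [exs, bad, Finset.mem_filter, Finset.mem_univ, true_and, not_and, not_or, not_exists,
    not_not] at hx
  obtain ⟨hxU, ⟨hxc, hxn⟩, hxu⟩ := hx hux
  have hle : del G U ≤ G := fun a b h => h.1
  refine ⟨twoCore_mono hle hxc, hxU, ?_⟩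
  have : Finset.univ.filter (fun y => y ∈ twoCore G ∧ G.Adj x y ∧ True) =
      insert u (Finset.univ.filter (fun y => (del G U).Adj x y)) := by
    ext y
    simp only [Finset.mem_filter, Finset.mem_univ, true_and, Finset.mem_insert, and_true]
    constructor
    · rintro ⟨_, hy⟩
      by_cases hyu : y = u
      · exact Or.inl hyu
      · exact Or.inr ⟨hy, hxU, fun hyU => hxu y hyU hyu hy.symm⟩
    · rintro (rfl | hy)
      · exact ⟨huc, hux.symm⟩
      · exact ⟨twoCore_mono hle (hxn y hy), hy.1⟩
  unfold cdg dg
  rw [this, Finset.card_insert_of_notMem, Nat.add_sub_cancel]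
  simp only [Finset.mem_filter, Finset.mem_univ, true_and]
  exact fun h => h.2.2 hu

/-- The automorphism-invariant counterpart of `Nt`, defined through the 2-core only. -/
noncomputable def Ct (G : SimpleGraph (Fin n)) (χ : ℕ → ℕ) (t : ℕ) (u : Fin n) : ℕ :=
  (Finset.univ.filter (fun y => y ∈ twoCore G ∧ G.Adj u y ∧ χ (cdg G y - 1) = t)).card

lemma Nt_Ct {G : SimpleGraph (Fin n)} {U : Finset (Fin n)} {u : Fin n} (hu : u ∈ U)
    (huc : u ∈ twoCore G) (χ : ℕ → ℕ) (t : ℕ) :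
    Nt G U χ t u ≤ Ct G χ t u + (exs G U u).card ∧ Ct G χ t u ≤ Nt G U χ t u + (exs G U u).card := by
  unfold Nt Ct
  constructor <;> refine (Finset.card_le_card fun x hx => ?_).trans (Finset.card_union_le _ _)
  all_goals
    simp only [Finset.mem_filter, Finset.mem_univ, true_and, Finset.mem_union] at hx ⊢
    by_cases hxe : x ∈ exs G U u
    · exact Or.inr hxe
    left
  · obtain ⟨h1, -, h3⟩ := cdg_eq hu huc hx.1 hxe
    exact ⟨h1, hx.1, by rw [h3]; exact hx.2.2⟩
  · obtain ⟨-, h2, h3⟩ := cdg_eq hu huc hx.2.1 hxe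
    exact ⟨hx.2.1, h2, by rw [← h3]; exact hx.2.2⟩

lemma Nt_close {k : ℕ} {G : SimpleGraph (Fin n)} {U : Finset (Fin n)} {φ ψ : Fin k → Fin n}
    (hφ : ∀ i, φ i ∈ U) (hψ : ∀ i, ψ i ∈ U) (hc : Compatible G φ ψ) (χ : ℕ → ℕ) (t : ℕ)
    (i : Fin k) :
    Nt G U χ t (φ i) ≤ Nt G U χ t (ψ i) + ((exs G U (φ i)).card + (exs G U (ψ i)).card) ∧
    Nt G U χ t (ψ i) ≤ Nt G U χ t (φ i) + ((exs G U (φ i)).card + (exs G U (ψ i)).card) := by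
  obtain ⟨π, hπ⟩ := hc
  obtain ⟨h, hi⟩ := hπ i
  have hc2 : ψ i ∈ twoCore G := by rw [← hi]; exact Subtype.coe_prop _
  have hcd : ∀ x (hx : x ∈ twoCore G), cdg G x = cdg G (π ⟨x, hx⟩ : twoCore G) :=
    fun x hx => iso_card π x _ hx rfl (fun _ => True) (fun _ => True) fun _ _ => Iff.rfl
  have hC : Ct G χ t (φ i) = Ct G χ t (ψ i) :=
    iso_card π _ _ h hi (fun y => χ (cdg G y - 1) = t) (fun y => χ (cdg G y - 1) = t)
      fun x hx => by rw [hcd x hx]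
  have h1 := Nt_Ct (hφ i) h χ t
  have h2 := Nt_Ct (hψ i) hc2 χ t
  omega

end det

/-! ### Tail bounds for exceptional edges near a small vertex set -/

section exc
variable {n : ℕ} {p : ℝ}

/-- The pairs joining `u` to the vertices of `W`. -/
noncomputable def spokes (u : Fin n) (W : Finset (Fin n)) : Finset (Sym2 (Fin n)) :=
  W.image (fun w => s(u, w))

/-- The pairs joining `U` to its complement. -/
noncomputable def cross (U : Finset (Fin n)) : Finset (Sym2 (Fin n)) :=
  (U ×ˢ Uᶜ).image (fun q => s(q.1, q.2))

lemma card_spokes (u : Fin n) (W : Finset (Fin n)) : (spokes u W).card = W.card :=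
  Finset.card_image_of_injective _ fun _ _ h => Sym2.congr_right.1 h

lemma cnt_spokes {u : Fin n} {W : Finset (Fin n)} (hu : u ∉ W) (ω : Sym2 (Fin n) → Bool) :
    cnt (spokes u W) ω = (W.filter (fun w => (gr ω).Adj u w)).card := by
  have hi : Set.InjOn (fun w => s(u, w)) (W.filter (fun w => ω s(u, w) = true) : Set (Fin n)) :=
    fun _ _ _ _ h => Sym2.congr_right.1 h
  unfold cnt spokes
  rw [Finset.filter_image, Finset.card_image_of_injOn (by simp)]
  congr 1
  refine Finset.filter_congr fun w hw => ?_
  have : u ≠ w := fun h => hu (h ▸ hw)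
  simp [gr, this]

lemma spokes_subset_cross {U W : Finset (Fin n)} {u : Fin n} (hu : u ∈ U) (hW : Disjoint W U) :
    spokes u W ⊆ cross U := by
  intro e he
  obtain ⟨w, hw, rfl⟩ := Finset.mem_image.1 he
  exact Finset.mem_image.2 ⟨(u, w), Finset.mem_product.2
    ⟨hu, Finset.mem_compl.2 (Finset.disjoint_left.1 hW hw)⟩, rfl⟩

lemma disjoint_sym2_cross {E : Finset (Sym2 (Fin n))} {U : Finset (Fin n)} (hE : E ⊆ U.sym2) :
    Disjoint E (cross U) := by
  refine Finset.disjoint_left.2 fun e he hc => ?_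
  obtain ⟨⟨x, y⟩, hxy, rfl⟩ := Finset.mem_image.1 hc
  have h1 := Finset.mk_mem_sym2_iff.1 (hE he)
  exact (Finset.mem_compl.1 (Finset.mem_product.1 hxy).2) h1.2

/-- The graph outside `U` is not affected by the pairs between `U` and its complement. -/
lemma del_piecewise (U : Finset (Fin n)) (ω ω' : Sym2 (Fin n) → Bool) :
    del (gr ((cross U).piecewise ω' ω)) U = del (gr ω) U := by
  ext x y
  simp only [del, gr]
  refine and_congr_left fun h => ?_
  have : s(x, y) ∉ cross U := by
    intro hc
    obtain ⟨⟨a, b⟩, hab, he⟩ := Finset.mem_image.1 hc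
    have ha := (Finset.mem_product.1 hab).1
    rcases Sym2.eq_iff.1 he with ⟨rfl, rfl⟩ | ⟨rfl, rfl⟩
    · exact h.1 ha
    · exact h.2 ha
  rw [Finset.piecewise_eq_of_notMem _ _ _ this]

lemma cnt_piecewise {S A : Finset (Sym2 (Fin n))} (h : S ⊆ A) (ω ω' : Sym2 (Fin n) → Bool) :
    cnt S (A.piecewise ω' ω) = cnt S ω' :=
  cnt_congr fun _ he => Finset.piecewise_eq_of_mem _ _ _ (h he)

/-- Few further edges inside `U`. -/
lemma tail_inside (h0 : 0 ≤ p) (h1 : p ≤ 1) (E : Finset (Sym2 (Fin n))) (U : Finset (Fin n))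
    {x : ℝ} (hx : 1 ≤ x) (m : ℕ) (hU : (U.card : ℝ) ^ 2 * p * x ≤ 1) :
    EE p (fun ω => if (∀ e ∈ E, ω e = true) ∧ m ≤ cnt (U.sym2 \ E) ω then 1 else 0) ≤
      p ^ E.card * (Real.exp 1 / x ^ m) := by
  refine EE_edges h0 h1 E (U.sym2 \ E) Finset.disjoint_sdiff
    (g := fun ω => m ≤ cnt (U.sym2 \ E) ω) fun ω => ?_
  simp_rw [cnt_piecewise (Finset.Subset.refl _)]
  refine (tail_le h0 h1 _ hx m).trans ?_
  gcongr
  have hc : (U.sym2 \ E).card ≤ U.card ^ 2 := by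
    refine (Finset.card_le_card Finset.sdiff_subset).trans ?_
    rw [Finset.card_sym2, Nat.choose_two_right]
    refine Nat.div_le_of_le_mul ?_
    rcases Nat.eq_zero_or_pos U.card with h | h
    · simp [h]
    · simp; nlinarith
  have hc' : ((U.sym2 \ E).card : ℝ) ≤ (U.card : ℝ) ^ 2 := by exact_mod_cast hc
  calc _ ≤ (U.card : ℝ) ^ 2 * p * x := by gcongr
    _ ≤ 1 := hU

/-- The pairs joining `U` to the bad vertices of `H` outside `U`. -/
noncomputable def badPairs (U : Finset (Fin n)) (H : SimpleGraph (Fin n)) :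
    Finset (Sym2 (Fin n)) :=
  (U ×ˢ (bad H \ U)).image (fun q => s(q.1, q.2))

/-- Few edges lead from `U` to bad vertices. -/
lemma tail_bad (h0 : 0 ≤ p) (h1 : p ≤ 1) {E : Finset (Sym2 (Fin n))} {U : Finset (Fin n)}
    (hE : E ⊆ U.sym2) {d x b : ℝ} (hd : ((n : ℝ) / d ^ 2) * p * x ≤ 1) (hx : 1 ≤ x) (m : ℕ)
    (hb : (U.card : ℝ) ≤ b) :
    EE p (fun ω => if (∀ e ∈ E, ω e = true) ∧ (HG d (del (gr ω) U) U ∧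
      m ≤ cnt (badPairs U (del (gr ω) U)) ω) then 1 else 0) ≤
      p ^ E.card * (Real.exp b / x ^ m) := by
  refine EE_edges h0 h1 E (cross U) (disjoint_sym2_cross hE)
    (g := fun ω => HG d (del (gr ω) U) U ∧ m ≤ cnt (badPairs U (del (gr ω) U)) ω) fun ω => ?_
  simp_rw [del_piecewise]
  set H := del (gr ω) U
  have hsub : badPairs U H ⊆ cross U := Finset.image_subset_image
    (Finset.product_subset_product_right fun y hy =>
      Finset.mem_compl.2 (Finset.mem_sdiff.1 hy).2)
  simp_rw [cnt_piecewise hsub]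
  by_cases hH : HG d H U
  · simp only [hH, true_and]
    refine (tail_le h0 h1 _ hx m).trans ?_
    gcongr
    have h2 : (badPairs U H).card ≤ U.card * (bad H).card :=
      Finset.card_image_le.trans (by
        rw [Finset.card_product]
        exact Nat.mul_le_mul_left _ (Finset.card_le_card Finset.sdiff_subset))
    have h3 : ((badPairs U H).card : ℝ) ≤ U.card * (n / d ^ 2) := by
      calc ((badPairs U H).card : ℝ) ≤ U.card * (bad H).card := by exact_mod_cast h2
        _ ≤ _ := by gcongr; exact hH.1
    calc ((badPairs U H).card : ℝ) * p * x ≤ U.card * (n / d ^ 2) * p * x := by gcongr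
      _ = U.card * (n / d ^ 2 * p * x) := by ring
      _ ≤ U.card * 1 := by gcongr
      _ ≤ b := by linarith
  · simp only [hH, false_and, if_false, EE_const]
    positivity

/-- The number of edges from `w` to `U` if there are at least two, and zero otherwise. -/
noncomputable def dbl (U : Finset (Fin n)) (ω : Sym2 (Fin n) → Bool) (w : Fin n) : ℕ :=
  if 2 ≤ cnt (spokes w U) ω then cnt (spokes w U) ω else 0

/-- Few edges lead from `U` to vertices with several neighbours in `U`. -/
lemma tail_dbl (h0 : 0 ≤ p) (h1 : p ≤ 1) {E : Finset (Sym2 (Fin n))} {U : Finset (Fin n)}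
    (hE : E ⊆ U.sym2) {x y : ℝ} (hx : 1 ≤ x) (hy : 1 ≤ y) (m : ℕ)
    (hU : (U.card : ℝ) * p * (x * y) ≤ 1) (hn : n * (3 / y ^ 2) ≤ 1) :
    EE p (fun ω => if (∀ e ∈ E, ω e = true) ∧ m ≤ ∑ w ∈ Uᶜ, dbl U ω w then 1 else 0) ≤
      p ^ E.card * (Real.exp 1 / x ^ m) := by
  refine EE_edges h0 h1 E (cross U) (disjoint_sym2_cross hE)
    (g := fun ω => m ≤ ∑ w ∈ Uᶜ, dbl U ω w) fun ω => ?_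
  have hst : ∀ w ∈ Uᶜ, spokes w U ⊆ cross U := by
    intro w hw e he
    obtain ⟨u, hu, rfl⟩ := Finset.mem_image.1 he
    exact Finset.mem_image.2 ⟨(u, w), Finset.mem_product.2 ⟨hu, hw⟩, Sym2.eq_swap⟩
  have heq : ∀ ω', ∑ w ∈ Uᶜ, dbl U ((cross U).piecewise ω' ω) w = ∑ w ∈ Uᶜ, dbl U ω' w :=
    fun ω' => Finset.sum_congr rfl fun w hw => by
      unfold dbl; rw [cnt_piecewise (hst w hw)]
  simp_rw [heq]
  have hx0 : 0 < x := by linarith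
  have hy0 : 0 < y := by linarith
  have hxy : 1 ≤ x * y := one_le_mul_of_one_le_of_one_le hx hy
  rw [le_div_iff₀ (pow_pos hx0 _), ← EE_mul_const]
  have hpt : ∀ ω' : Sym2 (Fin n) → Bool, (if m ≤ ∑ w ∈ Uᶜ, dbl U ω' w then (1 : ℝ) else 0) * x ^ m ≤
      ∏ w ∈ Uᶜ, x ^ dbl U ω' w := by
    intro ω'
    rw [Finset.prod_pow_eq_pow_sum]
    split_ifs with h
    · rw [one_mul]; exact pow_le_pow_right₀ hx h
    · rw [zero_mul]; positivity
  refine (EE_mono h0 h1 hpt).trans ?_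
  rw [EE_blocks Uᶜ (fun w => spokes w U)]
  · have hone : ∀ w ∈ Uᶜ, EE p (fun ω' => x ^ dbl U ω' w) ≤ Real.exp (3 / y ^ 2) := by
      intro w _
      have h2 : ∀ ω' : Sym2 (Fin n) → Bool,
          x ^ dbl U ω' w ≤ 1 + (x * y) ^ cnt (spokes w U) ω' * (1 / y ^ 2) := by
        intro ω'
        unfold dbl
        split_ifs with h
        · have h3 : y ^ 2 ≤ y ^ cnt (spokes w U) ω' := pow_le_pow_right₀ hy h
          have h4 : 1 ≤ y ^ cnt (spokes w U) ω' * (1 / y ^ 2) := by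
            rw [mul_one_div, le_div_iff₀ (by positivity), one_mul]; exact h3
          have h5 : 0 < x ^ cnt (spokes w U) ω' := by positivity
          rw [mul_pow, mul_assoc]
          nlinarith
        · rw [pow_zero]; have : 0 ≤ (x * y) ^ cnt (spokes w U) ω' * (1 / y ^ 2) := by positivity
          linarith
      refine (EE_mono h0 h1 h2).trans ?_
      rw [EE_add, EE_const, EE_mul_const]
      have h3 := EE_pow_cnt_le h0 (spokes w U) (x := x * y) (by positivity) h1
      rw [card_spokes] at h3
      have h4 : Real.exp (U.card * p * (x * y)) ≤ 3 :=
        (Real.exp_le_exp.2 hU).trans (by have := Real.exp_one_lt_d9; linarith)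
      have h5 := Real.add_one_le_exp (3 / y ^ 2)
      calc _ ≤ 1 + 3 * (1 / y ^ 2) := by gcongr; linarith
        _ = 3 / y ^ 2 + 1 := by ring
        _ ≤ _ := h5
    calc _ ≤ ∏ w ∈ Uᶜ, Real.exp (3 / y ^ 2) :=
          Finset.prod_le_prod (fun w _ => EE_nonneg h0 h1 fun _ => by positivity) hone
      _ = Real.exp (Uᶜ.card * (3 / y ^ 2)) := by
          rw [Finset.prod_const, ← Real.exp_nat_mul]
      _ ≤ Real.exp 1 := by
          refine Real.exp_le_exp.2 (le_trans ?_ hn)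
          gcongr
          exact (Finset.card_le_univ _).trans (by simp)
  · intro a ha b hb hab
    refine Finset.disjoint_left.2 fun e he he' => ?_
    obtain ⟨u, hu, rfl⟩ := Finset.mem_image.1 he
    obtain ⟨v, hv, h⟩ := Finset.mem_image.1 he'
    rcases Sym2.eq_iff.1 h with ⟨h2, _⟩ | ⟨_, h2⟩
    · exact hab h2.symm
    · exact Finset.mem_compl.1 ha (h2 ▸ hv)
  · intro w _ ω₁ ω₂ h
    unfold dbl; rw [cnt_congr h]

end exc

/-! ### Vertices outside confluences rarely look alike -/

section close
variable {n : ℕ} {p : ℝ}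

/-- The vertices outside `U` whose `H`-degree is given colour `t` by `χ`. -/
noncomputable def cls (U : Finset (Fin n)) (H : SimpleGraph (Fin n)) (χ : ℕ → ℕ) (t : ℕ) :
    Finset (Fin n) :=
  (Finset.univ \ U).filter (fun w => χ (dg H w) = t)

/-- For each of the 160 colours, `a` and `b` have the same number of neighbours of that colour, up
to an error `D`. -/
def Close (U : Finset (Fin n)) (H : SimpleGraph (Fin n)) (χ : ℕ → ℕ) (D : ℕ)
    (ω : Sym2 (Fin n) → Bool) (a b : Fin n) : Prop :=
  ∀ t < 160, cnt (spokes a (cls U H χ t)) ω ≤ cnt (spokes b (cls U H χ t)) ω + D ∧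
    cnt (spokes b (cls U H χ t)) ω ≤ cnt (spokes a (cls U H χ t)) ω + D

lemma cls_disjoint (U : Finset (Fin n)) (H : SimpleGraph (Fin n)) (χ : ℕ → ℕ) (t : ℕ) :
    Disjoint (cls U H χ t) U :=
  Finset.disjoint_left.2 fun _ hw => (Finset.mem_sdiff.1 (Finset.mem_filter.1 hw).1).2

lemma Nt_eq_cnt {U : Finset (Fin n)} {u : Fin n} (hu : u ∈ U) (χ : ℕ → ℕ) (t : ℕ)
    (ω : Sym2 (Fin n) → Bool) :
    Nt (gr ω) U χ t u = cnt (spokes u (cls U (del (gr ω) U) χ t)) ω := by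
  rw [cnt_spokes fun h => Finset.disjoint_left.1 (cls_disjoint _ _ _ _) h hu]
  unfold Nt cls
  congr 1
  ext w
  simp only [Finset.mem_filter, Finset.mem_univ, true_and, Finset.mem_sdiff]
  tauto

lemma spokes_disjoint {U W W' : Finset (Fin n)} {a b : Fin n} (ha : a ∈ U)
    (h : a ≠ b ∨ Disjoint W W') (hW' : Disjoint W' U) :
    Disjoint (spokes a W) (spokes b W') := by
  refine Finset.disjoint_left.2 fun e he he' => ?_
  obtain ⟨w, hw, rfl⟩ := Finset.mem_image.1 he
  obtain ⟨w', hw', h2⟩ := Finset.mem_image.1 he'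
  rcases Sym2.eq_iff.1 h2 with ⟨h3, h4⟩ | ⟨_, h4⟩
  · subst h3 h4
    rcases h with h | h
    · exact h rfl
    · exact Finset.disjoint_left.1 h hw hw'
  · exact Finset.disjoint_left.1 hW' hw' (h4 ▸ ha)

/-- The colour counts at distinct vertices of `U` are independent and each is spread out, so it is
unlikely that `φ i` and `ψ i` look alike for half of the indices of a conflict-free set `J`. -/
lemma tail_close (h0 : 0 < p) (h1 : p ≤ 1 / 2) {E : Finset (Sym2 (Fin n))} {U : Finset (Fin n)}
    (hE : E ⊆ U.sym2) {k : ℕ} {φ ψ : Fin k → Fin n} (hφ : Function.Injective φ)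
    (hψ : Function.Injective ψ) (hφU : ∀ i, φ i ∈ U) (hψU : ∀ i, ψ i ∈ U) (J : Finset (Fin k))
    (hJ : ∀ i ∈ J, ∀ j ∈ J, φ i ≠ ψ j) {d κ : ℝ} (hd : 0 < d) (hdn : d = n * p)
    (hκ : 785 * (8 / √(d / 640)) ≤ κ) (hκ1 : κ ≤ 1) (χ : SimpleGraph (Fin n) → ℕ → ℕ)
    (hχ : ∀ H, HG d H U → ∀ t < 160, (n : ℝ) / 640 ≤ (cls U H (χ H) t).card) :
    EE p (fun ω => if (∀ e ∈ E, ω e = true) ∧ (HG d (del (gr ω) U) U ∧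
      ∃ J' ∈ J.powerset, J.card ≤ 2 * J'.card ∧
        ∀ i ∈ J', Close U (del (gr ω) U) (χ (del (gr ω) U)) 392 ω (φ i) (ψ i)) then 1 else 0) ≤
      p ^ E.card * (2 ^ J.card * κ ^ (80 * J.card)) := by
  have hp1 : p ≤ 1 := by linarith
  have hκ0 : 0 ≤ κ := le_trans (by positivity) hκ
  refine EE_edges h0.le hp1 E (cross U) (disjoint_sym2_cross hE)
    (g := fun ω => HG d (del (gr ω) U) U ∧ ∃ J' ∈ J.powerset, J.card ≤ 2 * J'.card ∧
        ∀ i ∈ J', Close U (del (gr ω) U) (χ (del (gr ω) U)) 392 ω (φ i) (ψ i)) fun ω => ?_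
  simp_rw [del_piecewise]
  set H := del (gr ω) U
  set f : ℕ → Finset (Fin n) := cls U H (χ H) with hf
  have hfU : ∀ t, Disjoint (f t) U := cls_disjoint _ _ _
  have hff : ∀ s t, s ≠ t → Disjoint (f s) (f t) := fun s t hst =>
    Finset.disjoint_left.2 fun w hw hw' =>
      hst ((Finset.mem_filter.1 hw).2.symm.trans (Finset.mem_filter.1 hw').2)
  have hcl : ∀ (ω' : Sym2 (Fin n) → Bool) (i : Fin k),
      Close U H (χ H) 392 ((cross U).piecewise ω' ω) (φ i) (ψ i) ↔
        Close U H (χ H) 392 ω' (φ i) (ψ i) := by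
    intro ω' i
    unfold Close
    refine forall₂_congr fun t _ => ?_
    rw [cnt_piecewise (spokes_subset_cross (hφU i) (hfU t)),
      cnt_piecewise (spokes_subset_cross (hψU i) (hfU t))]
  simp_rw [hcl]
  by_cases hH : HG d H U
  swap
  · simp only [hH, false_and, if_false, EE_const]; positivity
  simp only [hH, true_and]
  -- the indicator that the counts of colour `q.2` at the two images of `q.1` are close
  set F : Fin k × ℕ → (Sym2 (Fin n) → Bool) → ℝ := fun q ω' =>
    if cnt (spokes (φ q.1) (f q.2)) ω' ≤ cnt (spokes (ψ q.1) (f q.2)) ω' + 392 ∧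
      cnt (spokes (ψ q.1) (f q.2)) ω' ≤ cnt (spokes (φ q.1) (f q.2)) ω' + 392 then 1 else 0 with hF
  have hF0 : ∀ q ω', 0 ≤ F q ω' := fun q ω' => by rw [hF]; dsimp only; split_ifs <;> norm_num
  set T := J.powerset.filter (fun J' => J.card ≤ 2 * J'.card)
  have hpt : ∀ ω' : Sym2 (Fin n) → Bool, (if ∃ J' ∈ J.powerset, J.card ≤ 2 * J'.card ∧
      ∀ i ∈ J', Close U H (χ H) 392 ω' (φ i) (ψ i) then (1 : ℝ) else 0) ≤
      ∑ J' ∈ T, ∏ q ∈ J' ×ˢ Finset.range 160, F q ω' := by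
    intro ω'
    split_ifs with h
    · obtain ⟨J', hJ', hc, hcl'⟩ := h
      have h2 : ∏ q ∈ J' ×ˢ Finset.range 160, F q ω' = 1 := by
        refine Finset.prod_eq_one fun q hq => ?_
        obtain ⟨hq1, hq2⟩ := Finset.mem_product.1 hq
        exact if_pos (hcl' q.1 hq1 q.2 (Finset.mem_range.1 hq2))
      rw [← h2]
      exact Finset.single_le_sum (f := fun J' => ∏ q ∈ J' ×ˢ Finset.range 160, F q ω')
        (fun _ _ => Finset.prod_nonneg fun q _ => hF0 q ω') (Finset.mem_filter.2 ⟨hJ', hc⟩)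
    · exact Finset.sum_nonneg fun _ _ => Finset.prod_nonneg fun q _ => hF0 q ω'
  refine (EE_mono h0.le hp1 hpt).trans ?_
  rw [EE_sum]
  have hone : ∀ i ∈ J, ∀ t < 160, EE p (F (i, t)) ≤ κ := by
    intro i hi t ht
    have hdis : Disjoint (spokes (φ i) (f t)) (spokes (ψ i) (f t)) :=
      spokes_disjoint (hφU i) (Or.inl (hJ i hi i hi)) (hfU t)
    refine EE_le_of_resample h0.le hp1 (spokes (φ i) (f t)) fun ω₁ => ?_
    have h2 : ∀ ω₂ : Sym2 (Fin n) → Bool, cnt (spokes (ψ i) (f t))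
        ((spokes (φ i) (f t)).piecewise ω₂ ω₁) = cnt (spokes (ψ i) (f t)) ω₁ := fun ω₂ =>
      cnt_congr fun e he => Finset.piecewise_eq_of_notMem _ _ _ (Finset.disjoint_right.1 hdis he)
    simp only [hF, h2, cnt_piecewise (Finset.Subset.refl (spokes (φ i) (f t)))]
    refine (window_le h0 h1 (spokes (φ i) (f t)) (μ := d / 640) (by positivity) ?_ _ 392).trans ?_
    · rw [card_spokes, hdn]
      have := hχ H hH t ht
      calc n * p / 640 = n / 640 * p := by ring
        _ ≤ _ := by gcongr
    · norm_num at hκ ⊢; linarith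
  have hterm : ∀ J' ∈ T, EE p (fun ω' => ∏ q ∈ J' ×ˢ Finset.range 160, F q ω') ≤
      κ ^ (80 * J.card) := by
    intro J' hJ'
    obtain ⟨hs, hc⟩ := Finset.mem_filter.1 hJ'
    rw [Finset.mem_powerset] at hs
    rw [EE_blocks (J' ×ˢ Finset.range 160)
      (fun q => spokes (φ q.1) (f q.2) ∪ spokes (ψ q.1) (f q.2))]
    · calc _ ≤ ∏ q ∈ J' ×ˢ Finset.range 160, κ :=
            Finset.prod_le_prod (fun q _ => EE_nonneg h0.le hp1 (hF0 q)) fun q hq => by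
              obtain ⟨hq1, hq2⟩ := Finset.mem_product.1 hq
              exact hone q.1 (hs hq1) q.2 (Finset.mem_range.1 hq2)
        _ = κ ^ (J'.card * 160) := by
            rw [Finset.prod_const, Finset.card_product, Finset.card_range]
        _ ≤ _ := pow_le_pow_of_le_one hκ0 hκ1 (by omega)
    · rintro ⟨i, s⟩ ha ⟨j, t⟩ hb hab
      have hi := hs (Finset.mem_product.1 ha).1
      have hj := hs (Finset.mem_product.1 hb).1
      simp only at hi hj ⊢
      have hne : i ≠ j ∨ Disjoint (f s) (f t) := by
        by_cases hij : i = j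
        · right; exact hff s t fun hst => hab (by rw [hij, hst])
        · exact Or.inl hij
      rw [Finset.disjoint_union_left, Finset.disjoint_union_right, Finset.disjoint_union_right]
      exact ⟨⟨spokes_disjoint (hφU i) (hne.imp_left fun h h' => h (hφ h')) (hfU t),
        spokes_disjoint (hφU i) (Or.inl (hJ i hi j hj)) (hfU t)⟩,
        spokes_disjoint (hψU i) (Or.inl (hJ j hj i hi).symm) (hfU t),
        spokes_disjoint (hψU i) (hne.imp_left fun h h' => h (hψ h')) (hfU t)⟩
    · intro q _ ω₁ ω₂ h
      simp only [hF]
      rw [cnt_congr fun e he => h e (Finset.mem_union_left _ he),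
        cnt_congr fun e he => h e (Finset.mem_union_right _ he)]
  calc _ ≤ ∑ J' ∈ T, κ ^ (80 * J.card) := Finset.sum_le_sum hterm
    _ = T.card * κ ^ (80 * J.card) := by rw [Finset.sum_const, nsmul_eq_mul]
    _ ≤ 2 ^ J.card * κ ^ (80 * J.card) := by
        gcongr
        have : T.card ≤ 2 ^ J.card :=
          (Finset.card_filter_le _ _).trans_eq (Finset.card_powerset J)
        exact_mod_cast this

end close

/-! ### Compatibility of a fixed configuration is unlikely -/

section config
variable {n : ℕ} {p : ℝ}

lemma sum_exs (U : Finset (Fin n)) (ω : Sym2 (Fin n) → Bool) :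
    ∑ u ∈ U, (exs (gr ω) U u).card ≤ 2 * cnt U.sym2 ω +
      cnt (badPairs U (del (gr ω) U)) ω + ∑ w ∈ Uᶜ, dbl U ω w := by
  set B := bad (del (gr ω) U)
  have h1 : ∀ u ∈ U, (exs (gr ω) U u).card ≤ (U.filter (fun x => (gr ω).Adj u x)).card +
      ((B \ U).filter (fun x => (gr ω).Adj u x)).card +
      (Uᶜ.filter (fun x => (gr ω).Adj u x ∧ ∃ u' ∈ U, u' ≠ u ∧ (gr ω).Adj u' x)).card := by
    intro u _
    refine (Finset.card_le_card (fun x hx => ?_)).trans ((Finset.card_union_le _ _).trans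
      (Nat.add_le_add_right (Finset.card_union_le _ _) _))
    simp only [exs, Finset.mem_filter, Finset.mem_univ, true_and] at hx
    simp only [Finset.mem_union, Finset.mem_filter, Finset.mem_sdiff, Finset.mem_compl]
    by_cases hxU : x ∈ U
    · exact Or.inl (Or.inl ⟨hxU, hx.1⟩)
    · rcases hx.2 with h | h | h
      · exact absurd h hxU
      · exact Or.inl (Or.inr ⟨⟨h, hxU⟩, hx.1⟩)
      · exact Or.inr ⟨hxU, hx.1, h⟩
  refine (Finset.sum_le_sum h1).trans ?_
  rw [Finset.sum_add_distrib, Finset.sum_add_distrib]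
  refine Nat.add_le_add (Nat.add_le_add ?_ ?_) ?_
  · have : ∑ u ∈ U, (U.filter (fun x => (gr ω).Adj u x)).card =
        ((U ×ˢ U).filter (fun q => (gr ω).Adj q.1 q.2)).card := by
      rw [Finset.card_filter, Finset.sum_product]
      exact Finset.sum_congr rfl fun u _ => Finset.card_filter _ _
    rw [this]
    refine Finset.card_le_mul_card_image_of_maps_to (f := fun q => s(q.1, q.2))
      (t := U.sym2.filter (fun e => ω e = true)) (fun q hq => ?_) 2 (fun e _ => ?_)
    · obtain ⟨hq1, hq2⟩ := Finset.mem_filter.1 hq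
      exact Finset.mem_filter.2 ⟨Finset.mk_mem_sym2_iff.2 (Finset.mem_product.1 hq1), hq2.2⟩
    · induction e with
      | _ a b =>
        refine (Finset.card_le_card (t := {(a, b), (b, a)}) fun q hq => ?_).trans
          Finset.card_le_two
        obtain ⟨x, y⟩ := q
        have h := (Finset.mem_filter.1 hq).2
        rcases Sym2.eq_iff.1 h with ⟨rfl, rfl⟩ | ⟨rfl, rfl⟩ <;> simp
  · have : ∑ u ∈ U, ((B \ U).filter (fun x => (gr ω).Adj u x)).card =
        ((U ×ˢ (B \ U)).filter (fun q => (gr ω).Adj q.1 q.2)).card := by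
      rw [Finset.card_filter, Finset.sum_product]
      exact Finset.sum_congr rfl fun u _ => Finset.card_filter _ _
    rw [this]
    refine Finset.card_le_card_of_injOn (fun q => s(q.1, q.2)) (fun q hq => ?_) ?_
    · obtain ⟨hq1, hq2⟩ := Finset.mem_filter.1 hq
      exact Finset.mem_coe.2 (Finset.mem_filter.2 ⟨Finset.mem_image_of_mem _ hq1, hq2.2⟩)
    · rintro ⟨a, b⟩ hq ⟨a', b'⟩ hq' h
      have h1 := Finset.mem_product.1 (Finset.mem_filter.1 (Finset.mem_coe.1 hq)).1
      have h2 := Finset.mem_product.1 (Finset.mem_filter.1 (Finset.mem_coe.1 hq')).1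
      rcases Sym2.eq_iff.1 h with ⟨h3, h4⟩ | ⟨h3, _⟩
      · exact Prod.ext h3 h4
      · exact absurd (h3 ▸ h1.1) (Finset.mem_sdiff.1 h2.2).2
  · simp_rw [Finset.card_filter]
    rw [Finset.sum_comm]
    refine Finset.sum_le_sum fun w hw => ?_
    rw [← Finset.card_filter]
    have hc : cnt (spokes w U) ω = (U.filter (fun u => (gr ω).Adj w u)).card :=
      cnt_spokes (Finset.mem_compl.1 hw) ω
    rcases (U.filter (fun u => (gr ω).Adj u w ∧ ∃ u' ∈ U, u' ≠ u ∧
      (gr ω).Adj u' w)).eq_empty_or_nonempty with h | ⟨u, hu⟩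
    · rw [h]; simp
    · obtain ⟨huU, huw, u', hu', hne, hu'w⟩ := Finset.mem_filter.1 hu
      have h2 : 2 ≤ cnt (spokes w U) ω := by
        rw [hc, ← Finset.card_pair hne]
        refine Finset.card_le_card fun x hx => ?_
        rcases Finset.mem_insert.1 hx with rfl | hx
        · exact Finset.mem_filter.2 ⟨hu', hu'w.symm⟩
        · rw [Finset.mem_singleton.1 hx]; exact Finset.mem_filter.2 ⟨huU, huw.symm⟩
      unfold dbl
      rw [if_pos h2, hc]
      refine Finset.card_le_card fun x hx => ?_
      obtain ⟨hxU, hxw, _⟩ := Finset.mem_filter.1 hx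
      exact Finset.mem_filter.2 ⟨hxU, hxw.symm⟩

lemma cnt_sdiff_ge (S E : Finset (Sym2 (Fin n))) (ω : Sym2 (Fin n) → Bool) :
    cnt S ω ≤ E.card + cnt (S \ E) ω := by
  refine (Finset.card_le_card fun e he => ?_).trans (Finset.card_union_le E _)
  obtain ⟨h1, h2⟩ := Finset.mem_filter.1 he
  by_cases h : e ∈ E
  · exact Finset.mem_union_left _ h
  · exact Finset.mem_union_right _ (Finset.mem_filter.2 ⟨Finset.mem_sdiff.2 ⟨h1, h⟩, h2⟩)

/-- If there are few exceptional edges, a compatible configuration has many pairs of vertices that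
look alike. -/
lemma exists_close {k : ℕ} {U : Finset (Fin n)} {φ ψ : Fin k → Fin n}
    (hφ : Function.Injective φ) (hψ : Function.Injective ψ) (hφU : ∀ i, φ i ∈ U)
    (hψU : ∀ i, ψ i ∈ U) (J : Finset (Fin k)) (hJ : ∀ i ∈ J, ∀ j ∈ J, φ i ≠ ψ j)
    (E : Finset (Sym2 (Fin n))) (hEc : E.card ≤ 18 * J.card) (ω : Sym2 (Fin n) → Bool)
    (hc : Compatible (gr ω) φ ψ) (χ : ℕ → ℕ)
    (h1 : cnt (U.sym2 \ E) ω ≤ 40 * J.card)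
    (h2 : cnt (badPairs U (del (gr ω) U)) ω ≤ 40 * J.card)
    (h3 : ∑ w ∈ Uᶜ, dbl U ω w ≤ 40 * J.card) :
    ∃ J' ∈ J.powerset, J.card ≤ 2 * J'.card ∧
      ∀ i ∈ J', Close U (del (gr ω) U) χ 392 ω (φ i) (ψ i) := by
  set ex : Fin n → ℕ := fun u => (exs (gr ω) U u).card with hex
  have hsum : ∑ u ∈ U, ex u ≤ 196 * J.card := by
    have := sum_exs U ω
    have := cnt_sdiff_ge U.sym2 E ω
    simp only [hex]
    omega
  have hJs : ∑ i ∈ J, (ex (φ i) + ex (ψ i)) ≤ ∑ u ∈ U, ex u := by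
    have hd : Disjoint (J.image φ) (J.image ψ) := by
      refine Finset.disjoint_left.2 fun x hx hx' => ?_
      obtain ⟨i, hi, rfl⟩ := Finset.mem_image.1 hx
      obtain ⟨j, hj, h⟩ := Finset.mem_image.1 hx'
      exact hJ i hi j hj h.symm
    rw [Finset.sum_add_distrib, ← Finset.sum_image (f := ex) (g := φ) (fun a _ b _ h => hφ h),
      ← Finset.sum_image (f := ex) (g := ψ) (fun a _ b _ h => hψ h), ← Finset.sum_union hd]
    refine Finset.sum_le_sum_of_subset fun x hx => ?_
    rcases Finset.mem_union.1 hx with hx | hx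
    · obtain ⟨i, _, rfl⟩ := Finset.mem_image.1 hx; exact hφU i
    · obtain ⟨i, _, rfl⟩ := Finset.mem_image.1 hx; exact hψU i
  set J' := J.filter (fun i => ex (φ i) + ex (ψ i) ≤ 392) with hJ'
  refine ⟨J', Finset.mem_powerset.2 (Finset.filter_subset _ _), ?_, fun i hi t _ => ?_⟩
  · have h4 : 393 * (J.filter (fun i => ¬ ex (φ i) + ex (ψ i) ≤ 392)).card ≤
        ∑ i ∈ J, (ex (φ i) + ex (ψ i)) := by
      refine le_trans ?_ (Finset.sum_le_sum_of_subset (Finset.filter_subset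
        (fun i => ¬ ex (φ i) + ex (ψ i) ≤ 392) J))
      rw [mul_comm, ← smul_eq_mul]
      refine Finset.card_nsmul_le_sum _ _ _ fun i hi => ?_
      have := (Finset.mem_filter.1 hi).2
      omega
    have h5 : J'.card + (J.filter (fun i => ¬ ex (φ i) + ex (ψ i) ≤ 392)).card = J.card :=
      Finset.card_filter_add_card_filter_not _
    omega
  · have h4 := (Finset.mem_filter.1 hi).2
    have h5 := Nt_close hφU hψU hc χ t i
    rw [Nt_eq_cnt (hφU i), Nt_eq_cnt (hψU i)] at h5
    simp only [hex] at h4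
    omega

lemma ite_le_four {P A B C D : Prop} [Decidable P] [Decidable A] [Decidable B] [Decidable C]
    [Decidable D] (h : P → A ∨ B ∨ C ∨ D) : (if P then (1 : ℝ) else 0) ≤
      (((if A then 1 else 0) + (if B then 1 else 0)) + (if C then 1 else 0)) +
        (if D then 1 else 0) := by
  by_cases hP : P
  · rcases h hP with h | h | h | h <;> simp only [hP, h, if_true] <;> split_ifs <;> norm_num
  · simp only [hP, if_false]; split_ifs <;> norm_num

/-- The numerical conditions on `n`, `p` and the order bound `L` under which the estimate for a
single configuration holds; `d` stands for `n * p`. -/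
structure Large (n : ℕ) (p d L : ℝ) : Prop where
  p_pos : 0 < p
  p_le : p ≤ 1 / 2
  d_eq : d = n * p
  d_big : 785 ^ 2 * 64 * 640 ≤ d
  d_exp : Real.exp 18 ≤ d ^ 4
  d_pow : 2 * (785 ^ 2 * 64 * 640) ^ 40 ≤ d ^ 4
  inside : (2 * L) ^ 2 * p * d ≤ 1
  double : n * (3 * (2 * L * p * d) ^ 2) ≤ 1

/-- For a fixed pair of sequences, containing the edges `E` and being compatible is hardly more
likely than having `E` and, independently, an event of probability `d ^ (-4 k)`. -/
lemma config_le {d L : ℝ} (hl : Large n p d L) {k : ℕ} (hk : 1 ≤ k) (hkL : (k : ℝ) ≤ L)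
    {φ ψ : Fin k → Fin n} (hφ : Function.Injective φ) (hψ : Function.Injective ψ)
    {U : Finset (Fin n)} (hφU : ∀ i, φ i ∈ U) (hψU : ∀ i, ψ i ∈ U) (hUc : U.card ≤ 2 * k)
    {E : Finset (Sym2 (Fin n))} (hE : E ⊆ U.sym2) (hEc : E.card ≤ 2 * k)
    (J : Finset (Fin k)) (hJ : ∀ i ∈ J, ∀ j ∈ J, φ i ≠ ψ j) (hkJ : k ≤ 9 * J.card) :
    EE p (fun ω => if (∀ e ∈ E, ω e = true) ∧ HG d (del (gr ω) U) U ∧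
      Compatible (gr ω) φ ψ then 1 else 0) ≤ p ^ E.card * (4 * (1 / d ^ 4) ^ k) := by
  obtain ⟨hp0, hp2, hdn, hK, hd18, hdK, hin, hdbl⟩ := hl
  have hd0 : 0 < d := by linarith
  have hd1 : 1 ≤ d := by linarith
  have hp1 : p ≤ 1 := by linarith
  have hJ1 : 1 ≤ J.card := by omega
  set r := J.card with hr
  have hL0 : 0 < L := lt_of_lt_of_le (by exact_mod_cast hk) hkL
  have hUL : (U.card : ℝ) ≤ 2 * L := by
    have : (U.card : ℝ) ≤ 2 * k := by exact_mod_cast hUc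
    linarith
  -- a colouring is fixed for every graph outside `U`
  have hχex : ∀ H : SimpleGraph (Fin n), ∃ χ : ℕ → ℕ, HG d H U → ∀ t < 160,
      (n : ℝ) / 640 ≤ (cls U H χ t).card := by
    intro H
    by_cases h : HG d H U
    · obtain ⟨χ, hχ⟩ := h.2; exact ⟨χ, fun _ => hχ⟩
    · exact ⟨fun _ => 0, fun h' => absurd h' h⟩
  choose χ hχ using hχex
  set κ := 785 * (8 / √(d / 640)) with hκ
  have hκ0 : 0 ≤ κ := by positivity
  have hκsq : κ ^ 2 = 785 ^ 2 * 64 * 640 / d := by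
    rw [hκ, mul_pow, div_pow, Real.sq_sqrt (by positivity)]; field_simp; norm_num
  have hκ1 : κ ≤ 1 := by
    refine (sq_le_one_iff₀ hκ0).1 ?_
    rw [hκsq]; exact (div_le_one hd0).2 hK
  -- the four unlikely events
  have Z1 := tail_inside hp0.le hp1 E U hd1 (40 * r) (by
    calc (U.card : ℝ) ^ 2 * p * d ≤ (2 * L) ^ 2 * p * d := by gcongr
      _ ≤ 1 := hin)
  have Z2 := tail_bad hp0.le hp1 hE (d := d) (x := d) (b := 18 * r) (by
    have : (n : ℝ) / d ^ 2 * p * d = 1 := by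
      have : (n : ℝ) / d ^ 2 * p * d = (n * p) / d := by field_simp
      rw [this, ← hdn, div_self hd0.ne']
    exact this.le) hd1 (40 * r) (by
    have h : U.card ≤ 18 * r := by omega
    exact_mod_cast h)
  have Z3 := tail_dbl hp0.le hp1 hE hd1 (y := max 1 (1 / (2 * L * p * d))) (le_max_left _ _)
    (40 * r)
  have Z4 := tail_close hp0 hp2 hE hφ hψ hφU hψU J hJ hd0 hdn le_rfl hκ1 χ hχ
  rw [← hr] at Z4
  have hy : 1 ≤ 1 / (2 * L * p * d) := by
    rw [le_div_iff₀ (by positivity), one_mul]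
    have hn : (1 : ℝ) ≤ n := by
      rcases Nat.eq_zero_or_pos n with h | h
      · rw [h] at hdn; simp at hdn; linarith
      · exact_mod_cast h
    have hz : 0 ≤ (2 * L * p * d) ^ 2 := sq_nonneg _
    refine (sq_le_one_iff₀ (by positivity)).1 ?_
    nlinarith
  rw [max_eq_right hy] at Z3
  specialize Z3 (by
    calc (U.card : ℝ) * p * (d * (1 / (2 * L * p * d))) ≤
        (2 * L) * p * (d * (1 / (2 * L * p * d))) := by gcongr
      _ = 1 := by field_simp
      _ ≤ 1 := le_rfl) (by
    rw [one_div, inv_pow, div_inv_eq_mul]; exact hdbl)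
  -- each of the four contributes at most `d ^ (-36 r)`
  have hq : ∀ c : ℝ, c ≤ Real.exp 18 ^ r → c / d ^ (40 * r) ≤ (1 / d ^ 4) ^ k := by
    intro c hc
    have h1 : c ≤ (d ^ 4) ^ r := hc.trans (by gcongr)
    rw [one_div, inv_pow, div_le_iff₀ (by positivity), ← div_eq_inv_mul, le_div_iff₀ (by positivity)]
    calc c * (d ^ 4) ^ k ≤ (d ^ 4) ^ r * (d ^ 4) ^ (9 * r) := by
          gcongr
          exact one_le_pow₀ hd1
      _ = d ^ (40 * r) := by ring
  have hexp1 : Real.exp 1 ≤ Real.exp 18 ^ r := by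
    rw [← Real.exp_nat_mul]
    refine Real.exp_le_exp.2 ?_
    have : (1 : ℝ) ≤ r := by exact_mod_cast hJ1
    linarith
  have hexp2 : Real.exp (18 * r) ≤ Real.exp 18 ^ r := by
    rw [← Real.exp_nat_mul, mul_comm]
  have q1 := hq _ hexp1
  have q2 := hq _ hexp2
  have q4 : (2 : ℝ) ^ r * κ ^ (80 * r) ≤ (1 / d ^ 4) ^ k := by
    have h1 : (2 : ℝ) ^ r * κ ^ (80 * r) = (2 * (785 ^ 2 * 64 * 640) ^ 40) ^ r / d ^ (40 * r) := by
      rw [show 80 * r = 2 * (40 * r) by ring, pow_mul, hκsq, div_pow, pow_mul _ 40 r]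
      generalize (785 ^ 2 * 64 * 640 : ℝ) = K
      rw [mul_pow]; ring
    rw [h1, one_div, inv_pow, div_le_iff₀ (by positivity), ← div_eq_inv_mul,
      le_div_iff₀ (by positivity)]
    calc (2 * (785 ^ 2 * 64 * 640 : ℝ) ^ 40) ^ r * (d ^ 4) ^ k ≤
          (d ^ 4) ^ r * (d ^ 4) ^ (9 * r) := by
          gcongr
          exact one_le_pow₀ hd1
      _ = d ^ (40 * r) := by ring
  have hpE : 0 ≤ p ^ E.card := by positivity
  have hpt : ∀ ω : Sym2 (Fin n) → Bool, (if (∀ e ∈ E, ω e = true) ∧ HG d (del (gr ω) U) U ∧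
      Compatible (gr ω) φ ψ then (1 : ℝ) else 0) ≤
      (((if (∀ e ∈ E, ω e = true) ∧ 40 * r ≤ cnt (U.sym2 \ E) ω then 1 else 0) +
      (if (∀ e ∈ E, ω e = true) ∧ (HG d (del (gr ω) U) U ∧
        40 * r ≤ cnt (badPairs U (del (gr ω) U)) ω) then 1 else 0)) +
      (if (∀ e ∈ E, ω e = true) ∧ 40 * r ≤ ∑ w ∈ Uᶜ, dbl U ω w then 1 else 0)) +
      (if (∀ e ∈ E, ω e = true) ∧ (HG d (del (gr ω) U) U ∧
      ∃ J' ∈ J.powerset, r ≤ 2 * J'.card ∧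
        ∀ i ∈ J', Close U (del (gr ω) U) (χ (del (gr ω) U)) 392 ω (φ i) (ψ i)) then 1 else 0) := by
    intro ω
    refine ite_le_four ?_
    rintro ⟨hEω, hHG, hcomp⟩
    by_cases a1 : 40 * r ≤ cnt (U.sym2 \ E) ω
    · exact Or.inl ⟨hEω, a1⟩
    by_cases a2 : 40 * r ≤ cnt (badPairs U (del (gr ω) U)) ω
    · exact Or.inr (Or.inl ⟨hEω, hHG, a2⟩)
    by_cases a3 : 40 * r ≤ ∑ w ∈ Uᶜ, dbl U ω w
    · exact Or.inr (Or.inr (Or.inl ⟨hEω, a3⟩))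
    exact Or.inr (Or.inr (Or.inr ⟨hEω, hHG, exists_close hφ hψ hφU hψU J hJ E (by omega) ω hcomp
      (χ (del (gr ω) U)) (by omega) (by omega) (by omega)⟩))
  refine (EE_mono hp0.le hp1 hpt).trans ?_
  rw [EE_add, EE_add, EE_add]
  calc _ ≤ p ^ E.card * (Real.exp 1 / d ^ (40 * r)) + p ^ E.card * (Real.exp (18 * r) / d ^ (40 * r)) +
        p ^ E.card * (Real.exp 1 / d ^ (40 * r)) + p ^ E.card * (2 ^ r * κ ^ (80 * r)) := by
        gcongr
    _ ≤ p ^ E.card * (1 / d ^ 4) ^ k + p ^ E.card * (1 / d ^ 4) ^ k +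
        p ^ E.card * (1 / d ^ 4) ^ k + p ^ E.card * (1 / d ^ 4) ^ k := by gcongr
    _ = _ := by ring

end config

/-! ### Counting pairs of paths and cycles -/

section count
variable {n : ℕ}

/-- A set of indices without confluences contains a third of its elements on which all values of
`φ` and `ψ` are distinct. -/
lemma exists_conflict_free {k : ℕ} {φ ψ : Fin k → Fin n} (hφ : Function.Injective φ)
    (hψ : Function.Injective ψ) (I : Finset (Fin k)) (hI : ∀ i ∈ I, φ i ≠ ψ i) :
    ∃ J : Finset (Fin k), (∀ i ∈ J, ∀ j ∈ J, φ i ≠ ψ j) ∧ I.card ≤ 3 * J.card := by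
  obtain ⟨J, hJm, hmax⟩ := Finset.exists_max_image
    (I.powerset.filter (fun J => ∀ i ∈ J, ∀ j ∈ J, φ i ≠ ψ j)) Finset.card
    ⟨∅, Finset.mem_filter.2 ⟨Finset.empty_mem_powerset I, by simp⟩⟩
  obtain ⟨hJI, hJ⟩ := Finset.mem_filter.1 hJm
  rw [Finset.mem_powerset] at hJI
  refine ⟨J, hJ, ?_⟩
  have hsub : I ⊆ (J ∪ Finset.univ.filter (fun x => φ x ∈ J.image ψ)) ∪
      Finset.univ.filter (fun x => ψ x ∈ J.image φ) := by
    intro x hx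
    by_contra hcon
    simp only [Finset.mem_union, Finset.mem_filter, Finset.mem_univ, true_and, not_or,
      Finset.mem_image, not_exists, not_and] at hcon
    obtain ⟨⟨hxJ, h1⟩, h2⟩ := hcon
    have h3 := hmax (insert x J) (Finset.mem_filter.2 ⟨Finset.mem_powerset.2
      (Finset.insert_subset hx hJI), fun i hi j hj => by
        rcases Finset.mem_insert.1 hi with hix | hi' <;>
          rcases Finset.mem_insert.1 hj with hjx | hj'
        · rw [hix, hjx]; exact hI x hx
        · rw [hix]; exact fun h => h1 j hj' h.symm
        · rw [hjx]; exact fun h => h2 i hi' h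
        · exact hJ i hi' j hj'⟩)
    rw [Finset.card_insert_of_notMem hxJ] at h3
    omega
  have h1 : (Finset.univ.filter (fun x => φ x ∈ J.image ψ)).card ≤ J.card :=
    (Finset.card_le_card_of_injOn φ (fun x hx => (Finset.mem_filter.1 hx).2)
      (fun _ _ _ _ h => hφ h)).trans Finset.card_image_le
  have h2 : (Finset.univ.filter (fun x => ψ x ∈ J.image φ)).card ≤ J.card :=
    (Finset.card_le_card_of_injOn ψ (fun x hx => (Finset.mem_filter.1 hx).2)
      (fun _ _ _ _ h => hψ h)).trans Finset.card_image_le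
  have h3 := (Finset.card_le_card hsub).trans ((Finset.card_union_le _ _).trans
    (Nat.add_le_add_right (Finset.card_union_le _ _) _))
  omega

/-- The edges of the path through `φ 0, …, φ l`. -/
noncomputable def pe {l : ℕ} (φ : Fin (l + 1) → Fin n) : Finset (Sym2 (Fin n)) :=
  Finset.univ.image (fun j : Fin l => s(φ j.castSucc, φ j.succ))

/-- The edges of the closed walk through `φ 0, …, φ l, φ 0`. -/
noncomputable def ce {l : ℕ} (φ : Fin (l + 1) → Fin n) : Finset (Sym2 (Fin n)) :=
  Finset.univ.image (fun i : Fin (l + 1) => s(φ i, φ (finRotate (l + 1) i)))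

lemma finRotate_castSucc' {l : ℕ} (j : Fin l) : finRotate (l + 1) j.castSucc = j.succ := by
  rw [finRotate_apply]; exact Fin.coeSucc_eq_succ

lemma pe_subset_ce {l : ℕ} (φ : Fin (l + 1) → Fin n) : pe φ ⊆ ce φ := by
  intro e he
  obtain ⟨j, _, rfl⟩ := Finset.mem_image.1 he
  exact Finset.mem_image.2 ⟨j.castSucc, Finset.mem_univ _, by rw [finRotate_castSucc']⟩

lemma pe_inj {l : ℕ} {φ : Fin (l + 1) → Fin n} (hφ : Function.Injective φ) :
    Function.Injective (fun j : Fin l => s(φ j.castSucc, φ j.succ)) := by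
  intro i j h
  rcases Sym2.eq_iff.1 h with ⟨h1, _⟩ | ⟨h1, h2⟩
  · exact Fin.castSucc_injective _ (hφ h1)
  · have h1 := congrArg Fin.val (hφ h1)
    have h2 := congrArg Fin.val (hφ h2)
    simp at h1 h2; omega

lemma ce_inj {l : ℕ} (hl : 2 ≤ l) {φ : Fin (l + 1) → Fin n} (hφ : Function.Injective φ) :
    Function.Injective (fun i : Fin (l + 1) => s(φ i, φ (finRotate (l + 1) i))) := by
  intro i j h
  rcases Sym2.eq_iff.1 h with ⟨h1, _⟩ | ⟨h1, h2⟩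
  · exact hφ h1
  · have h1 := hφ h1
    have h2 := hφ h2
    rw [finRotate_apply] at h1 h2
    have h3 := congrArg Fin.val h1
    have h4 := congrArg Fin.val h2
    rw [Fin.val_add_one] at h3 h4
    have := i.isLt
    have := j.isLt
    have h5 : ∀ x : Fin (l + 1), x = Fin.last l ↔ (x : ℕ) = l := fun x => by
      rw [Fin.ext_iff, Fin.val_last]
    simp only [h5] at h3 h4
    split_ifs at h3 h4 <;> omega

/-- Every vertex lies on at most two edges of a cycle. -/
lemma ce_deg {l : ℕ} {φ : Fin (l + 1) → Fin n} (hφ : Function.Injective φ) (x : Fin n) :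
    (Finset.univ.filter (fun y => s(y, x) ∈ ce φ)).card ≤ 2 := by
  have hsub : Finset.univ.filter (fun y => s(y, x) ∈ ce φ) ⊆
      (Finset.univ.filter (fun i => φ (finRotate (l + 1) i) = x)).image φ ∪
      (Finset.univ.filter (fun i => φ i = x)).image (fun i => φ (finRotate (l + 1) i)) := by
    intro y hy
    obtain ⟨i, _, hi⟩ := Finset.mem_image.1 (Finset.mem_filter.1 hy).2
    rcases Sym2.eq_iff.1 hi with ⟨h1, h2⟩ | ⟨h1, h2⟩
    · exact Finset.mem_union_left _ (Finset.mem_image.2 ⟨i, by simpa using h2, h1⟩)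
    · exact Finset.mem_union_right _ (Finset.mem_image.2 ⟨i, by simpa using h1, h2⟩)
  have h1 : (Finset.univ.filter (fun i => φ (finRotate (l + 1) i) = x)).card ≤ 1 :=
    Finset.card_le_one.2 fun a ha b hb => (finRotate (l + 1)).injective
      (hφ ((Finset.mem_filter.1 ha).2.trans (Finset.mem_filter.1 hb).2.symm))
  have h2 : (Finset.univ.filter (fun i => φ i = x)).card ≤ 1 :=
    Finset.card_le_one.2 fun a ha b hb =>
      hφ ((Finset.mem_filter.1 ha).2.trans (Finset.mem_filter.1 hb).2.symm)
  have h3 := (Finset.card_le_card hsub).trans (Finset.card_union_le _ _)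
  have h4 := (Finset.card_image_le (s := Finset.univ.filter
    (fun i => φ (finRotate (l + 1) i) = x)) (f := φ)).trans h1
  have h5 := (Finset.card_image_le (s := Finset.univ.filter (fun i => φ i = x))
    (f := fun i => φ (finRotate (l + 1) i))).trans h2
  omega

/-- The cost of using the edge `s(x, y)` when the edges of `E` are already paid for. -/
noncomputable def wt (p : ℝ) (E : Finset (Sym2 (Fin n))) (x y : Fin n) : ℝ :=
  if s(x, y) ∈ E then 1 else p

lemma wt_nonneg {p : ℝ} (h0 : 0 ≤ p) (E : Finset (Sym2 (Fin n))) (x y : Fin n) :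
    0 ≤ wt p E x y := by
  unfold wt; split_ifs <;> linarith

lemma sum_wt_le {p : ℝ} (h0 : 0 ≤ p) {E : Finset (Sym2 (Fin n))} (y : Fin n)
    (hE : (Finset.univ.filter (fun x => s(x, y) ∈ E)).card ≤ 2) :
    ∑ x, wt p E x y ≤ n * p + 2 := by
  calc ∑ x, wt p E x y ≤ ∑ x, (p + if s(x, y) ∈ E then 1 else 0) := by
        refine Finset.sum_le_sum fun x _ => ?_
        unfold wt; split_ifs <;> linarith
    _ = n * p + (Finset.univ.filter (fun x => s(x, y) ∈ E)).card := by
        rw [Finset.sum_add_distrib, Finset.sum_boole]; simp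
    _ ≤ _ := by
        gcongr; exact_mod_cast hE

lemma pow_card_union {α : Type*} [Fintype α] {p : ℝ} (E : Finset (Sym2 (Fin n)))
    {f : α → Sym2 (Fin n)} (hf : Function.Injective f) :
    p ^ (E ∪ Finset.univ.image f).card = p ^ E.card * ∏ a, if f a ∈ E then 1 else p := by
  rw [← Finset.union_sdiff_self_eq_union, Finset.card_union_of_disjoint Finset.disjoint_sdiff,
    pow_add, Finset.prod_ite, Finset.prod_const_one, one_mul, Finset.prod_const]
  congr 2
  rw [← Finset.card_image_of_injective _ hf]
  congr 1
  ext e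
  simp only [Finset.mem_sdiff, Finset.mem_image, Finset.mem_univ, true_and, Finset.mem_filter]
  constructor
  · rintro ⟨⟨a, rfl⟩, h⟩; exact ⟨a, h, rfl⟩
  · rintro ⟨a, h, rfl⟩; exact ⟨⟨a, rfl⟩, h⟩

/-- The transfer-matrix bound for weighted walks. -/
lemma sum_chain {V : Type*} [Fintype V] {w : V → V → ℝ} (hw : ∀ x y, 0 ≤ w x y) {r : ℝ}
    (hr : ∀ y, ∑ x, w x y ≤ r) {g : V → ℝ} (hg : ∀ y, 0 ≤ g y) (m : ℕ) :
    ∑ ψ : Fin (m + 1) → V, (∏ j : Fin m, w (ψ j.castSucc) (ψ j.succ)) * g (ψ (Fin.last m)) ≤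
      r ^ m * ∑ y, g y := by
  induction m with
  | zero =>
    rw [← (Equiv.funUnique (Fin 1) V).symm.sum_comp]
    simp
  | succ m ih =>
    rw [← (Fin.consEquiv (fun _ : Fin (m + 2) => V)).sum_comp, Fintype.sum_prod_type_right]
    have hnn : ∀ ψ : Fin (m + 1) → V,
        0 ≤ (∏ j : Fin m, w (ψ j.castSucc) (ψ j.succ)) * g (ψ (Fin.last m)) :=
      fun ψ => mul_nonneg (Finset.prod_nonneg fun _ _ => hw _ _) (hg _)
    have hstep : ∀ (ψ : Fin (m + 1) → V) (a : V),
        (∏ j : Fin (m + 1), w ((Fin.consEquiv (fun _ : Fin (m + 2) => V)) (a, ψ) j.castSucc)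
          ((Fin.consEquiv (fun _ : Fin (m + 2) => V)) (a, ψ) j.succ)) *
          g ((Fin.consEquiv (fun _ : Fin (m + 2) => V)) (a, ψ) (Fin.last (m + 1))) =
        w a (ψ 0) * ((∏ j : Fin m, w (ψ j.castSucc) (ψ j.succ)) * g (ψ (Fin.last m))) := by
      intro ψ a
      rw [Fin.prod_univ_succ]
      simp only [Fin.consEquiv, Equiv.coe_fn_mk, Fin.castSucc_zero, Fin.cons_zero, Fin.cons_succ,
        ← Fin.succ_castSucc, ← Fin.succ_last]
      ring
    simp_rw [hstep, ← Finset.sum_mul]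
    have hr0 : ∀ y : V, 0 ≤ r := fun y => (Finset.sum_nonneg fun x _ => hw x y).trans (hr y)
    calc _ ≤ ∑ ψ : Fin (m + 1) → V,
          r * ((∏ j : Fin m, w (ψ j.castSucc) (ψ j.succ)) * g (ψ (Fin.last m))) :=
          Finset.sum_le_sum fun ψ _ => mul_le_mul_of_nonneg_right (hr _) (hnn ψ)
      _ = r * ∑ ψ : Fin (m + 1) → V,
          (∏ j : Fin m, w (ψ j.castSucc) (ψ j.succ)) * g (ψ (Fin.last m)) := by
          rw [Finset.mul_sum]
      _ ≤ r * (r ^ m * ∑ y, g y) := by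
          rcases isEmpty_or_nonempty V with hV | ⟨⟨y⟩⟩
          · simp
          · exact mul_le_mul_of_nonneg_left ih (hr0 y)
      _ = _ := by ring

/-- The expected number of pairs of cycles. -/
lemma sum_cycles {p : ℝ} (h0 : 0 ≤ p) {l : ℕ} (hl : 2 ≤ l) :
    ∑ φ : Fin (l + 1) → Fin n, ∑ ψ : Fin (l + 1) → Fin n,
      (if Function.Injective φ ∧ Function.Injective ψ then p ^ (ce φ ∪ ce ψ).card else 0) ≤
      (n * p) ^ (l + 1) * ((n * p + 2) ^ l * (n * p + (l + 1))) := by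
  have hφ : ∀ φ : Fin (l + 1) → Fin n, ∑ ψ : Fin (l + 1) → Fin n,
      (if Function.Injective φ ∧ Function.Injective ψ then p ^ (ce φ ∪ ce ψ).card else 0) ≤
      p ^ (l + 1) * ((n * p + 2) ^ l * (n * p + (l + 1))) := by
    intro φ
    by_cases hφ : Function.Injective φ
    swap
    · simp only [hφ, false_and, if_false, Finset.sum_const_zero]; positivity
    set g : Fin n → ℝ := fun y => p + if y ∈ Finset.univ.image φ then 1 else 0 with hg
    have hcard : (ce φ).card = l + 1 := by
      unfold ce; rw [Finset.card_image_of_injective _ (ce_inj hl hφ)]; simp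
    have hterm : ∀ ψ : Fin (l + 1) → Fin n,
        (if Function.Injective φ ∧ Function.Injective ψ then p ^ (ce φ ∪ ce ψ).card else 0) ≤
        p ^ (l + 1) * ((∏ j : Fin l, wt p (ce φ) (ψ j.castSucc) (ψ j.succ)) *
          g (ψ (Fin.last l))) := by
      intro ψ
      have hnn : 0 ≤ ∏ j : Fin l, wt p (ce φ) (ψ j.castSucc) (ψ j.succ) :=
        Finset.prod_nonneg fun _ _ => wt_nonneg h0 _ _ _
      have hg0 : 0 ≤ g (ψ (Fin.last l)) := by simp only [hg]; split_ifs <;> linarith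
      split_ifs with h
      swap
      · positivity
      have h2 := pow_card_union (p := p) (ce φ) (ce_inj hl h.2)
      rw [hcard, Fin.prod_univ_castSucc] at h2
      change p ^ (ce φ ∪ ce ψ).card = _ at h2
      rw [h2]
      simp only [finRotate_castSucc']
      refine mul_le_mul_of_nonneg_left (mul_le_mul_of_nonneg_left ?_ hnn) (by positivity)
      simp only [hg]
      split_ifs with h3 h4 h4 <;> try linarith
      obtain ⟨i, _, hi⟩ := Finset.mem_image.1 h3
      refine absurd ?_ h4
      rcases Sym2.eq_iff.1 hi with ⟨h5, _⟩ | ⟨_, h5⟩ <;>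
        exact Finset.mem_image.2 ⟨_, Finset.mem_univ _, h5⟩
    refine (Finset.sum_le_sum fun ψ _ => hterm ψ).trans ?_
    rw [← Finset.mul_sum]
    refine mul_le_mul_of_nonneg_left ((sum_chain (wt_nonneg h0 _)
      (fun y => sum_wt_le h0 y (ce_deg hφ y)) (g := g)
      (fun y => by simp only [hg]; split_ifs <;> linarith) l).trans ?_) (by positivity)
    refine mul_le_mul_of_nonneg_left ?_ (by positivity)
    simp only [hg]
    rw [Finset.sum_add_distrib, Finset.sum_boole]
    have : (Finset.univ.filter (fun y => y ∈ Finset.univ.image φ)).card ≤ l + 1 := by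
      rw [Finset.filter_univ_mem]; exact Finset.card_image_le.trans (by simp)
    have : ((Finset.univ.filter (fun y => y ∈ Finset.univ.image φ)).card : ℝ) ≤ l + 1 := by
      exact_mod_cast this
    simp only [Finset.sum_const, Finset.card_univ, Fintype.card_fin, nsmul_eq_mul]
    linarith
  refine (Finset.sum_le_sum fun φ _ => hφ φ).trans_eq ?_
  rw [Finset.sum_const, nsmul_eq_mul, Finset.card_univ, Fintype.card_fun, Fintype.card_fin,
    Fintype.card_fin, mul_pow]
  push_cast; ring

/-- The expected number of pairs of paths that share both endpoints but not the first edge. -/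
lemma sum_paths {p : ℝ} (h0 : 0 ≤ p) (m : ℕ) :
    ∑ φ : Fin (m + 2) → Fin n, ∑ ψ : Fin (m + 2) → Fin n,
      (if Function.Injective φ ∧ Function.Injective ψ ∧ φ 0 = ψ 0 ∧ φ (Fin.last _) = ψ (Fin.last _) ∧
        φ 1 ≠ ψ 1 then p ^ (pe φ ∪ pe ψ).card else 0) ≤
      (n * p) ^ (m + 2) * (n * p + 2) ^ m := by
  have hφ : ∀ φ : Fin (m + 2) → Fin n, ∑ ψ : Fin (m + 2) → Fin n,
      (if Function.Injective φ ∧ Function.Injective ψ ∧ φ 0 = ψ 0 ∧ φ (Fin.last _) = ψ (Fin.last _) ∧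
        φ 1 ≠ ψ 1 then p ^ (pe φ ∪ pe ψ).card else 0) ≤
      p ^ (m + 2) * (n * p + 2) ^ m := by
    intro φ
    by_cases hφ : Function.Injective φ
    swap
    · simp only [hφ, false_and, if_false, Finset.sum_const_zero]; positivity
    set g : Fin n → ℝ := fun y => if y = φ (Fin.last _) then 1 else 0 with hg
    have hg0 : ∀ y, 0 ≤ g y := fun y => by simp only [hg]; split_ifs <;> norm_num
    have hcard : (pe φ).card = m + 1 := by
      unfold pe; rw [Finset.card_image_of_injective _ (pe_inj hφ)]; simp
    rw [← (Fin.consEquiv (fun _ : Fin (m + 2) => Fin n)).sum_comp, Fintype.sum_prod_type]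
    have hterm : ∀ (a : Fin n) (ψ : Fin (m + 1) → Fin n),
        (if Function.Injective φ ∧
          Function.Injective ((Fin.consEquiv (fun _ : Fin (m + 2) => Fin n)) (a, ψ)) ∧
          φ 0 = (Fin.consEquiv (fun _ : Fin (m + 2) => Fin n)) (a, ψ) 0 ∧
          φ (Fin.last _) = (Fin.consEquiv (fun _ : Fin (m + 2) => Fin n)) (a, ψ) (Fin.last _) ∧
          φ 1 ≠ (Fin.consEquiv (fun _ : Fin (m + 2) => Fin n)) (a, ψ) 1 then
          p ^ (pe φ ∪ pe ((Fin.consEquiv (fun _ : Fin (m + 2) => Fin n)) (a, ψ))).card else 0) ≤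
        (if a = φ 0 then 1 else 0) * (p ^ (m + 2) *
          ((∏ j : Fin m, wt p (pe φ) (ψ j.castSucc) (ψ j.succ)) * g (ψ (Fin.last m)))) := by
      intro a ψ
      have hnn : 0 ≤ ∏ j : Fin m, wt p (pe φ) (ψ j.castSucc) (ψ j.succ) :=
        Finset.prod_nonneg fun _ _ => wt_nonneg h0 _ _ _
      have := hg0 (ψ (Fin.last m))
      split_ifs with h h' h'
      · obtain ⟨_, hψ, _, h2, h3⟩ := h
        have h4 := pow_card_union (p := p) (pe φ) (pe_inj hψ)
        change p ^ (pe φ ∪ pe _).card = _ at h4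
        rw [h4, hcard, Fin.prod_univ_succ]
        simp only [Fin.consEquiv, Equiv.coe_fn_mk, Fin.castSucc_zero, Fin.cons_zero, Fin.cons_succ,
          ← Fin.succ_castSucc, ← Fin.succ_last] at h2 h3 ⊢
        have h1 : (1 : Fin (m + 2)) = Fin.succ 0 := rfl
        rw [h1, Fin.cons_succ] at h3
        -- `φ 1` is the only neighbour of `φ 0` on the path
        have h5 : s(a, ψ 0) ∉ pe φ := by
          intro hmem
          obtain ⟨j, _, hj⟩ := Finset.mem_image.1 hmem
          rw [h'] at hj
          rcases Sym2.eq_iff.1 hj with ⟨h6, h7⟩ | ⟨_, h7⟩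
          · have h8 : j = 0 := by
              have := congrArg Fin.val (hφ h6)
              ext; simpa using this
            rw [h8] at h7; exact h3 h7
          · exact Fin.succ_ne_zero _ (hφ h7)
        rw [if_neg h5]
        have h6 : g (ψ (Fin.last m)) = 1 := by
          simp only [hg]; exact if_pos h2.symm
        rw [h6]
        unfold wt
        exact le_of_eq (by ring)
      · exact absurd h.2.2.1.symm h'
      · positivity
      · simp
    refine (Finset.sum_le_sum fun a _ => Finset.sum_le_sum fun ψ _ => hterm a ψ).trans ?_
    simp_rw [← Finset.mul_sum]
    rw [← Finset.sum_mul]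
    simp only [Finset.sum_ite_eq', Finset.mem_univ, if_true, one_mul]
    refine mul_le_mul_of_nonneg_left ((sum_chain (wt_nonneg h0 _)
      (fun y => sum_wt_le h0 y ?_) hg0 m).trans_eq ?_) (by positivity)
    · exact (Finset.card_le_card (Finset.monotone_filter_right _ fun x _ hx =>
        pe_subset_ce φ hx)).trans (ce_deg hφ y)
    · simp [hg]
  refine (Finset.sum_le_sum fun φ _ => hφ φ).trans_eq ?_
  rw [Finset.sum_const, nsmul_eq_mul, Finset.card_univ, Fintype.card_fun, Fintype.card_fin,
    Fintype.card_fin, mul_pow]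
  push_cast; ring

end count

/-! ### Expected number of compatible configurations of a given order -/

section order
variable {n : ℕ}

/-- Sets of at most `2 L` vertices are negligible in a graph with maximum degree at most `√n`. -/
structure Room (n : ℕ) (d L : ℝ) : Prop where
  low : 2 * L * (1 + √n) ≤ n / (12 * d ^ 2)
  fib : 2 * L * (1 + √n) ≤ n / 1280
  half : 2 * L ≤ n / 2

/-- The form of `config_le` in which typicality refers to the whole graph and the conflict-free set
of indices is extracted from a set `I` of non-confluences. -/
lemma pair_le {p d L : ℝ} (hl : Large n p d L) (hr : Room n d L) {k : ℕ} (hk : 1 ≤ k)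
    (hkL : (k : ℝ) ≤ L) {φ ψ : Fin k → Fin n} (hφ : Function.Injective φ)
    (hψ : Function.Injective ψ) {E : Finset (Sym2 (Fin n))}
    (hE : E ⊆ (Finset.univ.image φ ∪ Finset.univ.image ψ).sym2) (hEc : E.card ≤ 2 * k)
    (I : Finset (Fin k)) (hI : ∀ i ∈ I, φ i ≠ ψ i) (hkI : k ≤ 3 * I.card)
    {Q : SimpleGraph (Fin n) → Prop} (hQ : ∀ ω, Q (gr ω) → ∀ e ∈ E, ω e = true) :
    EE p (fun ω => if Gd d (gr ω) ∧ Q (gr ω) ∧ Compatible (gr ω) φ ψ then 1 else 0) ≤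
      p ^ E.card * (4 * (1 / d ^ 4) ^ k) := by
  obtain ⟨J, hJ, hIJ⟩ := exists_conflict_free hφ hψ I hI
  set U := Finset.univ.image φ ∪ Finset.univ.image ψ with hU
  have hUc : U.card ≤ 2 * k := by
    have h1 : (Finset.univ.image φ).card ≤ k := Finset.card_image_le.trans (by simp)
    have h2 : (Finset.univ.image ψ).card ≤ k := Finset.card_image_le.trans (by simp)
    have h3 := Finset.card_union_le (Finset.univ.image φ) (Finset.univ.image ψ)
    rw [← hU] at h3
    omega
  have hUL : (U.card : ℝ) ≤ 2 * L := by
    have : (U.card : ℝ) ≤ 2 * k := by exact_mod_cast hUc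
    linarith
  have hd : 0 < d := by linarith [hl.d_big]
  have hs : (0 : ℝ) ≤ 1 + √n := by positivity
  refine (EE_mono hl.p_pos.le (by linarith [hl.p_le]) fun ω => ?_).trans
    (config_le hl hk hkL hφ hψ (U := U) (fun i => by simp [hU]) (fun i => by simp [hU]) hUc hE hEc
      J hJ (by omega))
  by_cases h : Gd d (gr ω) ∧ Q (gr ω) ∧ Compatible (gr ω) φ ψ
  · obtain ⟨h1, h2, h3⟩ := h
    have h4 : HG d (del (gr ω) U) U := h1.HG hd U
      ((mul_le_mul_of_nonneg_right hUL hs).trans hr.low)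
      ((mul_le_mul_of_nonneg_right hUL hs).trans hr.fib) (hUL.trans hr.half)
    rw [if_pos ⟨h1, h2, h3⟩, if_pos ⟨hQ ω h2, h4, h3⟩]
  · rw [if_neg h]; split_ifs <;> norm_num

lemma ce_card_le {l : ℕ} (φ : Fin (l + 1) → Fin n) : (ce φ).card ≤ l + 1 :=
  Finset.card_image_le.trans (by simp)

lemma ce_subset {l : ℕ} (φ : Fin (l + 1) → Fin n) : ce φ ⊆ (Finset.univ.image φ).sym2 := by
  intro e he
  obtain ⟨i, _, rfl⟩ := Finset.mem_image.1 he
  simp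

lemma union_subset_sym2 {A B : Finset (Fin n)} {E F : Finset (Sym2 (Fin n))} (hE : E ⊆ A.sym2)
    (hF : F ⊆ B.sym2) : E ∪ F ⊆ (A ∪ B).sym2 :=
  Finset.union_subset (hE.trans (Finset.sym2_mono Finset.subset_union_left))
    (hF.trans (Finset.sym2_mono Finset.subset_union_right))

lemma ce_true {l : ℕ} {φ : Fin (l + 1) → Fin n} {ω : Sym2 (Fin n) → Bool}
    (h : IsCycleSeq (gr ω) φ) : ∀ e ∈ ce φ, ω e = true := by
  intro e he
  obtain ⟨i, _, rfl⟩ := Finset.mem_image.1 he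
  exact (h.2 i).2

lemma pe_true {l : ℕ} {φ : Fin (l + 1) → Fin n} {ω : Sym2 (Fin n) → Bool}
    (h : IsPathSeq (gr ω) φ ∨ IsCycleSeq (gr ω) φ) : ∀ e ∈ pe φ, ω e = true := by
  intro e he
  rcases h with h | h
  · obtain ⟨j, _, rfl⟩ := Finset.mem_image.1 he
    exact (h.2 j (by omega)).2
  · exact ce_true h e (pe_subset_ce φ he)

lemma inj_of_or {k : ℕ} {φ : Fin k → Fin n} {G : SimpleGraph (Fin n)}
    (h : IsPathSeq G φ ∨ IsCycleSeq G φ) : Function.Injective φ := h.elim (·.1) (·.1)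

lemma EE_false {p : ℝ} {P : (Sym2 (Fin n) → Bool) → Prop}
    [∀ ω, Decidable (P ω)] (h : ∀ ω, ¬ P ω) :
    EE p (fun ω => if P ω then 1 else 0) = 0 := by
  simp only [h, if_false]; exact EE_const 0

/-- Type I: both closed walks contribute their edges, and every index is usable. -/
lemma typeI_le {p d L : ℝ} (hl : Large n p d L) (hr : Room n d L) {l : ℕ}
    (hkL : ((l + 1 : ℕ) : ℝ) ≤ L) (φ ψ : Fin (l + 1) → Fin n) :
    EE p (fun ω => if Gd d (gr ω) ∧ TypeI (gr ω) φ ψ ∧ Compatible (gr ω) φ ψ then 1 else 0) ≤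
      (if Function.Injective φ ∧ Function.Injective ψ then p ^ (ce φ ∪ ce ψ).card else 0) *
        (4 * (1 / d ^ 4) ^ (l + 1)) := by
  by_cases h : Function.Injective φ ∧ Function.Injective ψ
  · rw [if_pos h]
    by_cases h' : ∀ i, φ i ≠ ψ i
    · refine pair_le hl hr (by omega) hkL h.1 h.2 (union_subset_sym2 (ce_subset φ) (ce_subset ψ))
        ?_ Finset.univ (fun i _ => h' i) (by simp) (Q := fun G => TypeI G φ ψ) ?_
      · have := Finset.card_union_le (ce φ) (ce ψ)
        have := ce_card_le φ
        have := ce_card_le ψ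
        omega
      · intro ω hω e he
        rcases Finset.mem_union.1 he with he | he
        · exact ce_true hω.2.2.1 e he
        · exact ce_true hω.2.2.2 e he
    · refine (EE_false ?_).trans_le ?_
      · exact fun ω hω => h' hω.2.1.2.1
      have := hl.p_pos
      positivity
  · rw [if_neg h, zero_mul]
    refine (EE_false ?_).le
    exact fun ω hω => h ⟨hω.2.1.2.2.1.1, hω.2.1.2.2.2.1⟩

/-- Type II: path edges suffice, whether the sequences are paths or cycles, and at least a third of
the indices are not confluences. -/
lemma typeII_le {p d L : ℝ} (hl : Large n p d L) (hr : Room n d L) {m : ℕ}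
    (hkL : ((m + 3 : ℕ) : ℝ) ≤ L) (φ ψ : Fin (m + 3) → Fin n) :
    EE p (fun ω => if Gd d (gr ω) ∧ TypeII (gr ω) φ ψ ∧ Compatible (gr ω) φ ψ then 1 else 0) ≤
      (if Function.Injective φ ∧ Function.Injective ψ ∧ φ 0 = ψ 0 ∧
        φ (Fin.last _) = ψ (Fin.last _) ∧ φ 1 ≠ ψ 1 then p ^ (pe φ ∪ pe ψ).card else 0) *
        (4 * (1 / d ^ 4) ^ (m + 3)) := by
  have hp := hl.p_pos
  by_cases h : ∃ ω, TypeII (gr ω) φ ψ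
  · obtain ⟨ω₀, h₀⟩ := h
    obtain ⟨_, h1, h2, h3⟩ := h₀
    have hφ := inj_of_or h1
    have hψ := inj_of_or h2
    rw [if_pos ⟨hφ, hψ, (h3 0).2 (by simp), (h3 _).2 (by simp), fun h => by
      have := (h3 1).1 h
      simp at this⟩]
    refine pair_le hl hr (by omega) hkL hφ hψ (union_subset_sym2
      ((pe_subset_ce φ).trans (ce_subset φ)) ((pe_subset_ce ψ).trans (ce_subset ψ)))
        ?_ (Finset.univ \ {0, Fin.last _}) (fun i hi => ?_) ?_ (Q := fun G => TypeII G φ ψ) ?_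
    · have := Finset.card_union_le (pe φ) (pe ψ)
      have := Finset.card_le_card (pe_subset_ce φ)
      have := Finset.card_le_card (pe_subset_ce ψ)
      have := ce_card_le φ
      have := ce_card_le ψ
      omega
    · intro h
      simp only [Finset.mem_sdiff, Finset.mem_univ, true_and, Finset.mem_insert,
        Finset.mem_singleton, not_or] at hi
      rcases (h3 i).1 h with h4 | h4
      · exact hi.1 (Fin.ext h4)
      · exact hi.2 (Fin.ext (by simpa using h4))
    · have h4 : ({0, Fin.last (m + 2)} : Finset (Fin (m + 3))).card ≤ 2 := Finset.card_le_two
      rw [Finset.card_sdiff_of_subset (Finset.subset_univ _), Finset.card_univ, Fintype.card_fin]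
      omega
    · intro ω hω e he
      rcases Finset.mem_union.1 he with he | he
      · exact pe_true hω.2.1 e he
      · exact pe_true hω.2.2.1 e he
  · refine (EE_false ?_).trans_le ?_
    · exact fun ω hω => h ⟨ω, hω.2.1⟩
    split_ifs <;> positivity

/-- The expected number of compatible configurations of order `k` in a typical graph. -/
lemma order_le {p d L : ℝ} (hl : Large n p d L) (hr : Room n d L) {k : ℕ} (hk : 3 ≤ k)
    (hkL : (k : ℝ) ≤ L) :
    ∑ φ : Fin k → Fin n, ∑ ψ : Fin k → Fin n,
      EE p (fun ω => if Gd d (gr ω) ∧ (TypeI (gr ω) φ ψ ∨ TypeII (gr ω) φ ψ) ∧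
        Compatible (gr ω) φ ψ then 1 else 0) ≤ 8 * (4 / d ^ 2) ^ k := by
  obtain ⟨m, rfl⟩ := Nat.exists_eq_add_of_le' hk
  have hp0 := hl.p_pos
  have hp1 : p ≤ 1 := by linarith [hl.p_le]
  have hd2 : 2 ≤ d := by linarith [hl.d_big]
  have hd0 : 0 < d := by linarith
  set c : ℝ := 4 * (1 / d ^ 4) ^ (m + 3) with hc
  have hc0 : 0 ≤ c := by positivity
  have h1 : ∀ φ ψ : Fin (m + 3) → Fin n,
      EE p (fun ω => if Gd d (gr ω) ∧ (TypeI (gr ω) φ ψ ∨ TypeII (gr ω) φ ψ) ∧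
        Compatible (gr ω) φ ψ then 1 else 0) ≤
      (if Function.Injective φ ∧ Function.Injective ψ then p ^ (ce φ ∪ ce ψ).card else 0) * c +
      (if Function.Injective φ ∧ Function.Injective ψ ∧ φ 0 = ψ 0 ∧
        φ (Fin.last _) = ψ (Fin.last _) ∧ φ 1 ≠ ψ 1 then p ^ (pe φ ∪ pe ψ).card else 0) * c := by
    intro φ ψ
    refine le_trans ?_ (add_le_add (typeI_le hl hr hkL φ ψ) (typeII_le hl hr hkL φ ψ))
    rw [← EE_add]
    refine EE_mono hp0.le hp1 fun ω => ?_
    by_cases hG : Gd d (gr ω) <;> by_cases hC : Compatible (gr ω) φ ψ <;>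
      by_cases hI : TypeI (gr ω) φ ψ <;> by_cases hII : TypeII (gr ω) φ ψ <;>
      simp [hG, hC, hI, hII]
  have h2 := sum_cycles (n := n) hp0.le (l := m + 2) (by omega)
  have h3 := sum_paths (n := n) hp0.le (m + 1)
  refine (Finset.sum_le_sum fun φ _ => Finset.sum_le_sum fun ψ _ => h1 φ ψ).trans ?_
  simp_rw [Finset.sum_add_distrib, ← Finset.sum_mul]
  rw [← hl.d_eq] at h2 h3
  have h4 : (d + 2) ^ (m + 2) * (d + ((m + 2 : ℕ) + 1)) ≤ (4 * d) ^ (m + 3) := by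
    have h5 : d + ((m + 2 : ℕ) + 1) ≤ d * 2 ^ (m + 3) := by
      have h6 : (m + 3 : ℕ) + 1 ≤ 2 ^ (m + 3) := Nat.lt_two_pow_self
      have h6' : ((m : ℝ) + 3) + 1 ≤ 2 ^ (m + 3) := by exact_mod_cast h6
      push_cast
      nlinarith [(Nat.cast_nonneg m : (0:ℝ) ≤ m)]
    calc (d + 2) ^ (m + 2) * (d + ((m + 2 : ℕ) + 1)) ≤
        (2 * d) ^ (m + 2) * (d * 2 ^ (m + 3)) := by gcongr; linarith
      _ ≤ (2 * d) ^ (m + 2) * (d * 2 ^ (m + 3)) * 2 := le_mul_of_one_le_right (by positivity) (by norm_num)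
      _ = (4 * d) ^ (m + 3) := by
        rw [show (4 * d) = 2 * d * 2 by ring, mul_pow (2 * d) 2]; ring
  have h5 : (d + 2) ^ (m + 1) ≤ (4 * d) ^ (m + 3) := by
    calc (d + 2) ^ (m + 1) ≤ (4 * d) ^ (m + 1) := by gcongr; linarith
      _ ≤ (4 * d) ^ (m + 3) := pow_le_pow_right₀ (by linarith) (by omega)
  have h6 : d ^ (m + 3) * (4 * d) ^ (m + 3) * c = 4 * (4 / d ^ 2) ^ (m + 3) := by
    rw [hc, ← mul_pow, mul_left_comm, ← mul_pow]
    congr 2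
    field_simp
  have h7 : d ^ (m + 3) * ((d + 2) ^ (m + 2) * (d + ((m + 2 : ℕ) + 1))) ≤
      d ^ (m + 3) * (4 * d) ^ (m + 3) := by gcongr
  have h8 : d ^ (m + 3) * (d + 2) ^ (m + 1) ≤ d ^ (m + 3) * (4 * d) ^ (m + 3) := by gcongr
  have h9 := mul_le_mul_of_nonneg_right (h2.trans h7) hc0
  have h10 := mul_le_mul_of_nonneg_right (h3.trans h8) hc0
  rw [h6] at h9 h10
  linarith

end order

/-! ### A random graph is typical -/

section typical
variable {n : ℕ} {p : ℝ}

lemma dg_eq_cnt (ω : Sym2 (Fin n) → Bool) (v : Fin n) :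
    dg (gr ω) v = cnt (spokes v (Finset.univ.erase v)) ω := by
  rw [cnt_spokes (Finset.notMem_erase v _)]
  unfold dg
  congr 1
  ext y
  simp only [Finset.mem_filter, Finset.mem_univ, true_and, Finset.mem_erase, and_true]
  exact ⟨fun h => ⟨h.ne', h⟩, fun h => h.2⟩

lemma card_spokes_erase (v : Fin n) : (spokes v (Finset.univ.erase v)).card = n - 1 := by
  rw [card_spokes, Finset.card_erase_of_mem (Finset.mem_univ v), Finset.card_univ, Fintype.card_fin]

lemma EE_high (h0 : 0 ≤ p) (h1 : p ≤ 1) (m : ℕ) (v : Fin n) :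
    EE p (fun ω => if m ≤ dg (gr ω) v then 1 else 0) ≤ Real.exp (n * p * 2) / 2 ^ m := by
  simp_rw [dg_eq_cnt]
  refine (tail_le h0 h1 _ (x := 2) (by norm_num) m).trans ?_
  rw [card_spokes_erase]
  gcongr
  omega

lemma EE_low (h0 : 0 ≤ p) (h1 : p ≤ 1) (v : Fin n) :
    EE p (fun ω => if dg (gr ω) v ≤ 3 then 1 else 0) ≤
      8 * Real.exp (-((n - 1 : ℕ) * (p / 2))) := by
  simp_rw [dg_eq_cnt]
  calc EE p (fun ω => if cnt (spokes v (Finset.univ.erase v)) ω ≤ 3 then 1 else 0)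
      ≤ EE p (fun ω => 8 * (1 / 2 : ℝ) ^ cnt (spokes v (Finset.univ.erase v)) ω) := by
        refine EE_mono h0 h1 fun ω => ?_
        split_ifs with h
        · have := pow_le_pow_of_le_one (by norm_num : (0 : ℝ) ≤ 1 / 2) (by norm_num) h
          norm_num at this ⊢
          linarith
        · positivity
    _ = 8 * (1 - p + p * (1 / 2)) ^ (n - 1) := by
        rw [EE_const_mul, EE_pow_cnt, card_spokes_erase]
    _ ≤ 8 * (Real.exp (-(p / 2))) ^ (n - 1) := by
        have := Real.add_one_le_exp (-(p / 2))
        gcongr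
        linarith
    _ = _ := by rw [← Real.exp_nat_mul]; congr 2; ring

/-- Two vertices rarely have the same degree: all pairs at `v` other than `s(v, w)` are irrelevant
for the degree of `w`. -/
lemma EE_same (h0 : 0 < p) (h1 : p ≤ 1 / 2) (hn : 3 ≤ n) {v w : Fin n} (hvw : v ≠ w) :
    EE p (fun ω => if dg (gr ω) v = dg (gr ω) w then 1 else 0) ≤ 8 / √((n - 2 : ℕ) * p) := by
  have h1' : p ≤ 1 := by linarith
  set W : Finset (Fin n) := (Finset.univ.erase v).erase w with hW
  have hvW : v ∉ W := by simp [hW]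
  have hWc : W.card = n - 2 := by
    rw [hW, Finset.card_erase_of_mem (by simp [hvw.symm]),
      Finset.card_erase_of_mem (Finset.mem_univ v), Finset.card_univ, Fintype.card_fin]
    omega
  refine EE_le_of_resample h0.le h1' (spokes v W) fun ω => ?_
  have hmem : ∀ x y : Fin n, s(x, y) ∈ spokes v W ↔ (x = v ∧ y ∈ W) ∨ (y = v ∧ x ∈ W) := by
    intro x y
    unfold spokes
    rw [Finset.mem_image]
    constructor
    · rintro ⟨z, hz, h⟩
      rcases Sym2.eq_iff.1 h with ⟨rfl, rfl⟩ | ⟨rfl, rfl⟩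
      · exact Or.inl ⟨rfl, hz⟩
      · exact Or.inr ⟨rfl, hz⟩
    · rintro (⟨rfl, h⟩ | ⟨rfl, h⟩)
      · exact ⟨y, h, rfl⟩
      · exact ⟨x, h, Sym2.eq_swap⟩
  have hv : ∀ ω', dg (gr ((spokes v W).piecewise ω' ω)) v =
      cnt (spokes v W) ω' + cnt {s(v, w)} ω := by
    intro ω'
    have hsp : spokes v (Finset.univ.erase v) = spokes v W ∪ {s(v, w)} := by
      unfold spokes
      rw [← Finset.insert_erase (show w ∈ Finset.univ.erase v by simp [hvw.symm]),
        Finset.image_insert, ← hW, Finset.insert_eq, Finset.union_comm]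
    have hd : Disjoint (spokes v W) {s(v, w)} := by
      rw [Finset.disjoint_singleton_right, hmem]
      simp [hW, hvw]
    rw [dg_eq_cnt, hsp]
    have : cnt (spokes v W ∪ {s(v, w)}) ((spokes v W).piecewise ω' ω) =
        cnt (spokes v W) ((spokes v W).piecewise ω' ω) +
          cnt {s(v, w)} ((spokes v W).piecewise ω' ω) := by
      unfold cnt
      rw [Finset.filter_union, Finset.card_union_of_disjoint
        (Finset.disjoint_filter_filter hd)]
    rw [this, cnt_piecewise (Finset.Subset.refl _)]
    congr 1
    refine cnt_congr fun e he => Finset.piecewise_eq_of_notMem _ _ _ fun he' =>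
      Finset.disjoint_left.1 hd he' he
  have hw : ∀ ω', dg (gr ((spokes v W).piecewise ω' ω)) w = dg (gr ω) w := by
    intro ω'
    rw [dg_eq_cnt, dg_eq_cnt]
    refine cnt_congr fun e he => Finset.piecewise_eq_of_notMem _ _ _ fun he' => ?_
    obtain ⟨y, hy, rfl⟩ := Finset.mem_image.1 he
    rcases (hmem w y).1 he' with ⟨h, _⟩ | ⟨_, h⟩
    · exact hvw h.symm
    · simp [hW] at h
  simp_rw [hv, hw]
  refine le_trans (EE_mono h0.le h1' (g := fun ω' =>
    if cnt (spokes v W) ω' = dg (gr ω) w - cnt {s(v, w)} ω then 1 else 0) fun ω' => ?_) ?_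
  · split_ifs with h2 h3
    · exact le_rfl
    · exact absurd (by omega) h3
    · norm_num
    · exact le_rfl
  · rw [EE_cnt_eq, card_spokes, hWc]
    exact bp_le h0 h1 _ (by omega) _

/-- Union bound over the three ways of not being typical; the last two summands are Markov bounds,
where a degree shared by `n / 1280` vertices yields `(n / 1280) ^ 2` ordered pairs. -/
lemma not_Gd_le (h0 : 0 < p) (h1 : p ≤ 1 / 2) (hn : 3 ≤ n) {d : ℝ} (hd : 0 < d) :
    EE p (fun ω : Sym2 (Fin n) → Bool => if ¬ Gd d (gr ω) then 1 else 0) ≤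
      n * (Real.exp (n * p * 2) / 2 ^ ⌊√(n : ℝ)⌋₊) +
      n * (8 * Real.exp (-((n - 1 : ℕ) * (p / 2)))) * (12 * d ^ 2 / n) +
      (n + n * (n * (8 / √((n - 2 : ℕ) * p)))) * (1280 / n) ^ 2 := by
  have h1' : p ≤ 1 := by linarith
  have hn0 : (0 : ℝ) < n := by exact_mod_cast (by omega : 0 < n)
  set m := ⌊√(n : ℝ)⌋₊
  have hpt : ∀ ω : Sym2 (Fin n) → Bool, (if ¬ Gd d (gr ω) then (1 : ℝ) else 0) ≤
      (∑ v : Fin n, if m ≤ dg (gr ω) v then (1 : ℝ) else 0) +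
      (∑ v : Fin n, if dg (gr ω) v ≤ 3 then (1 : ℝ) else 0) * (12 * d ^ 2 / n) +
      (∑ v : Fin n, ∑ w : Fin n, if dg (gr ω) v = dg (gr ω) w then (1 : ℝ) else 0) *
        (1280 / n) ^ 2 := by
    intro ω
    have ha : 0 ≤ ∑ v : Fin n, if m ≤ dg (gr ω) v then (1 : ℝ) else 0 :=
      Finset.sum_nonneg fun v _ => by split_ifs <;> norm_num
    have hb : 0 ≤ (∑ v : Fin n, if dg (gr ω) v ≤ 3 then (1 : ℝ) else 0) * (12 * d ^ 2 / n) :=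
      mul_nonneg (Finset.sum_nonneg fun v _ => by split_ifs <;> norm_num) (by positivity)
    have hc : 0 ≤ (∑ v : Fin n, ∑ w : Fin n,
        if dg (gr ω) v = dg (gr ω) w then (1 : ℝ) else 0) * (1280 / n) ^ 2 :=
      mul_nonneg (Finset.sum_nonneg fun v _ => Finset.sum_nonneg fun w _ => by
        split_ifs <;> norm_num) (by positivity)
    by_cases hG : Gd d (gr ω)
    · rw [if_neg (not_not.2 hG)]; linarith
    rw [if_pos hG]
    unfold Gd at hG
    rw [not_and_or, not_and_or] at hG
    push Not at hG
    rcases hG with ⟨v, hv⟩ | hG | ⟨x, hx⟩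
    · have h2 : m ≤ dg (gr ω) v := by
        have : (m : ℝ) ≤ √n := Nat.floor_le (Real.sqrt_nonneg _)
        exact_mod_cast this.trans hv.le
      have h3 := Finset.single_le_sum (f := fun v => if m ≤ dg (gr ω) v then (1 : ℝ) else 0)
        (fun v _ => by split_ifs <;> norm_num) (Finset.mem_univ v)
      simp only [h2, if_true] at h3
      linarith
    · rw [← Finset.sum_boole] at hG
      have : n / (12 * d ^ 2) * (12 * d ^ 2 / n) = 1 := by field_simp
      have h2 := mul_le_mul_of_nonneg_right hG.le (by positivity : 0 ≤ 12 * d ^ 2 / n)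
      linarith
    · set S := Finset.univ.filter (fun v => dg (gr ω) v = x) with hS
      have h2 : (S.card : ℝ) ^ 2 ≤ ∑ v : Fin n, ∑ w : Fin n,
          if dg (gr ω) v = dg (gr ω) w then (1 : ℝ) else 0 := by
        calc (S.card : ℝ) ^ 2 = ∑ v ∈ S, ∑ w ∈ S, (1 : ℝ) := by simp [sq]
          _ = ∑ v ∈ S, ∑ w ∈ S, if dg (gr ω) v = dg (gr ω) w then (1 : ℝ) else 0 := by
            refine Finset.sum_congr rfl fun v hv => Finset.sum_congr rfl fun w hw => ?_
            rw [if_pos ((Finset.mem_filter.1 hv).2.trans (Finset.mem_filter.1 hw).2.symm)]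
          _ ≤ ∑ v ∈ S, ∑ w : Fin n, if dg (gr ω) v = dg (gr ω) w then (1 : ℝ) else 0 :=
            Finset.sum_le_sum fun v _ => Finset.sum_le_sum_of_subset_of_nonneg
              (Finset.subset_univ _) fun w _ _ => by split_ifs <;> norm_num
          _ ≤ _ := Finset.sum_le_sum_of_subset_of_nonneg
              (Finset.subset_univ _) fun v _ _ => Finset.sum_nonneg fun w _ => by
                split_ifs <;> norm_num
      have h3 : (n / 1280 : ℝ) ^ 2 * (1280 / n) ^ 2 = 1 := by field_simp
      have h4 : (n / 1280 : ℝ) ^ 2 ≤ (S.card : ℝ) ^ 2 := by gcongr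
      have h5 := mul_le_mul_of_nonneg_right (h4.trans h2) (by positivity : 0 ≤ (1280 / n : ℝ) ^ 2)
      linarith
  refine (EE_mono h0.le h1' hpt).trans ?_
  rw [EE_add, EE_add, EE_mul_const, EE_mul_const, EE_sum, EE_sum, EE_sum]
  simp_rw [EE_sum]
  have hs : ∀ c : ℝ, ∑ _v : Fin n, c = n * c := fun c => by simp
  refine add_le_add (add_le_add ?_ ?_) ?_
  · rw [← hs]; exact Finset.sum_le_sum fun v _ => EE_high h0.le h1' m v
  · refine mul_le_mul_of_nonneg_right ?_ (by positivity)
    rw [← hs]; exact Finset.sum_le_sum fun v _ => EE_low h0.le h1' v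
  · refine mul_le_mul_of_nonneg_right ?_ (by positivity)
    have : ∀ v : Fin n, ∑ w : Fin n,
        EE p (fun ω => if dg (gr ω) v = dg (gr ω) w then (1 : ℝ) else 0) ≤
        1 + n * (8 / √((n - 2 : ℕ) * p)) := by
      intro v
      calc _ ≤ ∑ w : Fin n, ((if v = w then 1 else 0) + 8 / √((n - 2 : ℕ) * p)) := by
            refine Finset.sum_le_sum fun w _ => ?_
            by_cases hvw : v = w
            · subst hvw
              simp only [if_true]
              rw [EE_const]
              have : 0 ≤ 8 / √((n - 2 : ℕ) * p) := by positivity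
              linarith
            · rw [if_neg hvw, zero_add]; exact EE_same h0 h1 hn hvw
        _ = _ := by rw [Finset.sum_add_distrib, hs]; simp
    refine (Finset.sum_le_sum fun v _ => this v).trans_eq ?_
    rw [hs]; ring

end typical

/-! ### Asymptotics -/

section asymptotics
open Filter Topology

lemma geom_tail_le {x : ℝ} (h0 : 0 ≤ x) (h1 : x ≤ 1 / 2) (K : ℕ) :
    ∑ k ∈ Finset.Icc 3 K, x ^ k ≤ 4 * x := by
  calc ∑ k ∈ Finset.Icc 3 K, x ^ k ≤ ∑ k ∈ Finset.Icc 3 K, 2 * x * (1 / 2) ^ k := by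
        refine Finset.sum_le_sum fun k hk => ?_
        obtain ⟨j, rfl⟩ := Nat.exists_eq_add_of_le' (Finset.mem_Icc.1 hk).1
        have h2 : x ^ (j + 2) ≤ (1 / 2) ^ (j + 2) := pow_le_pow_left₀ h0 h1 _
        calc x ^ (j + 3) = x * x ^ (j + 2) := by ring
          _ ≤ x * (1 / 2) ^ (j + 2) := by gcongr
          _ = 2 * x * (1 / 2) ^ (j + 3) := by ring
    _ ≤ ∑ k ∈ Finset.range (K + 1), 2 * x * (1 / 2) ^ k :=
        Finset.sum_le_sum_of_subset_of_nonneg (fun k hk => Finset.mem_range.2 (by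
          have := (Finset.mem_Icc.1 hk).2; omega)) fun k _ _ => by positivity
    _ ≤ 2 * x * 2 := by
        rw [← Finset.mul_sum]
        exact mul_le_mul_of_nonneg_left (sum_geometric_two_le _) (by positivity)
    _ = 4 * x := by ring

lemma gnpProb_le_one {n : ℕ} {p : ℝ} (h0 : 0 ≤ p) (h1 : p ≤ 1) (A : Set (SimpleGraph (Fin n))) :
    gnpProb n p A ≤ 1 := by
  rw [gnpProb_eq]
  exact (EE_mono h0 h1 fun ω => by split_ifs <;> norm_num).trans_eq EE_one

/-- First moment bound over all configurations of all orders. -/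
lemma one_le_gnpProb {n : ℕ} {p d : ℝ} (hl : Large n p d (Real.log n))
    (hr : Room n d (Real.log n)) :
    1 ≤ gnpProb n p {G : SimpleGraph (Fin n) | ∀ k : ℕ, 3 ≤ k → (k : ℝ) ≤ Real.log n →
        ∀ φ ψ : Fin k → Fin n, TypeI G φ ψ ∨ TypeII G φ ψ → ¬Compatible G φ ψ} +
      EE p (fun ω : Sym2 (Fin n) → Bool => if ¬ Gd d (gr ω) then 1 else 0) + 128 / d ^ 2 := by
  have hp0 := hl.p_pos.le
  have hp1 : p ≤ 1 := by linarith [hl.p_le]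
  have hd : 785 ^ 2 * 64 * 640 ≤ d := hl.d_big
  have hd0 : 0 < d := by linarith
  set A := {G : SimpleGraph (Fin n) | ∀ k : ℕ, 3 ≤ k → (k : ℝ) ≤ Real.log n →
        ∀ φ ψ : Fin k → Fin n, TypeI G φ ψ ∨ TypeII G φ ψ → ¬Compatible G φ ψ} with hA
  set K := ⌊Real.log n⌋₊
  have hpt : ∀ ω : Sym2 (Fin n) → Bool, (1 : ℝ) ≤ (if gr ω ∈ A then 1 else 0) +
      (if ¬ Gd d (gr ω) then 1 else 0) +
      ∑ k ∈ Finset.Icc 3 K, ∑ φ : Fin k → Fin n, ∑ ψ : Fin k → Fin n,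
        (if Gd d (gr ω) ∧ (TypeI (gr ω) φ ψ ∨ TypeII (gr ω) φ ψ) ∧ Compatible (gr ω) φ ψ
          then 1 else 0) := by
    intro ω
    have hnn : ∀ (k : ℕ) (φ ψ : Fin k → Fin n), (0 : ℝ) ≤
        (if Gd d (gr ω) ∧ (TypeI (gr ω) φ ψ ∨ TypeII (gr ω) φ ψ) ∧ Compatible (gr ω) φ ψ
          then 1 else 0) := fun k φ ψ => by split_ifs <;> norm_num
    have hnn1 := fun (k : ℕ) (φ : Fin k → Fin n) =>
      Finset.sum_nonneg (fun ψ (_ : ψ ∈ Finset.univ) => hnn k φ ψ)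
    have hnn2 := fun (k : ℕ) => Finset.sum_nonneg (fun φ (_ : φ ∈ Finset.univ) => hnn1 k φ)
    have hnn3 := Finset.sum_nonneg (fun k (_ : k ∈ Finset.Icc 3 K) => hnn2 k)
    by_cases h1 : gr ω ∈ A
    · rw [if_pos h1]; split_ifs <;> linarith
    by_cases h2 : Gd d (gr ω)
    · rw [if_neg h1, if_neg (not_not.2 h2), zero_add, zero_add]
      simp only [hA, Set.mem_ofPred_eq, not_forall, not_not] at h1
      obtain ⟨k, hk, hkL, φ, ψ, h3, h4⟩ := h1
      calc (1 : ℝ) = (if Gd d (gr ω) ∧ (TypeI (gr ω) φ ψ ∨ TypeII (gr ω) φ ψ) ∧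
            Compatible (gr ω) φ ψ then 1 else 0) := by rw [if_pos ⟨h2, h3, h4⟩]
        _ ≤ _ := Finset.single_le_sum (fun ψ _ => hnn k φ ψ) (Finset.mem_univ ψ)
        _ ≤ _ := Finset.single_le_sum (fun φ _ => hnn1 k φ) (Finset.mem_univ φ)
        _ ≤ _ := Finset.single_le_sum (fun k _ => hnn2 k)
          (Finset.mem_Icc.2 ⟨hk, Nat.le_floor hkL⟩)
    · rw [if_pos h2, if_neg h1]; linarith
  have h1 := EE_mono hp0 hp1 hpt
  rw [EE_one, EE_add, EE_add, EE_sum, ← gnpProb_eq] at h1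
  simp_rw [EE_sum] at h1
  refine h1.trans (add_le_add le_rfl ?_)
  calc _ ≤ ∑ k ∈ Finset.Icc 3 K, 8 * (4 / d ^ 2) ^ k := by
        refine Finset.sum_le_sum fun k hk => ?_
        obtain ⟨hk3, hkK⟩ := Finset.mem_Icc.1 hk
        exact order_le hl hr hk3 ((Nat.cast_le.2 hkK).trans (Nat.floor_le (Real.log_natCast_nonneg n)))
    _ ≤ 8 * (4 * (4 / d ^ 2)) := by
        rw [← Finset.mul_sum]
        refine mul_le_mul_of_nonneg_left (geom_tail_le (by positivity) ?_ K) (by norm_num)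
        rw [div_le_iff₀ (by positivity)]
        nlinarith
    _ = 128 / d ^ 2 := by ring

/-- Polylogarithms are eventually below `√n`. -/
lemma polylog (k : ℕ) (C : ℝ) : ∀ᶠ n : ℕ in atTop, C * Real.log n ^ k ≤ √(n : ℝ) := by
  have h1 : Tendsto (fun n : ℕ => √(n : ℝ)) atTop atTop :=
    Real.tendsto_sqrt_atTop.comp tendsto_natCast_atTop_atTop
  have h2 := (Real.isLittleO_pow_log_id_atTop (n := k)).def
    (show (0 : ℝ) < 1 / ((|C| + 1) * 2 ^ k) by positivity)
  filter_upwards [h1.eventually h2, eventually_ge_atTop 1] with n hn hn1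
  have hs : 0 ≤ √(n : ℝ) := Real.sqrt_nonneg _
  have hlog : Real.log n = 2 * Real.log √(n : ℝ) := by
    rw [Real.log_sqrt (Nat.cast_nonneg n)]; ring
  have hl0 := Real.log_natCast_nonneg n
  have hlk : 0 ≤ Real.log √(n : ℝ) ^ k := pow_nonneg (by linarith) k
  simp only [id, Real.norm_eq_abs, abs_of_nonneg hs, abs_of_nonneg hlk] at hn
  rw [div_mul_eq_mul_div, one_mul, le_div_iff₀ (by positivity)] at hn
  rw [hlog, mul_pow]
  have : C * (2 ^ k * Real.log √(n : ℝ) ^ k) ≤ (|C| + 1) * (2 ^ k * Real.log √(n : ℝ) ^ k) :=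
    mul_le_mul_of_nonneg_right (by linarith [le_abs_self C]) (by positivity)
  linarith

/-- All requirements on the parameters follow from `d` being large and polylogarithms of `n` being
small compared with `√n`. -/
lemma params {n : ℕ} {p C d : ℝ} (hC : 0 < C) (hd : d = n * p) (hn : 1 ≤ Real.log n)
    (hdC : d ≤ C * Real.log n) (h1 : 785 ^ 2 * 64 * 640 ≤ d) (h2 : Real.exp 18 ≤ d ^ 4)
    (h3 : 2 * (785 ^ 2 * 64 * 640) ^ 40 ≤ d ^ 4)
    (h4 : 48 * (C + 1) ^ 2 * Real.log n ^ 3 ≤ √(n : ℝ)) (h5 : 5120 * Real.log n ^ 1 ≤ √(n : ℝ)) :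
    Large n p d (Real.log n) ∧ Room n d (Real.log n) := by
  set u := Real.log n
  set s := √(n : ℝ) with hs
  have hs2 : s * s = n := Real.mul_self_sqrt (Nat.cast_nonneg n)
  rw [pow_one] at h5
  have hs1 : 1 ≤ s := by linarith
  have hd0 : 0 < d := by linarith
  have hn0 : (0 : ℝ) < n := by rw [← hs2]; positivity
  have hpd : p = d / n := by rw [hd]; field_simp
  have hp : 0 < p := by rw [hpd]; positivity
  have hu3 : u ^ 2 ≤ u ^ 3 := pow_le_pow_right₀ hn (by norm_num)
  have hu2 : u ≤ u ^ 2 := by nlinarith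
  have hC1 : C ≤ (C + 1) ^ 2 := by nlinarith
  have hC2 : C ^ 2 ≤ (C + 1) ^ 2 := by nlinarith
  have hCu : 48 * (C * u) ≤ s := by
    have : C * u ≤ (C + 1) ^ 2 * u ^ 3 :=
      mul_le_mul hC1 (hu2.trans hu3) (by linarith) (by positivity)
    linarith
  have hCu2 : 48 * (C * u * u) ≤ s := by
    have : C * u ^ 2 ≤ (C + 1) ^ 2 * u ^ 3 := mul_le_mul hC1 hu3 (by positivity) (by positivity)
    linarith
  have hCu3 : 48 * (C ^ 2 * u ^ 3) ≤ s := by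
    have : C ^ 2 * u ^ 3 ≤ (C + 1) ^ 2 * u ^ 3 := mul_le_mul_of_nonneg_right hC2 (by positivity)
    linarith
  have hu0 : 0 < u := by linarith
  have hdd : d ^ 2 ≤ (C * u) ^ 2 := by gcongr
  have hud : 48 * (u * d ^ 2) ≤ s := by
    have : u * d ^ 2 ≤ u * (C * u) ^ 2 := by gcongr
    linarith
  have hud1 : 48 * (u * d) ≤ s := by
    have : u * d ≤ u * (C * u) := by gcongr
    linarith
  refine ⟨⟨hp, ?_, hd, h1, h2, h3, ?_, ?_⟩, ⟨?_, ?_, ?_⟩⟩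
  · rw [hpd, div_le_iff₀ hn0]; nlinarith
  · rw [hpd]
    have : (2 * u) ^ 2 * (d / n) * d = (2 * (u * d)) ^ 2 / (s * s) := by rw [hs2]; ring
    rw [this, div_le_one (by positivity), ← sq]
    exact pow_le_pow_left₀ (by positivity) (by nlinarith [mul_pos hu0 hd0]) 2
  · rw [hpd]
    have : n * (3 * (2 * u * (d / n) * d) ^ 2) = 12 * (u * d ^ 2) ^ 2 / (s * s) := by
      rw [hs2]; field_simp; ring
    rw [this, div_le_one (by positivity), ← sq]
    have := pow_le_pow_left₀ (by positivity) hud 2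
    nlinarith [sq_nonneg (u * d ^ 2)]
  · rw [le_div_iff₀ (by positivity), ← hs, ← hs2]
    calc 2 * u * (1 + s) * (12 * d ^ 2) ≤ 2 * u * (s + s) * (12 * d ^ 2) := by gcongr
      _ = s * (48 * (u * d ^ 2)) := by ring
      _ ≤ s * s := by gcongr
  · rw [le_div_iff₀ (by norm_num), ← hs, ← hs2]
    calc 2 * u * (1 + s) * 1280 ≤ 2 * u * (s + s) * 1280 := by gcongr
      _ = s * (5120 * u) := by ring
      _ ≤ s * s := by gcongr
  · have : s ≤ s * s := le_mul_of_one_le_left (by linarith) hs1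
    rw [← hs2]; linarith

/-- The failure probability of typicality in terms of quantities that obviously tend to `0`. -/
lemma not_Gd_le' {n : ℕ} {p C d : ℝ} (hn : 3 ≤ n) (hp : 0 < p) (hp2 : p ≤ 1 / 2) (hd : d = n * p)
    (hd2 : 2 ≤ d) (hdC : d ≤ C * Real.log n) (h : (4 * (1 + 2 * C)) * Real.log n ^ 1 ≤ √(n : ℝ)) :
    EE p (fun ω : Sym2 (Fin n) → Bool => if ¬ Gd d (gr ω) then 1 else 0) ≤
      2 * Real.exp (-(√(n : ℝ) / 4)) +
      384 * Real.exp 1 * ((d / 2) ^ 2 * Real.exp (-(d / 2))) +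
      1280 ^ 2 * (1 / n + 8 / √(d / 2)) := by
  have hn0 : (0 : ℝ) < n := by exact_mod_cast (by omega : 0 < n)
  refine (not_Gd_le hp hp2 hn (by linarith : 0 < d)).trans (add_le_add (add_le_add ?_ ?_) ?_)
  · set s := √(n : ℝ)
    have h1 : (2 : ℝ) ^ (s - 1) ≤ 2 ^ ⌊s⌋₊ := by
      rw [← Real.rpow_natCast]
      exact Real.rpow_le_rpow_of_exponent_le (by norm_num) (by linarith [Nat.lt_floor_add_one s])
    have h2 : (n : ℝ) = Real.exp (Real.log n) := (Real.exp_log hn0).symm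
    have hs0 : 0 ≤ s := Real.sqrt_nonneg _
    rw [mul_div_assoc', div_le_iff₀ (by positivity)]
    refine le_trans ?_ (mul_le_mul_of_nonneg_left h1 (by positivity))
    rw [Real.rpow_sub_one (by norm_num), Real.rpow_def_of_pos (by norm_num)]
    have h3 : 2 * Real.exp (-(s / 4)) * (Real.exp (Real.log 2 * s) / 2) =
        Real.exp (-(s / 4) + Real.log 2 * s) := by rw [Real.exp_add]; ring
    rw [h3, ← hd]
    conv_lhs => rw [h2]
    rw [← Real.exp_add]
    refine Real.exp_le_exp.2 ?_
    have := Real.log_two_gt_d9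
    nlinarith
  · have h1 : d / 2 - 1 ≤ (n - 1 : ℕ) * (p / 2) := by
      rw [Nat.cast_sub (by omega), hd]; push_cast; linarith
    calc n * (8 * Real.exp (-((n - 1 : ℕ) * (p / 2)))) * (12 * d ^ 2 / n)
        ≤ n * (8 * Real.exp (1 + -(d / 2))) * (12 * d ^ 2 / n) := by gcongr; linarith
      _ = _ := by rw [Real.exp_add]; field_simp; ring
  · have h1 : d / 2 ≤ (n - 2 : ℕ) * p := by
      rw [Nat.cast_sub (by omega)]; push_cast; rw [sub_mul, ← hd]; linarith
    calc (n + n * (n * (8 / √((n - 2 : ℕ) * p)))) * (1280 / n) ^ 2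
        ≤ (n + n * (n * (8 / √(d / 2)))) * (1280 / n) ^ 2 := by
          have : 0 < √(d / 2) := Real.sqrt_pos.2 (by linarith)
          gcongr
      _ = _ := by field_simp

end asymptotics

/-- If `n·p(n) → ∞` and `p(n) = O(log n / n)`, then whp a `G(n,p)` graph contains no
compatible configuration of type I or type II of any order `3 ≤ k ≤ log n`. -/
theorem no_compatible_configurations_whp (p : ℕ → ℝ)
    (hp0 : ∀ n, 0 ≤ p n) (hp1 : ∀ n, p n ≤ 1)
    (hgrow : Filter.Tendsto (fun n : ℕ => (n : ℝ) * p n) Filter.atTop Filter.atTop)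
    (hupper : ∃ C₀ : ℝ, 0 < C₀ ∧ ∀ᶠ n : ℕ in Filter.atTop, p n ≤ C₀ * Real.log n / n) :
    Filter.Tendsto
      (fun n : ℕ => gnpProb n (p n)
        {G : SimpleGraph (Fin n) | ∀ k : ℕ, 3 ≤ k → (k : ℝ) ≤ Real.log n →
          ∀ φ ψ : Fin k → Fin n, TypeI G φ ψ ∨ TypeII G φ ψ → ¬Compatible G φ ψ})
      Filter.atTop (nhds 1) := by
  obtain ⟨C, hC, hup⟩ := hupper
  set d : ℕ → ℝ := fun n => n * p n with hd
  have hs : Filter.Tendsto (fun n : ℕ => √(n : ℝ)) Filter.atTop Filter.atTop :=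
    Real.tendsto_sqrt_atTop.comp tendsto_natCast_atTop_atTop
  have hlog : Filter.Tendsto (fun n : ℕ => Real.log n) Filter.atTop Filter.atTop :=
    Real.tendsto_log_atTop.comp tendsto_natCast_atTop_atTop
  have hd4 : Filter.Tendsto (fun n => d n ^ 4) Filter.atTop Filter.atTop :=
    (Filter.tendsto_pow_atTop (by norm_num)).comp hgrow
  have hdh : Filter.Tendsto (fun n => d n / 2) Filter.atTop Filter.atTop :=
    hgrow.atTop_div_const (by norm_num)
  have e1 : Filter.Tendsto (fun n : ℕ => 2 * Real.exp (-(√(n : ℝ) / 4))) Filter.atTop (nhds 0) := by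
    simpa using (Real.tendsto_exp_neg_atTop_nhds_zero.comp
      (hs.atTop_div_const (by norm_num : (0 : ℝ) < 4))).const_mul 2
  have e2 : Filter.Tendsto (fun n : ℕ => 384 * Real.exp 1 * ((d n / 2) ^ 2 * Real.exp (-(d n / 2))))
      Filter.atTop (nhds 0) := by
    simpa using ((Real.tendsto_pow_mul_exp_neg_atTop_nhds_zero 2).comp hdh).const_mul
      (384 * Real.exp 1)
  have e3 : Filter.Tendsto (fun n : ℕ => 1280 ^ 2 * (1 / (n : ℝ) + 8 / √(d n / 2)))
      Filter.atTop (nhds 0) := by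
    have h1 := (Real.tendsto_sqrt_atTop.comp hdh).const_div_atTop 8
    simpa using ((tendsto_one_div_atTop_nhds_zero_nat (𝕜 := ℝ)).add h1).const_mul (1280 ^ 2)
  have e4 : Filter.Tendsto (fun n : ℕ => 128 / d n ^ 2) Filter.atTop (nhds 0) :=
    ((Filter.tendsto_pow_atTop (by norm_num)).comp hgrow).const_div_atTop 128
  have e5 : Filter.Tendsto (fun n : ℕ => 1 - (2 * Real.exp (-(√(n : ℝ) / 4)) +
      384 * Real.exp 1 * ((d n / 2) ^ 2 * Real.exp (-(d n / 2))) +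
      1280 ^ 2 * (1 / (n : ℝ) + 8 / √(d n / 2)) + 128 / d n ^ 2)) Filter.atTop (nhds 1) := by
    simpa using (((e1.add e2).add e3).add e4).const_sub 1
  refine tendsto_of_tendsto_of_tendsto_of_le_of_le' e5 tendsto_const_nhds ?_
    (Filter.Eventually.of_forall fun n => gnpProb_le_one (hp0 n) (hp1 n) _)
  filter_upwards [hup, hlog.eventually_ge_atTop 1, hgrow.eventually_ge_atTop (785 ^ 2 * 64 * 640),
    hd4.eventually_ge_atTop (Real.exp 18),
    hd4.eventually_ge_atTop (2 * (785 ^ 2 * 64 * 640) ^ 40), polylog 3 (48 * (C + 1) ^ 2),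
    polylog 1 5120, polylog 1 (4 * (1 + 2 * C)), Filter.eventually_ge_atTop 3]
    with n h1 h2 h3 h4 h5 h6 h7 h8 hn
  have hn0 : (0 : ℝ) < n := by exact_mod_cast (by omega : 0 < n)
  have hdC : d n ≤ C * Real.log n := by
    rw [le_div_iff₀ hn0] at h1
    simp only [hd]; linarith
  obtain ⟨hl, hr⟩ := params hC (d := d n) rfl h2 hdC h3 h4 h5 h6 h7
  have h9 := one_le_gnpProb hl hr
  have h10 := not_Gd_le' hn hl.p_pos hl.p_le (d := d n) rfl (by linarith) hdC h8
  linarith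
end

section
/- Let G = (V,E) be a graph containing no subgraph isomorphic to the complete bipartite graph K_{3,2}, and let u, v be distinct vertices of G. Then the multiset ∇_{G−v}(u), computed in the graph G−v obtained from G by deleting v, can be obtained from the multiset ∇_G(u) by decreasing at most two of its elements by 1 each and deleting at most one element (namely: the elements corresponding to the at most two common neighbors of u and v each decrease by at most 1, and if v is a neighbor of u then the element corresponding to v is deleted). -/
/-!
Deleting `v` removes `v` from the index set `N(u)` of the multiset (if `v ∈ N(u)`), and lowers the
entry of a neighbor `x ≠ v` of `u` exactly when `v` was counted by it, that is, when `x` is adjacent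
to `v` and `v ∉ N(u)`; the entry then drops by one (`card_outer_delete`). Such an `x` is a common
neighbor of `u` and `v`, and `K_{3,2}`-freeness allows at most two of these
(`card_commonNeighbors_le_two`). The witnesses are thus the entries of `∇_G(u)` over three disjoint
parts of `N(u)`: `s` over the lowered neighbors, `d` over `N(u) ∩ {v}`, and `r` over the rest.
-/

open scoped Classical

/-- `∇_G(u)`: the multiset of integers `{d(x, V ∖ Ñ(u)) : x ∈ N(u)}`, where `Ñ(u)` is the
closed neighborhood of `u` and `d(x, S)` is the number of neighbors of `x` in `S`. -/
noncomputable def nabla {V : Type*} [Fintype V] (G : SimpleGraph V) (u : V) : Multiset ℕ :=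
  (Finset.univ.filter fun v => G.Adj u v).val.map
    fun v => (Finset.univ.filter fun x => G.Adj v x ∧ x ≠ u ∧ ¬G.Adj u x).card

/-- Three common neighbors `a, b, c` of `u` and `v` would give a copy of `K_{3,2}` with parts
`{a, b, c}` and `{u, v}`. -/
lemma card_commonNeighbors_le_two {V : Type*} [Fintype V] (G : SimpleGraph V)
    (hfree : ¬∃ f : completeBipartiteGraph (Fin 3) (Fin 2) →g G, Function.Injective f)
    (u v : V) (huv : u ≠ v) :
    (Finset.univ.filter fun x => G.Adj u x ∧ G.Adj x v).card ≤ 2 := by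
  by_contra! h
  obtain ⟨a, ha, b, hb, c, hc, hab, hac, hbc⟩ := Finset.two_lt_card.1 h
  simp only [Finset.mem_filter, Finset.mem_univ, true_and] at ha hb hc
  refine hfree ⟨⟨Sum.elim ![a, b, c] ![u, v], ?_⟩, ?_⟩
  · rintro (i | i) (j | j) hij
    · simp at hij
    · fin_cases i <;> fin_cases j <;> simp [ha, hb, hc, ha.1.symm, hb.1.symm, hc.1.symm]
    · fin_cases i <;> fin_cases j <;>
        simp [ha, hb, hc, ha.2.symm, hb.2.symm, hc.2.symm]
    · simp at hij
  · change Function.Injective (Sum.elim ![a, b, c] ![u, v])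
    have hne := fun x (hx : G.Adj u x ∧ G.Adj x v) => And.intro hx.1.ne hx.2.ne
    refine Function.Injective.sumElim ?_ ?_ ?_
    · intro i j hij
      fin_cases i <;> fin_cases j <;> simp_all
    · intro i j hij
      fin_cases i <;> fin_cases j <;> simp_all
    · intro i j
      fin_cases i <;> fin_cases j <;> simp [(hne a ha).1.symm, (hne b hb).1.symm,
        (hne c hc).1.symm, (hne a ha).2, (hne b hb).2, (hne c hc).2]

/-- The number of neighbors of `x` outside the closed neighborhood of `u`, computed in `G - v`: it
misses only `v`, which is counted in `G` exactly when `x` is adjacent to `v` and `u` is not. -/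
lemma card_outer_delete {V : Type*} [Fintype V] (G : SimpleGraph V) (u v : V) (huv : u ≠ v)
    (x : {w : V | w ≠ v}) :
    (Finset.univ.filter fun y : {w : V | w ≠ v} => (G.induce {w | w ≠ v}).Adj x y ∧
        y ≠ ⟨u, huv⟩ ∧ ¬(G.induce {w | w ≠ v}).Adj ⟨u, huv⟩ y).card +
      (if G.Adj x v ∧ ¬G.Adj u v then 1 else 0) =
    (Finset.univ.filter fun y => G.Adj x y ∧ y ≠ u ∧ ¬G.Adj u y).card := by
  set T := Finset.univ.filter fun y => G.Adj x y ∧ y ≠ u ∧ ¬G.Adj u y with hT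
  have himg : (Finset.univ.filter fun y : {w : V | w ≠ v} => (G.induce {w | w ≠ v}).Adj x y ∧
      y ≠ ⟨u, huv⟩ ∧ ¬(G.induce {w | w ≠ v}).Adj ⟨u, huv⟩ y).map
        (Function.Embedding.subtype _) = T.erase v := by
    ext y
    simp only [Finset.mem_map, Finset.mem_filter, Finset.mem_univ, true_and, hT,
      Finset.mem_erase, Function.Embedding.subtype_apply, SimpleGraph.comap_adj]
    constructor
    · rintro ⟨⟨z, hz⟩, ⟨h1, h2, h3⟩, rfl⟩
      exact ⟨hz, h1, fun h => h2 (Subtype.ext h), h3⟩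
    · rintro ⟨hy, h1, h2, h3⟩
      exact ⟨⟨y, hy⟩, ⟨h1, fun h => h2 (congrArg Subtype.val h), h3⟩, rfl⟩
  rw [← Finset.card_map (Function.Embedding.subtype _), himg]
  split_ifs with h
  · exact Finset.card_erase_add_one (by simp [hT, h, huv.symm])
  · rw [Finset.erase_eq_of_notMem, add_zero]
    simp only [hT, Finset.mem_filter, Finset.mem_univ, true_and]
    exact fun h' => h ⟨h'.1, h'.2.2⟩

/-- If `G` contains no subgraph isomorphic to `K_{3,2}` and `u ≠ v`, then `∇_{G-v}(u)` is
obtained from `∇_G(u)` by decreasing at most two of its elements by 1 each and deleting at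
most one element: `∇_G(u) = r + s + d` with `|s| ≤ 2` (the decreased elements, each
positive) and `|d| ≤ 1` (the deleted element), and `∇_{G-v}(u) = r + (s - 1)`. -/
theorem nabla_delete_vertex {V : Type*} [Fintype V] (G : SimpleGraph V)
    (hfree : ¬∃ f : completeBipartiteGraph (Fin 3) (Fin 2) →g G, Function.Injective f)
    (u v : V) (huv : u ≠ v) :
    ∃ r s d : Multiset ℕ,
      Multiset.card s ≤ 2 ∧ Multiset.card d ≤ 1 ∧ (∀ x ∈ s, 1 ≤ x) ∧
      nabla G u = r + s + d ∧
      nabla (G.induce {w | w ≠ v}) ⟨u, huv⟩ = r + s.map (· - 1) := by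
  let F : V → ℕ := fun x => (Finset.univ.filter fun y => G.Adj x y ∧ y ≠ u ∧ ¬G.Adj u y).card
  let N : Finset V := Finset.univ.filter fun x => G.Adj u x
  -- `P x` says that `v` contributes to the entry of `x`.
  let P : V → Prop := fun x => G.Adj x v ∧ ¬G.Adj u v
  let A : Finset V := N.filter (· ≠ v)
  refine ⟨(A.filter fun x => ¬P x).val.map F, (A.filter P).val.map F,
    (N.filter fun x => ¬x ≠ v).val.map F, ?_, ?_, ?_, ?_, ?_⟩
  · rw [Multiset.card_map]
    refine (Finset.card_le_card ?_).trans (card_commonNeighbors_le_two G hfree u v huv)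
    intro x hx
    simp only [A, N, P, Finset.mem_filter, Finset.mem_univ, true_and] at hx ⊢
    exact ⟨hx.1.1, hx.2.1⟩
  · rw [Multiset.card_map]
    refine Finset.card_le_one.2 fun a ha b hb => ?_
    simp only [Finset.mem_filter, not_not] at ha hb
    rw [ha.2, hb.2]
  · intro n hn
    obtain ⟨x, hx, rfl⟩ := Multiset.mem_map.1 hn
    have hx : P x := (Finset.mem_filter.1 hx).2
    exact Finset.card_pos.2 ⟨v, by simp [hx.1, hx.2, huv.symm]⟩
  · rw [← Multiset.map_add, ← Multiset.map_add]
    change N.val.map F = _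
    congr 1
    have h1 : (A.filter P).val + (A.filter fun x => ¬P x).val = A.val :=
      Multiset.filter_add_not P A.val
    have h2 : A.val + (N.filter fun x => ¬x ≠ v).val = N.val :=
      Multiset.filter_add_not (· ≠ v) N.val
    rw [add_comm (A.filter fun x => ¬P x).val, h1, h2]
  · have hA : A.val = ((Finset.univ.filter fun y : {w : V | w ≠ v} =>
        (G.induce {w | w ≠ v}).Adj ⟨u, huv⟩ y).map (Function.Embedding.subtype _)).val := by
      congr 1
      ext y
      simp [A, N, and_comm]
    have hF : nabla (G.induce {w | w ≠ v}) ⟨u, huv⟩ =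
        A.val.map fun x => F x - if P x then 1 else 0 := by
      rw [hA, Finset.map_val, Multiset.map_map]
      refine Multiset.map_congr rfl fun x _ => ?_
      refine Nat.eq_sub_of_add_eq ?_
      convert card_outer_delete G u v huv x
      all_goals rfl
    rw [hF, ← Multiset.filter_add_not P A.val, Multiset.map_add, add_comm, Multiset.map_map]
    congr 1
    · refine Multiset.map_congr rfl fun x hx => ?_
      simp [(Multiset.mem_filter.1 hx).2]
    · refine Multiset.map_congr rfl fun x hx => ?_
      simp [(Multiset.mem_filter.1 hx).2]
end

section
/- Let G be a finite graph with minimum degree at least 2 and let v be a vertex of G that is not contained in any cycle of G. Then there exist vertices u and w, each contained in a cycle of G, and a path in G from u to w that contains v and all of whose internal vertices lie on no cycle of G; moreover, this path is the unique path in G between u and w. -/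
/-!
The proof looks at paths through `v` whose internal vertices lie on no cycle. If an end `u` of such
a path lies on no cycle, then `u` has a neighbour off the path: a neighbour other than the next
vertex of the path that lay on the path would close a cycle through `u`. So the path can be
prolonged at `u` and `u` becomes an internal vertex (`exists_adj_not_mem_support`). As paths in a
finite graph have bounded length, some such path has both ends on cycles.

For uniqueness, every edge of this path has an endpoint on no cycle, because `v` is an internal
vertex; hence every edge is a bridge. A path all of whose edges are bridges is the only path between
its ends (`eq_of_forall_isBridge`).
-/

/-- A vertex is contained in a cycle of `G` if some cycle of `G` passes through it. -/
def InCycle {V : Type*} (G : SimpleGraph V) (u : V) : Prop :=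
  ∃ x : V, ∃ c : G.Walk x x, c.IsCycle ∧ u ∈ c.support

open SimpleGraph in
theorem exists_adj_not_mem_support {V : Type*} (G : SimpleGraph V)
    (hmin : ∀ x : V, 2 ≤ (G.neighborSet x).ncard) {u w : V} (P : G.Walk u w) (hP : P.IsPath)
    (hu : ¬InCycle G u) : ∃ x, G.Adj x u ∧ x ∉ P.support := by
  classical
  cases P with
  | nil =>
    obtain ⟨x, hx, -⟩ := Set.exists_ne_of_one_lt_ncard (hmin u) u
    have hx' : G.Adj u x := hx
    exact ⟨x, hx'.symm, by simpa using hx'.ne'⟩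
  | @cons _ b _ h p =>
    obtain ⟨x, hx, hxb⟩ := Set.exists_ne_of_one_lt_ncard (hmin u) b
    have hux : G.Adj u x := hx
    refine ⟨x, hux.symm, fun hmem => hu ?_⟩
    rw [Walk.cons_isPath_iff] at hP
    have hxp : x ∈ p.support := by
      rw [Walk.support_cons, List.mem_cons] at hmem
      exact hmem.resolve_left hux.symm.ne
    -- the segment of the path from `u` to `x`, closed up by the edge `xu`, is a cycle
    have hun : u ∉ (p.takeUntil x hxp).support := fun hc =>
      hP.2 (p.support_takeUntil_subset_support hxp hc)
    refine ⟨x, Walk.cons hux.symm (Walk.cons h (p.takeUntil x hxp)), ?_, by simp⟩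
    rw [Walk.cons_isCycle_iff, Walk.cons_isPath_iff]
    refine ⟨⟨hP.1.takeUntil hxp, hun⟩, ?_⟩
    rw [Walk.edges_cons, List.mem_cons]
    rintro (he | he)
    · rw [Sym2.eq_swap, Sym2.congr_right] at he
      exact hxb he
    · exact hun (Walk.snd_mem_support_of_mem_edges _ he)

open SimpleGraph in
theorem eq_of_forall_isBridge {V : Type*} (G : SimpleGraph V) {u w : V} (P : G.Walk u w)
    (hP : P.IsPath) (hb : ∀ e ∈ P.edges, G.IsBridge e) (Q : G.Walk u w) (hQ : Q.IsPath) :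
    Q = P := by
  induction P with
  | nil => exact (Walk.isPath_iff_nil.1 hQ).eq_nil
  | @cons u b w h p ih =>
    rw [Walk.cons_isPath_iff] at hP
    have hub := isBridge_iff_forall_walk_mem_edges.1 (hb s(u, b) (by simp))
    -- `Q` followed by `p` backwards joins the ends of the bridge `ub`, and `p` avoids `u`
    have hmem : s(u, b) ∈ Q.edges := by
      have := hub (Q.append p.reverse)
      rw [Walk.edges_append, List.mem_append, Walk.edges_reverse, List.mem_reverse] at this
      exact this.resolve_right fun he => hP.2 (Walk.fst_mem_support_of_mem_edges _ he)
    cases Q with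
    | nil => simp at hmem
    | @cons _ c _ h' q =>
      rw [Walk.cons_isPath_iff] at hQ
      rw [Walk.edges_cons, List.mem_cons] at hmem
      have hbc : b = c := by
        rcases hmem with he | he
        · exact Sym2.congr_right.1 he
        · exact absurd (Walk.fst_mem_support_of_mem_edges _ he) hQ.2
      subst hbc
      rw [ih hP.1 (fun e he => hb e (by simp [he])) q hQ.1]

open SimpleGraph in
/-- An edge joining two vertices that lie on cycles would have to join the two ends of the path,
and so be the whole path, leaving no room for `v`. -/
theorem isBridge_of_mem_edges {V : Type*} (G : SimpleGraph V) {u w v : V} (P : G.Walk u w)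
    (hP : P.IsPath) (hvP : v ∈ P.support) (hvu : v ≠ u) (hvw : v ≠ w)
    (hin : ∀ x ∈ P.support, x ≠ u → x ≠ w → ¬InCycle G x) :
    ∀ e ∈ P.edges, G.IsBridge e := by
  have huw : s(u, w) ∉ P.edges := by
    cases P with
    | nil => simp
    | @cons _ b _ h p =>
      rw [Walk.cons_isPath_iff] at hP
      rw [Walk.edges_cons, List.mem_cons]
      rintro (he | he)
      · obtain rfl := Sym2.congr_right.1 he
        obtain rfl := (Walk.isPath_iff_nil.1 hP.1).eq_nil
        simp_all
      · exact hP.2 (Walk.fst_mem_support_of_mem_edges _ he)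
  intro e he
  rw [isBridge_iff_forall_cycle_notMem (P.edges_subset_edgeSet he)]
  intro x c hc hec
  induction e with
  | _ a b =>
    have hne : a ≠ b := (P.adj_of_mem_edges he).ne
    have key : ∀ y ∈ P.support, y ∈ c.support → y = u ∨ y = w := fun y hy hyc => by
      by_contra! hcon
      exact hin y hy hcon.1 hcon.2 ⟨x, c, hc, hyc⟩
    rcases key a (P.fst_mem_support_of_mem_edges he) (c.fst_mem_support_of_mem_edges hec) with
      rfl | rfl <;>
    rcases key b (P.snd_mem_support_of_mem_edges he) (c.snd_mem_support_of_mem_edges hec) with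
      rfl | rfl
    · exact hne rfl
    · exact huw he
    · exact huw (Sym2.eq_swap ▸ he)
    · exact hne rfl

/-- In a finite graph of minimum degree at least 2, a vertex `v` lying on no cycle lies on
a path between two vertices `u` and `w`, each contained in a cycle, all of whose internal
vertices lie on no cycle; moreover this path is the unique path in `G` between `u` and `w`. -/
theorem off_cycle_vertex_on_unique_path {V : Type*} [Fintype V] (G : SimpleGraph V)
    (hmin : ∀ x : V, 2 ≤ (G.neighborSet x).ncard)
    (v : V) (hv : ¬InCycle G v) :
    ∃ (u w : V) (P : G.Walk u w), P.IsPath ∧ InCycle G u ∧ InCycle G w ∧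
      v ∈ P.support ∧
      (∀ x ∈ P.support, x ≠ u → x ≠ w → ¬InCycle G x) ∧
      ∀ Q : G.Walk u w, Q.IsPath → Q = P := by
  by_contra hcon
  -- as long as some end is on no cycle, the path can be prolonged, without bound
  have long : ∀ n : ℕ, ∃ (u w : V) (P : G.Walk u w), P.IsPath ∧ v ∈ P.support ∧
      (∀ x ∈ P.support, x ≠ u → x ≠ w → ¬InCycle G x) ∧ P.length = n := by
    intro n
    induction n with
    | zero => exact ⟨v, v, .nil, by simp, by simp, by simp_all, rfl⟩
    | succ n ih =>
      obtain ⟨u, w, P, hP, hvP, hin, hlen⟩ := ih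
      have extend : ∀ (u w : V) (P : G.Walk u w), P.IsPath → v ∈ P.support →
          (∀ x ∈ P.support, x ≠ u → x ≠ w → ¬InCycle G x) → P.length = n → ¬InCycle G u →
          ∃ (u w : V) (P : G.Walk u w), P.IsPath ∧ v ∈ P.support ∧
            (∀ x ∈ P.support, x ≠ u → x ≠ w → ¬InCycle G x) ∧ P.length = n + 1 := by
        intro u w P hP hvP hin hlen hu
        obtain ⟨x, hxu, hxP⟩ := exists_adj_not_mem_support G hmin P hP hu
        refine ⟨x, w, .cons hxu P, hP.cons hxP, by simp [hvP], fun y hy hyx hyw => ?_, by simp [hlen]⟩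
        rw [SimpleGraph.Walk.support_cons, List.mem_cons] at hy
        by_cases hyu : y = u
        · exact hyu ▸ hu
        · exact hin y (hy.resolve_left hyx) hyu hyw
      by_cases hu : InCycle G u
      · by_cases hw : InCycle G w
        · refine absurd ⟨u, w, P, hP, hu, hw, hvP, hin, ?_⟩ hcon
          exact eq_of_forall_isBridge G P hP (isBridge_of_mem_edges G P hP hvP
            (fun h => hv (h ▸ hu)) (fun h => hv (h ▸ hw)) hin)
        · exact extend w u P.reverse hP.reverse (by simpa using hvP)
            (fun x hx h1 h2 => hin x (by simpa using hx) h2 h1) (by simpa using hlen) hw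
      · exact extend u w P hP hvP hin hlen hu
  obtain ⟨u, w, P, hP, -, -, hlen⟩ := long (Fintype.card V)
  exact absurd hP.length_lt hlen.not_lt
end
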